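/- Let φ ∈ H^{13}(𝕋) be real-valued with φ ∉ C^∞(𝕋) and P_N(φ) < 0. Then for every T > 0 there does not exist any real-valued solution u ∈ C([0,T]; H^{13}(𝕋)) (solving the equation in the sense of distributions) of ∂_t u + γ₀∂_x⁵u + γ₁∂_x³u + γ₂∂_x u = N(∂_x³u,∂_x²u,∂_xu,u) on [0,T]×𝕋 with u(0,·) = φ. -/

import Mathlib

/- Fifth order dispersive equations on the torus: non-existence of H^{13} solutions
   forward in time when P_N(φ) < 0 and φ is not smooth. -/

namespace FifthOrderStmt4

/-- Fourier coefficient of a `2π`-periodic function `f : ℝ → ℝ`: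
`f̂(k) = (1/2π) ∫_0^{2π} f(x) e^{-ikx} dx`. -/
noncomputable def fc (f : ℝ → ℝ) (k : ℤ) : ℂ :=
  (Complex.ofReal (2 * Real.pi))⁻¹ *
    ∫ x in (0:ℝ)..(2 * Real.pi), (f x : ℂ) * Complex.exp (-Complex.I * (k : ℂ) * (x : ℂ))

/-- Sobolev norm `‖f‖_{H^s} = (Σ_k (1+k²)^s |f̂(k)|²)^{1/2}`. -/
noncomputable def hsNorm (s : ℕ) (f : ℝ → ℝ) : ℝ :=
  Real.sqrt (∑' k : ℤ, (1 + (k : ℝ) ^ 2) ^ s * ‖fc f k‖ ^ 2)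

/-- `f` belongs to `H^s(𝕋)` (continuous representative, `2π`-periodic, finite `H^s` norm). -/
def MemHs (s : ℕ) (f : ℝ → ℝ) : Prop :=
  Continuous f ∧ Function.Periodic f (2 * Real.pi) ∧
    Summable (fun k : ℤ => (1 + (k : ℝ) ^ 2) ^ s * ‖fc f k‖ ^ 2)

/-- The nonlinearity `N(∂_x³f, ∂_x²f, ∂_xf, f) = Σ_j λ_j (∂_x³f)^{a_j}(∂_x²f)^{b_j}(∂_xf)^{c_j}f^{d_j}`. -/
noncomputable def Nfun (j0 : ℕ) (lam : Fin j0 → ℝ) (a b c d : Fin j0 → ℕ)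
    (f : ℝ → ℝ) (x : ℝ) : ℝ :=
  ∑ j : Fin j0, lam j * (iteratedDeriv 3 f x) ^ (a j) * (iteratedDeriv 2 f x) ^ (b j) *
    (deriv f x) ^ (c j) * (f x) ^ (d j)

/-- The functional `P_N(f) = Σ_j (λ_j b_j / 2π) ∫_𝕋 (∂_x³f)^{a_j}(∂_x²f)^{b_j-1}(∂_xf)^{c_j}f^{d_j} dx`. -/
noncomputable def PN (j0 : ℕ) (lam : Fin j0 → ℝ) (a b c d : Fin j0 → ℕ) (f : ℝ → ℝ) : ℝ :=
  ∑ j : Fin j0, (lam j * (b j : ℝ) / (2 * Real.pi)) *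
    ∫ x in (0:ℝ)..(2 * Real.pi),
      (iteratedDeriv 3 f x) ^ (a j) * (iteratedDeriv 2 f x) ^ (b j - 1) *
        (deriv f x) ^ (c j) * (f x) ^ (d j)

/-- `u` is a (distributional) solution of
`∂_t u + γ₀∂_x⁵u + γ₁∂_x³u + γ₂∂_x u = N(∂_x³u,∂_x²u,∂_xu,u)` on `[T₁,T₂] × 𝕋`:
each `u(t)` is `2π`-periodic and `C³` in `x` (so that `N(u)` is defined pointwise), and for every
smooth test function `ψ`, `2π`-periodic in `x` and compactly supported in time inside `(T₁,T₂)`,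
the integrated-by-parts identity holds. -/
def IsSolution (γ0 γ1 γ2 : ℝ) (j0 : ℕ) (lam : Fin j0 → ℝ) (a b c d : Fin j0 → ℕ)
    (T1 T2 : ℝ) (u : ℝ → ℝ → ℝ) : Prop :=
  (∀ t ∈ Set.Icc T1 T2, ContDiff ℝ 3 (u t) ∧ Function.Periodic (u t) (2 * Real.pi)) ∧
  ∀ ψ : ℝ → ℝ → ℝ, ContDiff ℝ (⊤ : ℕ∞) (Function.uncurry ψ) →
    (∀ t : ℝ, Function.Periodic (ψ t) (2 * Real.pi)) →
    (∀ t : ℝ, t ∉ Set.Ioo T1 T2 → ∀ x : ℝ, ψ t x = 0) →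
    (∫ t in T1..T2, ∫ x in (0:ℝ)..(2 * Real.pi),
      (u t x * (deriv (fun τ : ℝ => ψ τ x) t
        + γ0 * iteratedDeriv 5 (ψ t) x
        + γ1 * iteratedDeriv 3 (ψ t) x
        + γ2 * deriv (ψ t) x)
      + Nfun j0 lam a b c d (u t) x * ψ t x)) = 0

/-- `t ↦ u(t)` is continuous from `A` into `H^s(𝕋)`. -/
def ContInHs (s : ℕ) (A : Set ℝ) (u : ℝ → ℝ → ℝ) : Prop :=
  ∀ t₀ ∈ A, ∀ ε > 0, ∃ δ > 0, ∀ t ∈ A, |t - t₀| < δ →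
    hsNorm s (fun x => u t x - u t₀ x) < ε

end FifthOrderStmt4

namespace FifthOrderStmt4

/-- The weight `1 + |n|`. -/
noncomputable def brk (n : ℤ) : ℝ := 1 + |(n : ℝ)|

lemma one_le_brk (n : ℤ) : 1 ≤ brk n := by
  unfold brk; linarith [abs_nonneg (n : ℝ)]

lemma brk_pos (n : ℤ) : 0 < brk n := lt_of_lt_of_le one_pos (one_le_brk n)

lemma abs_le_brk (n : ℤ) : |(n : ℝ)| ≤ brk n := by unfold brk; linarith

lemma brk_neg (n : ℤ) : brk (-n) = brk n := by simp [brk]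

lemma brk_sub_comm (k l : ℤ) : brk (k - l) = brk (l - k) := by
  rw [← brk_neg, neg_sub]

lemma abs_le_abs_mul_brk {k l : ℤ} (hl : l ≠ 0) :
    |(k : ℝ)| ≤ |(l : ℝ)| * brk (l - k) := by
  have h1 : (1 : ℝ) ≤ |(l : ℝ)| := by exact_mod_cast Int.one_le_abs hl
  have h2 : |(k : ℝ)| ≤ |(l : ℝ)| + |((l - k : ℤ) : ℝ)| := by
    push_cast
    have := abs_sub_abs_le_abs_sub (k : ℝ) l
    rw [abs_sub_comm] at this
    linarith
  unfold brk
  nlinarith [abs_nonneg ((l - k : ℤ) : ℝ)]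

/-- The summable convolution kernel `(1 + |n|)⁻²`. -/
noncomputable def ker (n : ℤ) : ℝ := (brk n ^ 2)⁻¹

lemma ker_pos (n : ℤ) : 0 < ker n := inv_pos.2 (pow_pos (brk_pos n) 2)

lemma ker_le_one (n : ℤ) : ker n ≤ 1 := inv_le_one_of_one_le₀ (one_le_pow₀ (one_le_brk n))

lemma ker_sub_comm (k l : ℤ) : ker (k - l) = ker (l - k) := by
  unfold ker; rw [brk_sub_comm]

lemma summable_ker : Summable ker := by
  have h : Summable fun n : ℕ => (((n : ℝ) + 1) ^ 2)⁻¹ := by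
    have := (summable_nat_add_iff 1).2 (Real.summable_nat_pow_inv.2 (one_lt_two))
    simpa using this
  refine Summable.of_nat_of_neg ?_ ?_ <;>
  · refine h.congr fun n => ?_
    simp [ker, brk, add_comm]

/-- The total mass of `ker`. -/
noncomputable def kerSum : ℝ := ∑' n, ker n

lemma kerSum_pos : 0 < kerSum := summable_ker.tsum_pos (fun n => (ker_pos n).le) 0 (ker_pos 0)

lemma summable_ker_sub (k : ℤ) : Summable fun l => ker (k - l) :=
  (Equiv.subLeft k).summable_iff.2 summable_ker

lemma tsum_ker_sub (k : ℤ) : ∑' l, ker (k - l) = kerSum :=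
  (Equiv.subLeft k).tsum_eq ker

lemma sum_ker_sub_le (s : Finset ℤ) (k : ℤ) : ∑ l ∈ s, ker (k - l) ≤ kerSum := by
  rw [← tsum_ker_sub k]
  exact (summable_ker_sub k).sum_le_tsum s fun l _ => (ker_pos _).le

lemma sum_ker_sub_le' (s : Finset ℤ) (l : ℤ) : ∑ k ∈ s, ker (k - l) ≤ kerSum := by
  simpa only [ker_sub_comm] using sum_ker_sub_le s l

lemma sum_ker_mul_le (s : Finset ℤ) (x y : ℤ → ℝ) {θ : ℝ} (hθ : 0 < θ) :
    ∑ k ∈ s, ∑ l ∈ s, ker (k - l) * (x k * y l) ≤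
      kerSum / 2 * (θ * ∑ k ∈ s, x k ^ 2 + θ⁻¹ * ∑ k ∈ s, y k ^ 2) := by
  have hxy : ∀ k l, ker (k - l) * (x k * y l) ≤
      ker (k - l) * (θ / 2 * x k ^ 2) + ker (k - l) * (θ⁻¹ / 2 * y l ^ 2) := by
    intro k l
    rw [← mul_add]
    refine mul_le_mul_of_nonneg_left ?_ (ker_pos _).le
    have h : 0 ≤ θ⁻¹ * (θ * x k - y l) ^ 2 := by positivity
    have h2 : θ⁻¹ * (θ * x k - y l) ^ 2 = θ * x k ^ 2 - 2 * (x k * y l) + θ⁻¹ * y l ^ 2 := by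
      field_simp; ring
    linarith
  calc _ ≤ ∑ k ∈ s, ∑ l ∈ s, (ker (k - l) * (θ / 2 * x k ^ 2) +
        ker (k - l) * (θ⁻¹ / 2 * y l ^ 2)) :=
        Finset.sum_le_sum fun k _ => Finset.sum_le_sum fun l _ => hxy k l
    _ = ∑ k ∈ s, (∑ l ∈ s, ker (k - l)) * (θ / 2 * x k ^ 2) +
        ∑ l ∈ s, (∑ k ∈ s, ker (k - l)) * (θ⁻¹ / 2 * y l ^ 2) := by
        simp only [Finset.sum_add_distrib, Finset.sum_mul]
        congr 1
        rw [Finset.sum_comm]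
    _ ≤ ∑ k ∈ s, kerSum * (θ / 2 * x k ^ 2) + ∑ l ∈ s, kerSum * (θ⁻¹ / 2 * y l ^ 2) := by
        gcongr with k _ l _
        · exact sum_ker_sub_le s k
        · exact sum_ker_sub_le' s l
    _ = _ := by
        rw [← Finset.mul_sum, ← Finset.mul_sum, ← Finset.mul_sum, ← Finset.mul_sum]; ring

/-- Convolution with `ker`. -/
noncomputable def kconv (y : ℤ → ℝ) (k : ℤ) : ℝ := ∑' l, ker (k - l) * y l

section kconv
variable {y : ℤ → ℝ}

lemma summable_ker_mul_sq (hs : Summable fun l => y l ^ 2) (k : ℤ) :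
    Summable fun l => ker (k - l) * y l ^ 2 :=
  Summable.of_nonneg_of_le (fun _ => mul_nonneg (ker_pos _).le (sq_nonneg _))
    (fun _ => mul_le_of_le_one_left (sq_nonneg _) (ker_le_one _)) hs

lemma summable_ker_mul (hs : Summable fun l => y l ^ 2) (k : ℤ) :
    Summable fun l => ker (k - l) * y l := by
  refine Summable.of_norm_bounded ((summable_ker_sub k).add hs) fun l => ?_
  have h0 := ker_pos (k - l)
  have h1 := ker_le_one (k - l)
  rw [Real.norm_eq_abs, abs_mul, abs_of_pos h0]
  nlinarith [sq_abs (y l), abs_nonneg (y l), sq_nonneg (|y l| - 1)]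

lemma kconv_nonneg (hy : ∀ l, 0 ≤ y l) (k : ℤ) : 0 ≤ kconv y k :=
  tsum_nonneg fun l => mul_nonneg (ker_pos _).le (hy l)

lemma kconv_sq_le (hs : Summable fun l => y l ^ 2) (k : ℤ) :
    kconv y k ^ 2 ≤ kerSum * ∑' l, ker (k - l) * y l ^ 2 := by
  set z := kconv y k with hz
  have hS := kerSum_pos
  have h1 : z ^ 2 = ∑' l, z * (ker (k - l) * y l) := by
    rw [tsum_mul_left, sq]; rfl
  have h2 : z ^ 2 ≤ ∑' l, ((z ^ 2 / (2 * kerSum)) * ker (k - l) +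
      (kerSum / 2) * (ker (k - l) * y l ^ 2)) := by
    refine h1.trans_le (Summable.tsum_le_tsum (fun l => ?_) ((summable_ker_mul hs k).mul_left z)
      (((summable_ker_sub k).mul_left _).add ((summable_ker_mul_sq hs k).mul_left _)))
    have e : z ^ 2 / (2 * kerSum) * ker (k - l) + kerSum / 2 * (ker (k - l) * y l ^ 2)
      - z * (ker (k - l) * y l) = ker (k - l) * (z - kerSum * y l) ^ 2 / (2 * kerSum) := by
      field_simp; ring
    have : 0 ≤ ker (k - l) * (z - kerSum * y l) ^ 2 / (2 * kerSum) :=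
      div_nonneg (mul_nonneg (ker_pos _).le (sq_nonneg _)) (by positivity)
    linarith
  rw [Summable.tsum_add ((summable_ker_sub k).mul_left _)
    ((summable_ker_mul_sq hs k).mul_left _), tsum_mul_left, tsum_mul_left, tsum_ker_sub] at h2
  have h3 : z ^ 2 / (2 * kerSum) * kerSum = z ^ 2 / 2 := by field_simp
  linarith

lemma sum_kconv_sq_le (hs : Summable fun l => y l ^ 2) (s : Finset ℤ) :
    ∑ k ∈ s, kconv y k ^ 2 ≤ kerSum ^ 2 * ∑' l, y l ^ 2 := by
  calc _ ≤ ∑ k ∈ s, kerSum * ∑' l, ker (k - l) * y l ^ 2 :=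
        Finset.sum_le_sum fun k _ => kconv_sq_le hs k
    _ = kerSum * ∑' l, ∑ k ∈ s, ker (k - l) * y l ^ 2 := by
        rw [← Finset.mul_sum, Summable.tsum_finsetSum fun k _ => summable_ker_mul_sq hs k]
    _ ≤ kerSum * ∑' l, kerSum * y l ^ 2 := by
        refine mul_le_mul_of_nonneg_left ?_ kerSum_pos.le
        refine Summable.tsum_le_tsum (fun l => ?_)
          (summable_sum fun k _ => summable_ker_mul_sq hs k) (hs.mul_left _)
        rw [← Finset.sum_mul]
        exact mul_le_mul_of_nonneg_right (sum_ker_sub_le' s l) (sq_nonneg _)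
    _ = _ := by rw [tsum_mul_left]; ring

end kconv
end FifthOrderStmt4

namespace FifthOrderStmt4

open Complex ComplexConjugate

/-- The tent cutoff `max 0 (1 - |k| / K)`. -/
noncomputable def cut (K : ℕ) (k : ℤ) : ℝ := max 0 (1 - |(k : ℝ)| / K)

lemma cut_nonneg (K : ℕ) (k : ℤ) : 0 ≤ cut K k := le_max_left _ _

lemma cut_le_one (K : ℕ) (k : ℤ) : cut K k ≤ 1 :=
  max_le zero_le_one (by have : 0 ≤ |(k : ℝ)| / K := by positivity
                         linarith)

lemma cut_sq_le (K : ℕ) (k : ℤ) : cut K k ^ 2 ≤ cut K k := by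
  nlinarith [cut_nonneg K k, cut_le_one K k]

lemma abs_cut_sub_le (K : ℕ) (k l : ℤ) : |cut K k - cut K l| ≤ |((k - l : ℤ) : ℝ)| / K := by
  have hlip : ∀ k l : ℤ, (1 - |(k : ℝ)| / K) - (1 - |(l : ℝ)| / K) ≤ |((k - l : ℤ) : ℝ)| / K := by
    intro k l
    have : (1 - |(k : ℝ)| / K) - (1 - |(l : ℝ)| / K) = (|(l : ℝ)| - |(k : ℝ)|) / K := by ring
    rw [this]
    refine div_le_div_of_nonneg_right ?_ (Nat.cast_nonneg K)
    push_cast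
    rw [abs_sub_comm (k : ℝ)]
    exact abs_sub_abs_le_abs_sub _ _
  refine (abs_max_sub_max_le_max _ _ _ _).trans ?_
  rw [sub_self, abs_zero]
  refine max_le (by positivity) (abs_le'.2 ⟨hlip k l, ?_⟩)
  have := hlip l k
  push_cast at this ⊢
  rw [abs_sub_comm (k : ℝ)]
  linarith

lemma cut_eq_zero {K : ℕ} (hK : 1 ≤ K) {k : ℤ} (h : (K : ℝ) ≤ |(k : ℝ)|) : cut K k = 0 := by
  have hK' : (0 : ℝ) < K := by exact_mod_cast hK
  refine max_eq_left ?_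
  have : 1 ≤ |(k : ℝ)| / K := (one_le_div hK').2 h
  linarith

/-- The nonzero frequencies of modulus at most `2K`. -/
noncomputable def freq (K : ℕ) : Finset ℤ := (Finset.Icc (-(2 * K : ℤ)) (2 * K)).erase 0

lemma mem_freq {K : ℕ} {k : ℤ} : k ∈ freq K ↔ k ≠ 0 ∧ |(k : ℝ)| ≤ 2 * K := by
  rw [freq, Finset.mem_erase, Finset.mem_Icc, ← abs_le]
  refine and_congr_right fun _ => ?_
  exact_mod_cast Iff.rfl

/-- The symmetrised symbol of the third order term. -/
noncomputable def qsym (K : ℕ) (k l : ℤ) : ℝ := cut K k ^ 2 * l ^ 3 - cut K l ^ 2 * k ^ 3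

lemma qsym_swap (K : ℕ) (k l : ℤ) : qsym K l k = -qsym K k l := by unfold qsym; ring

lemma abs_qsym_le_of_le {K : ℕ} (hK : 1 ≤ K) {k : ℤ} (l : ℤ) (h : |(k : ℝ)| ≤ K) :
    |qsym K k l| ≤
      4 * |((k - l : ℤ) : ℝ)| * (cut K k + cut K l) * ((k : ℝ) ^ 2 + (l : ℝ) ^ 2) := by
  have hK' : (0 : ℝ) < K := by exact_mod_cast hK
  have e : qsym K k l = cut K k ^ 2 * (-((k - l : ℤ) : ℝ) * ((l : ℝ) ^ 2 + l * k + k ^ 2)) +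
      k ^ 3 * ((cut K k - cut K l) * (cut K k + cut K l)) := by
    unfold qsym; push_cast; ring
  have h0 := cut_nonneg K k
  have h1 := cut_nonneg K l
  have hd := abs_cut_sub_le K k l
  set n : ℝ := |((k - l : ℤ) : ℝ)| with hn
  have hn0 : 0 ≤ n := abs_nonneg _
  have hq : |(l : ℝ) ^ 2 + l * k + k ^ 2| ≤ 3 / 2 * ((k : ℝ) ^ 2 + l ^ 2) := by
    rw [abs_le]; constructor <;> nlinarith [sq_nonneg ((k : ℝ) + l), sq_nonneg ((k : ℝ) - l)]
  have hk3 : |(k : ℝ) ^ 3| * (n / K) ≤ k ^ 2 * n := by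
    rw [abs_pow, pow_succ, sq_abs, mul_assoc]
    refine mul_le_mul_of_nonneg_left ?_ (sq_nonneg _)
    rw [mul_div_assoc', div_le_iff₀ hK', mul_comm]
    exact mul_le_mul_of_nonneg_left h hn0
  rw [e]
  refine (abs_add_le _ _).trans ?_
  rw [abs_mul, abs_mul, abs_neg, abs_mul _ ((_ - _) * _), abs_mul (_ - _), abs_of_nonneg (sq_nonneg _),
    abs_of_nonneg (add_nonneg h0 h1), ← hn]
  have t1 : cut K k ^ 2 * (n * |(l : ℝ) ^ 2 + l * k + k ^ 2|) ≤
      (cut K k + cut K l) * (n * (3 / 2 * ((k : ℝ) ^ 2 + l ^ 2))) := by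
    gcongr
    linarith [cut_sq_le K k]
  have t2 : |(k : ℝ) ^ 3| * (|cut K k - cut K l| * (cut K k + cut K l)) ≤
      (cut K k + cut K l) * (k ^ 2 * n) := by
    calc _ ≤ |(k : ℝ) ^ 3| * (n / K * (cut K k + cut K l)) := by gcongr
      _ = (cut K k + cut K l) * (|(k : ℝ) ^ 3| * (n / K)) := by ring
      _ ≤ _ := by gcongr
  have t3 : 0 ≤ (cut K k + cut K l) * (n * (l : ℝ) ^ 2) := by positivity
  have t4 : 0 ≤ (cut K k + cut K l) * (n * (k : ℝ) ^ 2) := by positivity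
  nlinarith

lemma abs_qsym_le {K : ℕ} (hK : 1 ≤ K) (k l : ℤ) :
    |qsym K k l| ≤
      4 * |((k - l : ℤ) : ℝ)| * (cut K k + cut K l) * ((k : ℝ) ^ 2 + (l : ℝ) ^ 2) := by
  rcases le_total |(k : ℝ)| K with h | h
  · exact abs_qsym_le_of_le hK l h
  rcases le_total |(l : ℝ)| K with h' | h'
  · have := abs_qsym_le_of_le hK k h'
    rw [qsym_swap, abs_neg] at this
    refine this.trans_eq ?_
    push_cast
    rw [abs_sub_comm (l : ℝ)]; ring
  · simp [qsym, cut_eq_zero hK h, cut_eq_zero hK h']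

lemma abs_pow_five_sub_ge (k l : ℤ) :
    |((k - l : ℤ) : ℝ)| * ((k : ℝ) ^ 2 + (l : ℝ) ^ 2) ^ 2 ≤ 4 * |(k : ℝ) ^ 5 - (l : ℝ) ^ 5| := by
  have e : (k : ℝ) ^ 5 - (l : ℝ) ^ 5 =
      ((k - l : ℤ) : ℝ) * ((k : ℝ) ^ 4 + k ^ 3 * l + k ^ 2 * l ^ 2 + k * l ^ 3 + l ^ 4) := by
    push_cast; ring
  have h : ((k : ℝ) ^ 2 + (l : ℝ) ^ 2) ^ 2 ≤
      4 * ((k : ℝ) ^ 4 + k ^ 3 * l + k ^ 2 * l ^ 2 + k * l ^ 3 + l ^ 4) := by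
    have : 0 ≤ ((k : ℝ) + l) ^ 2 * (2 * k ^ 2 + 2 * l ^ 2 + (k - l) ^ 2) := by positivity
    nlinarith
  rw [e, abs_mul]
  have h2 := le_abs_self ((k : ℝ) ^ 4 + k ^ 3 * l + k ^ 2 * l ^ 2 + k * l ^ 3 + l ^ 4)
  have h3 := mul_le_mul_of_nonneg_left (h.trans (mul_le_mul_of_nonneg_left h2 (by norm_num)))
    (abs_nonneg ((k - l : ℤ) : ℝ))
  linarith

/-- The symbol of the time derivative of the truncated `L²` energy. -/
noncomputable def ssym (K : ℕ) (α₀ α₁ : ℤ → ℂ) (k l : ℤ) : ℂ :=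
  -I * α₀ (k - l) * (qsym K k l : ℝ) - 2 * α₁ (k - l) * (cut K k ^ 2 * (l : ℝ) ^ 2 : ℝ)

/-- The symbol of the normal form correction of the truncated `L²` energy. -/
noncomputable def gsym (γ0 : ℝ) (K : ℕ) (α₀ α₁ : ℤ → ℂ) (k l : ℤ) : ℂ :=
  I * ssym K α₀ α₁ k l / (γ0 * ((k : ℝ) ^ 5 - (l : ℝ) ^ 5) : ℝ)

/-- The dispersion relation. -/
def disp (γ0 γ1 γ2 : ℝ) (k : ℤ) : ℝ := γ0 * k ^ 5 - γ1 * k ^ 3 + γ2 * k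

lemma gsym_self (γ0 : ℝ) (K : ℕ) (α₀ α₁ : ℤ → ℂ) (k : ℤ) : gsym γ0 K α₀ α₁ k k = 0 := by
  simp [gsym]

section bounds
variable {γ0 : ℝ} {K : ℕ} {α₀ α₁ : ℤ → ℂ} {k l : ℤ} {B : ℝ}

lemma one_le_abs_sub (h : k ≠ l) : (1 : ℝ) ≤ |((k - l : ℤ) : ℝ)| := by
  exact_mod_cast Int.one_le_abs (sub_ne_zero.2 h)

lemma sq_add_sq_pos (h : k ≠ l) : (1 : ℝ) ≤ (k : ℝ) ^ 2 + (l : ℝ) ^ 2 := by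
  have : 0 < k ^ 2 + l ^ 2 := by
    by_contra hc
    have h1 : k = 0 := by nlinarith [sq_nonneg k, sq_nonneg l]
    have h2 : l = 0 := by nlinarith [sq_nonneg k, sq_nonneg l]
    exact h (h1.trans h2.symm)
  exact_mod_cast this

lemma norm_ssym_le (hK : 1 ≤ K) (hkl : k ≠ l) (h0 : ‖α₀ (k - l)‖ ≤ B) (h1 : ‖α₁ (k - l)‖ ≤ B) :
    ‖ssym K α₀ α₁ k l‖ ≤
      6 * B * (cut K k + cut K l) * |((k - l : ℤ) : ℝ)| * ((k : ℝ) ^ 2 + (l : ℝ) ^ 2) := by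
  have hq := abs_qsym_le hK k l
  have hn := one_le_abs_sub hkl
  have c0 := cut_nonneg K k
  have c1 := cut_nonneg K l
  have hB : 0 ≤ B := (norm_nonneg _).trans h0
  set n : ℝ := |((k - l : ℤ) : ℝ)|
  unfold ssym
  refine (norm_sub_le _ _).trans ?_
  simp only [norm_mul, norm_neg, norm_I, one_mul, Complex.norm_real, Real.norm_eq_abs,
    Complex.norm_ofNat]
  have t1 : ‖α₀ (k - l)‖ * |qsym K k l| ≤
      B * (4 * n * (cut K k + cut K l) * ((k : ℝ) ^ 2 + (l : ℝ) ^ 2)) := by gcongr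
  have t2 : 2 * ‖α₁ (k - l)‖ * (|cut K k ^ 2| * |(l : ℝ) ^ 2|) ≤
      2 * B * ((cut K k + cut K l) * (n * ((k : ℝ) ^ 2 + (l : ℝ) ^ 2))) := by
    rw [← abs_mul, abs_of_nonneg (by positivity)]
    gcongr
    · linarith [cut_sq_le K k]
    · nlinarith [sq_nonneg (k : ℝ), sq_nonneg (l : ℝ)]
  linarith

lemma norm_gsym_le (hγ : γ0 ≠ 0) (hK : 1 ≤ K)
    (h0 : ‖α₀ (k - l)‖ ≤ B) (h1 : ‖α₁ (k - l)‖ ≤ B) :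
    ‖gsym γ0 K α₀ α₁ k l‖ * ((k : ℝ) ^ 2 + (l : ℝ) ^ 2) ≤
      24 / |γ0| * B * (cut K k + cut K l) := by
  have c0 := cut_nonneg K k
  have c1 := cut_nonneg K l
  have hB : 0 ≤ B := (norm_nonneg _).trans h0
  have hγ' : 0 < |γ0| := abs_pos.2 hγ
  rcases eq_or_ne k l with rfl | hkl
  · rw [gsym_self]; simp only [norm_zero, zero_mul]; positivity
  have hs := norm_ssym_le (α₀ := α₀) (α₁ := α₁) hK hkl h0 h1
  have h5 := abs_pow_five_sub_ge k l
  have hn := one_le_abs_sub hkl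
  have hp := sq_add_sq_pos hkl
  set n : ℝ := |((k - l : ℤ) : ℝ)|
  set p : ℝ := (k : ℝ) ^ 2 + (l : ℝ) ^ 2
  have hd : 0 < |(k : ℝ) ^ 5 - (l : ℝ) ^ 5| := by
    have : 0 < n * p ^ 2 := by positivity
    linarith
  unfold gsym
  rw [norm_div, norm_mul, norm_I, one_mul, Complex.norm_real, Real.norm_eq_abs, abs_mul,
    div_mul_eq_mul_div, div_le_iff₀ (by positivity)]
  calc _ ≤ 6 * B * (cut K k + cut K l) * n * p * p := by gcongr
    _ = 6 * B * (cut K k + cut K l) * (n * p ^ 2) := by ring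
    _ ≤ 6 * B * (cut K k + cut K l) * (4 * |(k : ℝ) ^ 5 - (l : ℝ) ^ 5|) := by gcongr
    _ = _ := by field_simp; ring

lemma norm_residual_le (hγ : γ0 ≠ 0) (γ1 γ2 : ℝ) (hK : 1 ≤ K) (hkl : k ≠ l)
    (h0 : ‖α₀ (k - l)‖ ≤ B) (h1 : ‖α₁ (k - l)‖ ≤ B) :
    ‖ssym K α₀ α₁ k l + gsym γ0 K α₀ α₁ k l *
        (I * (disp γ0 γ1 γ2 k - disp γ0 γ1 γ2 l : ℝ))‖ ≤
      48 / |γ0| * (2 * |γ1| + |γ2|) * (B * |((k - l : ℤ) : ℝ)|) := by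
  have hg := norm_gsym_le hγ hK h0 h1
  have h5 := abs_pow_five_sub_ge k l
  have hn := one_le_abs_sub hkl
  have hp := sq_add_sq_pos hkl
  have hB : 0 ≤ B := (norm_nonneg _).trans h0
  have hne : (k : ℝ) ^ 5 - (l : ℝ) ^ 5 ≠ 0 := by
    intro hc
    rw [hc, abs_zero, mul_zero] at h5
    have : 0 < |((k - l : ℤ) : ℝ)| * ((k : ℝ) ^ 2 + (l : ℝ) ^ 2) ^ 2 := by positivity
    linarith
  have e : ssym K α₀ α₁ k l + gsym γ0 K α₀ α₁ k l *
        (I * (disp γ0 γ1 γ2 k - disp γ0 γ1 γ2 l : ℝ)) =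
      gsym γ0 K α₀ α₁ k l * (I * (((k - l : ℤ) : ℝ) *
        (-γ1 * ((k : ℝ) ^ 2 + k * l + l ^ 2) + γ2) : ℝ)) := by
    have e1 : disp γ0 γ1 γ2 k - disp γ0 γ1 γ2 l = γ0 * ((k : ℝ) ^ 5 - (l : ℝ) ^ 5) +
        ((k - l : ℤ) : ℝ) * (-γ1 * ((k : ℝ) ^ 2 + k * l + l ^ 2) + γ2) := by
      unfold disp; push_cast; ring
    have e2 : ssym K α₀ α₁ k l =
        -(gsym γ0 K α₀ α₁ k l * (I * (γ0 * ((k : ℝ) ^ 5 - (l : ℝ) ^ 5) : ℝ))) := by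
      unfold gsym
      have : ((γ0 * ((k : ℝ) ^ 5 - (l : ℝ) ^ 5) : ℝ) : ℂ) ≠ 0 :=
        ofReal_ne_zero.2 (mul_ne_zero hγ hne)
      rw [mul_comm I ((_ : ℝ) : ℂ), ← mul_assoc, div_mul_cancel₀ _ this]
      linear_combination ssym K α₀ α₁ k l * I_mul_I
    rw [e1, ofReal_add]
    linear_combination e2
  have hpoly : |-γ1 * ((k : ℝ) ^ 2 + k * l + l ^ 2) + γ2| ≤
      (2 * |γ1| + |γ2|) * ((k : ℝ) ^ 2 + (l : ℝ) ^ 2) := by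
    refine (abs_add_le _ _).trans ?_
    rw [abs_mul, abs_neg]
    have : |(k : ℝ) ^ 2 + k * l + l ^ 2| ≤ 2 * ((k : ℝ) ^ 2 + l ^ 2) := by
      rw [abs_le]; constructor <;> nlinarith [sq_nonneg ((k : ℝ) + l), sq_nonneg ((k : ℝ) - l)]
    nlinarith [abs_nonneg γ1, abs_nonneg γ2]
  rw [e, norm_mul, norm_mul, norm_I, one_mul, Complex.norm_real, Real.norm_eq_abs, abs_mul]
  set n : ℝ := |((k - l : ℤ) : ℝ)|
  set p : ℝ := (k : ℝ) ^ 2 + (l : ℝ) ^ 2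
  calc _ ≤ ‖gsym γ0 K α₀ α₁ k l‖ * (n * ((2 * |γ1| + |γ2|) * p)) := by gcongr
    _ = (‖gsym γ0 K α₀ α₁ k l‖ * p) * (n * (2 * |γ1| + |γ2|)) := by ring
    _ ≤ (24 / |γ0| * B * (1 + 1)) * (n * (2 * |γ1| + |γ2|)) := by
        refine mul_le_mul_of_nonneg_right (hg.trans ?_) (by positivity)
        gcongr <;> exact cut_le_one _ _
    _ = _ := by ring

end bounds
end FifthOrderStmt4

namespace FifthOrderStmt4

open Complex ComplexConjugate

/-- The truncated `L²` energy with its normal form correction. -/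
noncomputable def truncEnergy (γ0 : ℝ) (K : ℕ) (α₀ α₁ W : ℤ → ℂ) : ℝ :=
  ∑ k ∈ freq K, cut K k ^ 2 * ‖W k‖ ^ 2 +
    (∑ k ∈ freq K, ∑ l ∈ freq K, gsym γ0 K α₀ α₁ k l * (conj (W k) * W l)).re

/-- The time derivative of `truncEnergy` when `β₀, β₁, V` are the time derivatives of
`α₀, α₁, W`. -/
noncomputable def truncEnergyDeriv (γ0 : ℝ) (K : ℕ) (α₀ α₁ β₀ β₁ W V : ℤ → ℂ) : ℝ :=
  ∑ k ∈ freq K, cut K k ^ 2 * (2 * (conj (W k) * V k).re) +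
    (∑ k ∈ freq K, ∑ l ∈ freq K, (gsym γ0 K β₀ β₁ k l * (conj (W k) * W l) +
      gsym γ0 K α₀ α₁ k l * (conj (V k) * W l + conj (W k) * V l))).re

/-- The symbol of the second and third order terms. -/
noncomputable def lsym (α₀ α₁ : ℤ → ℂ) (k l : ℤ) : ℂ :=
  α₀ (k - l) * (-I * (l : ℂ) ^ 3) - α₁ (k - l) * (l : ℂ) ^ 2

/-- Quantitative assumptions on the coefficients of a linear equation
`∂ₜ W + i ω W = H`, `H = α₀ ∂³W + α₁ ∂²W + R` on the Fourier side. -/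
structure Admissible (C₀ c : ℝ) (α₀ α₁ β₀ β₁ W H R : ℤ → ℂ) (e : ℤ → ℝ) (M : ℝ) : Prop where
  norm_a0 : ∀ n, ‖α₀ n‖ ≤ C₀ * (brk n ^ 5)⁻¹
  norm_a1 : ∀ n, ‖α₁ n‖ ≤ C₀ * (brk n ^ 5)⁻¹
  herm : ∀ n, α₀ (-n) = conj (α₀ n)
  mean : (α₁ 0).re ≤ -c
  norm_b0 : ∀ n, ‖β₀ n‖ ≤ C₀
  norm_b1 : ∀ n, ‖β₁ n‖ ≤ C₀
  zero : W 0 = 0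
  summ : Summable fun k => ‖W k‖ ^ 2
  tsum_le : ∑' k, ‖W k‖ ^ 2 ≤ M
  eqH : ∀ k, H k = ∑' l, lsym α₀ α₁ k l * W l + R k
  norm_R : ∀ k, k ≠ 0 → ‖R k‖ ≤ C₀ * |(k : ℝ)| * kconv (fun l => ‖W l‖) k + e k
  e_nonneg : ∀ k, 0 ≤ e k
  sum_e : ∀ s : Finset ℤ, ∑ k ∈ s, e k ^ 2 ≤ C₀

lemma brk_five (n : ℤ) : (brk n ^ 5)⁻¹ = ker n * (brk n ^ 3)⁻¹ := by
  unfold ker; rw [← mul_inv, ← pow_add]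

lemma norm_lsym_le {C₀ : ℝ} {α₀ α₁ : ℤ → ℂ} (h0 : ∀ n, ‖α₀ n‖ ≤ C₀ * (brk n ^ 5)⁻¹)
    (h1 : ∀ n, ‖α₁ n‖ ≤ C₀ * (brk n ^ 5)⁻¹) (k l : ℤ) :
    ‖lsym α₀ α₁ k l‖ ≤ C₀ * (brk (k - l) ^ 5)⁻¹ * (|(l : ℝ)| ^ 3 + |(l : ℝ)| ^ 2) := by
  unfold lsym
  refine (norm_sub_le _ _).trans ?_
  simp only [norm_mul, norm_neg, norm_I, one_mul, norm_pow, Complex.norm_intCast]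
  rw [mul_add]
  gcongr
  · exact h0 _
  · exact h1 _

lemma norm_lsym_le_of_decay {C₀ : ℝ} {α₀ α₁ : ℤ → ℂ} (h0 : ∀ n, ‖α₀ n‖ ≤ C₀ * (brk n ^ 5)⁻¹)
    (h1 : ∀ n, ‖α₁ n‖ ≤ C₀ * (brk n ^ 5)⁻¹) {k : ℤ} (hk : k ≠ 0) (l : ℤ) :
    ‖lsym α₀ α₁ k l‖ ≤ 2 * C₀ * |(k : ℝ)| ^ 3 * ker (k - l) := by
  refine (norm_lsym_le h0 h1 k l).trans ?_
  have hC : 0 ≤ C₀ := by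
    have := (norm_nonneg _).trans (h0 0)
    simpa [brk] using this
  have h1 := one_le_brk (k - l)
  have hl := abs_le_abs_mul_brk (k := l) hk
  have hk1 : (1 : ℝ) ≤ |(k : ℝ)| := by exact_mod_cast Int.one_le_abs hk
  have e3 : |(l : ℝ)| ^ 3 ≤ |(k : ℝ)| ^ 3 * brk (k - l) ^ 3 := by
    rw [← mul_pow]; gcongr
  have e2 : |(l : ℝ)| ^ 2 ≤ |(k : ℝ)| ^ 3 * brk (k - l) ^ 3 := by
    calc |(l : ℝ)| ^ 2 ≤ (|(k : ℝ)| * brk (k - l)) ^ 2 := by gcongr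
      _ ≤ (|(k : ℝ)| * brk (k - l)) ^ 3 :=
          pow_le_pow_right₀ (one_le_mul_of_one_le_of_one_le hk1 h1) (by norm_num)
      _ = _ := mul_pow _ _ _
  have hb : 0 < brk (k - l) := brk_pos _
  calc _ ≤ C₀ * (brk (k - l) ^ 5)⁻¹ *
        (|(k : ℝ)| ^ 3 * brk (k - l) ^ 3 + |(k : ℝ)| ^ 3 * brk (k - l) ^ 3) := by gcongr
    _ = _ := by rw [brk_five]; field_simp; ring

namespace Admissible

variable {C₀ c : ℝ} {α₀ α₁ β₀ β₁ W H R : ℤ → ℂ} {e : ℤ → ℝ} {M : ℝ}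
  (h : Admissible C₀ c α₀ α₁ β₀ β₁ W H R e M)
include h

lemma const_nonneg : 0 ≤ C₀ := (norm_nonneg _).trans (h.norm_b0 0)

lemma sum_le (s : Finset ℤ) : ∑ k ∈ s, ‖W k‖ ^ 2 ≤ M :=
  (h.summ.sum_le_tsum s fun _ _ => sq_nonneg _).trans h.tsum_le

lemma M_nonneg : 0 ≤ M := by simpa using h.sum_le ∅

lemma norm_lsym_le_ker {k : ℤ} (hk : k ≠ 0) (l : ℤ) :
    ‖lsym α₀ α₁ k l‖ ≤ 2 * C₀ * |(k : ℝ)| ^ 3 * ker (k - l) :=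
  norm_lsym_le_of_decay h.norm_a0 h.norm_a1 hk l

lemma norm_lsym_mul_le {k : ℤ} (hk : k ≠ 0) (l : ℤ) :
    ‖lsym α₀ α₁ k l * W l‖ ≤ 2 * C₀ * |(k : ℝ)| ^ 3 * (ker (k - l) * ‖W l‖) := by
  rw [norm_mul, ← mul_assoc]
  exact mul_le_mul_of_nonneg_right (h.norm_lsym_le_ker hk l) (norm_nonneg _)

lemma summable_lsym {k : ℤ} (hk : k ≠ 0) : Summable fun l => lsym α₀ α₁ k l * W l :=
  Summable.of_norm_bounded ((summable_ker_mul h.summ k).mul_left _) (h.norm_lsym_mul_le hk)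

lemma norm_H_le {k : ℤ} (hk : k ≠ 0) :
    ‖H k‖ ≤ |(k : ℝ)| ^ 3 * (3 * C₀ * kconv (fun l => ‖W l‖) k + e k) := by
  have hC := h.const_nonneg
  have hk1 : (1 : ℝ) ≤ |(k : ℝ)| := by exact_mod_cast Int.one_le_abs hk
  have hz : 0 ≤ kconv (fun l => ‖W l‖) k := kconv_nonneg (fun _ => norm_nonneg _) k
  rw [h.eqH k]
  refine (norm_add_le _ _).trans ?_
  have h1 : ‖∑' l, lsym α₀ α₁ k l * W l‖ ≤
      2 * C₀ * |(k : ℝ)| ^ 3 * kconv (fun l => ‖W l‖) k := by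
    refine tsum_of_norm_bounded ?_ (h.norm_lsym_mul_le hk)
    exact (summable_ker_mul h.summ k).hasSum.mul_left _
  have h2 := h.norm_R k hk
  have p1 : |(k : ℝ)| ≤ |(k : ℝ)| ^ 3 := le_self_pow₀ hk1 (by norm_num)
  have p2 : 1 ≤ |(k : ℝ)| ^ 3 := one_le_pow₀ hk1
  have h3 : C₀ * |(k : ℝ)| * kconv (fun l => ‖W l‖) k ≤
      C₀ * |(k : ℝ)| ^ 3 * kconv (fun l => ‖W l‖) k := by gcongr
  have h4 : e k ≤ |(k : ℝ)| ^ 3 * e k := le_mul_of_one_le_left (h.e_nonneg k) p2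
  linarith

lemma cut_mul_norm_tail_le {K : ℕ} (hK : 1 ≤ K) {k : ℤ} (hk : k ≠ 0) :
    cut K k * ‖H k - ∑ l ∈ freq K, lsym α₀ α₁ k l * W l‖ ≤
      12 * C₀ * kconv (fun l => ‖W l‖) k +
        (C₀ * (cut K k * |(k : ℝ)|) * kconv (fun l => ‖W l‖) k + e k) := by
  have hC := h.const_nonneg
  have hz : 0 ≤ kconv (fun l => ‖W l‖) k := kconv_nonneg (fun _ => norm_nonneg _) k
  rcases le_or_gt (K : ℝ) |(k : ℝ)| with hkK | hkK
  · rw [cut_eq_zero hK hkK]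
    have := h.e_nonneg k
    simp only [zero_mul, mul_zero, zero_add]; positivity
  have e1 : H k - ∑ l ∈ freq K, lsym α₀ α₁ k l * W l =
      (∑' l, if l ∈ freq K then 0 else lsym α₀ α₁ k l * W l) + R k := by
    have hs := (h.summable_lsym hk)
    have := hs.sum_add_tsum_compl (s := freq K)
    rw [h.eqH k, ← this, _root_.tsum_subtype ((freq K : Set ℤ)ᶜ)
      (fun l => lsym α₀ α₁ k l * W l)]
    have : ((freq K : Set ℤ)ᶜ).indicator (fun l => lsym α₀ α₁ k l * W l) =
        fun l => if l ∈ freq K then 0 else lsym α₀ α₁ k l * W l := by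
      ext l
      by_cases hl : l ∈ freq K <;> simp [Set.indicator, hl]
    rw [this]; ring
  have h1 : ‖∑' l, if l ∈ freq K then 0 else lsym α₀ α₁ k l * W l‖ ≤
      12 * C₀ * kconv (fun l => ‖W l‖) k := by
    refine tsum_of_norm_bounded ((summable_ker_mul h.summ k).hasSum.mul_left _) fun l => ?_
    have hk0 := (ker_pos (k - l)).le
    split_ifs with hl
    · rw [norm_zero]; positivity
    · rcases eq_or_ne l 0 with rfl | hl0
      · rw [h.zero]; simp
      have hlK : 2 * (K : ℝ) < |(l : ℝ)| := by
        by_contra hc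
        exact hl (mem_freq.2 ⟨hl0, not_lt.1 hc⟩)
      have hkl : |(l : ℝ)| ≤ 2 * brk (k - l) := by
        have h2 : |(l : ℝ)| ≤ |(k : ℝ)| + |((k - l : ℤ) : ℝ)| := by
          push_cast
          have := abs_sub_abs_le_abs_sub (l : ℝ) k
          rw [abs_sub_comm] at this
          linarith
        have := abs_le_brk (k - l)
        linarith
      rw [norm_mul, ← mul_assoc]
      refine mul_le_mul_of_nonneg_right ((norm_lsym_le h.norm_a0 h.norm_a1 k l).trans ?_) (norm_nonneg _)
      have hb := one_le_brk (k - l)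
      have hb0 : 0 < brk (k - l) := brk_pos _
      calc _ ≤ C₀ * (brk (k - l) ^ 5)⁻¹ *
            ((2 * brk (k - l)) ^ 3 + (2 * brk (k - l)) ^ 2) := by gcongr
        _ ≤ C₀ * (brk (k - l) ^ 5)⁻¹ * (12 * brk (k - l) ^ 3) := by
            gcongr
            have : brk (k - l) ^ 2 ≤ brk (k - l) ^ 3 := pow_le_pow_right₀ hb (by norm_num)
            nlinarith
        _ = _ := by rw [brk_five]; field_simp
  have h2 := h.norm_R k hk
  rw [e1]
  have c0 := cut_nonneg K k
  have c1 := cut_le_one K k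
  calc _ ≤ cut K k * (12 * C₀ * kconv (fun l => ‖W l‖) k +
        (C₀ * |(k : ℝ)| * kconv (fun l => ‖W l‖) k + e k)) :=
        mul_le_mul_of_nonneg_left ((norm_add_le _ _).trans (add_le_add h1 h2)) c0
    _ = cut K k * (12 * C₀ * kconv (fun l => ‖W l‖) k) +
        (C₀ * (cut K k * |(k : ℝ)|) * kconv (fun l => ‖W l‖) k + cut K k * e k) := by ring
    _ ≤ _ := add_le_add (mul_le_of_le_one_left (by positivity) c1)
        (add_le_add le_rfl (mul_le_of_le_one_left (h.e_nonneg k) c1))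

lemma two_re_sum_lsym (K : ℕ) (s : Finset ℤ) :
    2 * (∑ k ∈ s, ∑ l ∈ s, (cut K k ^ 2 : ℝ) * lsym α₀ α₁ k l * (conj (W k) * W l)).re =
      (∑ k ∈ s, ∑ l ∈ s, ssym K α₀ α₁ k l * (conj (W k) * W l)).re := by
  set T : ℤ → ℤ → ℂ := fun k l =>
    (cut K k ^ 2 : ℝ) * (α₀ (k - l) * (-I * (l : ℂ) ^ 3)) * (conj (W k) * W l) with hT
  set T' : ℤ → ℤ → ℂ := fun k l =>
    (cut K k ^ 2 : ℝ) * (α₁ (k - l) * (l : ℂ) ^ 2) * (conj (W k) * W l) with hT'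
  have e1 : ∀ k l, ((cut K k ^ 2 : ℝ) : ℂ) * lsym α₀ α₁ k l * (conj (W k) * W l) =
      T k l - T' k l := fun k l => by simp only [hT, hT', lsym]; ring
  have e2 : ∀ k l, ssym K α₀ α₁ k l * (conj (W k) * W l) =
      T k l + conj (T l k) - 2 * T' k l := fun k l => by
    have hh := h.herm (k - l)
    rw [neg_sub] at hh
    simp only [hT, hT', ssym, qsym, map_mul, hh, conj_conj, map_neg, conj_I, map_pow, conj_ofReal]
    rw [show conj (k : ℂ) = (k : ℂ) from map_intCast (starRingEnd ℂ) k]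
    push_cast; ring
  have e3 : (∑ k ∈ s, ∑ l ∈ s, conj (T l k)).re = (∑ k ∈ s, ∑ l ∈ s, T k l).re := by
    rw [Finset.sum_comm]
    simp only [Complex.re_sum, conj_re]
  simp only [e1, e2, Finset.sum_sub_distrib, Finset.sum_add_distrib, Complex.sub_re,
    Complex.add_re, e3, ← Finset.mul_sum]
  simp only [Complex.mul_re, Complex.re_ofNat, Complex.im_ofNat, zero_mul, sub_zero]
  ring

end Admissible
end FifthOrderStmt4

namespace FifthOrderStmt4

open Complex ComplexConjugate

lemma mul_abs_pow_three_le {K : ℕ} (hK : 1 ≤ K) {k l : ℤ} (hk : k ∈ freq K) (hl : l ∈ freq K)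
    {g C : ℝ} (hg : 0 ≤ g) (hC : 0 ≤ C)
    (h : g * ((k : ℝ) ^ 2 + (l : ℝ) ^ 2) ≤ C * (brk (k - l) ^ 5)⁻¹ * (cut K k + cut K l)) :
    g * |(l : ℝ)| ^ 3 ≤ C * ker (k - l) * (2 * (cut K k * |(k : ℝ)| + 1)) := by
  have hK' : (0 : ℝ) < K := by exact_mod_cast hK
  have h1 : |(l : ℝ)| ≤ |(k : ℝ)| * brk (k - l) := abs_le_abs_mul_brk (mem_freq.1 hk).1
  have h2 := (mem_freq.1 hl).2
  have hb := one_le_brk (k - l)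
  have hb0 := brk_pos (k - l)
  have c0 := cut_nonneg K k
  have c1 := cut_nonneg K l
  have h3 : (cut K k + cut K l) * |(l : ℝ)| ≤ 2 * (cut K k * |(k : ℝ)| + 1) * brk (k - l) := by
    have hd := (abs_le.1 (abs_cut_sub_le K k l)).1
    have e1 : cut K k * |(l : ℝ)| ≤ cut K k * (|(k : ℝ)| * brk (k - l)) := by gcongr
    have e2 : (cut K l - cut K k) * |(l : ℝ)| ≤ |((k - l : ℤ) : ℝ)| / K * (2 * K) := by
      have : 0 ≤ |((k - l : ℤ) : ℝ)| / K := by positivity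
      calc _ ≤ |((k - l : ℤ) : ℝ)| / K * |(l : ℝ)| :=
            mul_le_mul_of_nonneg_right (by linarith) (abs_nonneg _)
        _ ≤ _ := by gcongr
    have e3 : |((k - l : ℤ) : ℝ)| / K * (2 * K) = 2 * |((k - l : ℤ) : ℝ)| := by field_simp
    have e4 := abs_le_brk (k - l)
    nlinarith
  calc g * |(l : ℝ)| ^ 3 = g * (l : ℝ) ^ 2 * |(l : ℝ)| := by rw [pow_succ, sq_abs]; ring
    _ ≤ g * ((k : ℝ) ^ 2 + (l : ℝ) ^ 2) * |(l : ℝ)| := by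
        gcongr
        nlinarith [sq_nonneg (k : ℝ)]
    _ ≤ C * (brk (k - l) ^ 5)⁻¹ * (cut K k + cut K l) * |(l : ℝ)| := by gcongr
    _ = C * (brk (k - l) ^ 5)⁻¹ * ((cut K k + cut K l) * |(l : ℝ)|) := by ring
    _ ≤ C * (brk (k - l) ^ 5)⁻¹ * (2 * (cut K k * |(k : ℝ)| + 1) * brk (k - l)) := by gcongr
    _ = C * (ker (k - l) * (brk (k - l) ^ 2)⁻¹) * (2 * (cut K k * |(k : ℝ)| + 1)) := by
        unfold ker; field_simp
    _ ≤ C * (ker (k - l) * 1) * (2 * (cut K k * |(k : ℝ)| + 1)) := by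
        have := (ker_pos (k - l)).le
        gcongr
        exact ker_le_one _
    _ = _ := by rw [mul_one]

lemma sum_inv_abs_sq_le (K : ℕ) : ∑ k ∈ freq K, (|(k : ℝ)|⁻¹) ^ 2 ≤ 4 * kerSum := by
  calc _ ≤ ∑ k ∈ freq K, 4 * ker (0 - k) := by
        refine Finset.sum_le_sum fun k hk => ?_
        have h1 : (1 : ℝ) ≤ |(k : ℝ)| := by exact_mod_cast Int.one_le_abs (mem_freq.1 hk).1
        have h2 : brk (0 - k) ≤ 2 * |(k : ℝ)| := by rw [zero_sub, brk_neg]; unfold brk; linarith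
        have hb := brk_pos (0 - k)
        unfold ker
        rw [inv_pow, ← div_eq_mul_inv, inv_le_comm₀ (by positivity) (by positivity), inv_div,
          div_le_iff₀ (by norm_num)]
        nlinarith
    _ ≤ _ := by rw [← Finset.mul_sum]; gcongr; exact sum_ker_sub_le _ _

lemma sum_mul_le_half (s : Finset ℤ) (x y : ℤ → ℝ) {θ : ℝ} (hθ : 0 < θ) :
    ∑ k ∈ s, x k * y k ≤ (θ * ∑ k ∈ s, x k ^ 2 + θ⁻¹ * ∑ k ∈ s, y k ^ 2) / 2 := by
  rw [Finset.mul_sum, Finset.mul_sum, ← Finset.sum_add_distrib, Finset.sum_div]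
  refine Finset.sum_le_sum fun k _ => ?_
  have h : 0 ≤ θ⁻¹ * (θ * x k - y k) ^ 2 := by positivity
  have h2 : θ⁻¹ * (θ * x k - y k) ^ 2 = θ * x k ^ 2 - 2 * (x k * y k) + θ⁻¹ * y k ^ 2 := by
    field_simp; ring
  linarith

lemma norm_gsym_mul_le_of_bdd {γ0 : ℝ} (hγ : γ0 ≠ 0) {K : ℕ} (hK : 1 ≤ K) {β₀ β₁ : ℤ → ℂ} {C₀ : ℝ}
    (h0 : ∀ n, ‖β₀ n‖ ≤ C₀) (h1 : ∀ n, ‖β₁ n‖ ≤ C₀) (W : ℤ → ℂ)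
    {k l : ℤ} (hk : k ∈ freq K) (hl : l ∈ freq K) :
    ‖gsym γ0 K β₀ β₁ k l * (conj (W k) * W l)‖ ≤
      24 / |γ0| * C₀ * ((‖W k‖ * |(k : ℝ)|⁻¹) * (‖W l‖ * |(l : ℝ)|⁻¹)) := by
  have hg := norm_gsym_le hγ hK (h0 (k - l)) (h1 (k - l))
  have hC : 0 ≤ C₀ := (norm_nonneg _).trans (h0 0)
  have hγ' : 0 < |γ0| := abs_pos.2 hγ
  have hk1 : (1 : ℝ) ≤ |(k : ℝ)| := by exact_mod_cast Int.one_le_abs (mem_freq.1 hk).1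
  have hl1 : (1 : ℝ) ≤ |(l : ℝ)| := by exact_mod_cast Int.one_le_abs (mem_freq.1 hl).1
  have hkl : 0 < |(k : ℝ)| * |(l : ℝ)| := by positivity
  have h2 : 2 * (|(k : ℝ)| * |(l : ℝ)|) ≤ (k : ℝ) ^ 2 + (l : ℝ) ^ 2 := by
    rw [← sq_abs (k : ℝ), ← sq_abs (l : ℝ)]
    nlinarith [sq_nonneg (|(k : ℝ)| - |(l : ℝ)|)]
  have h3 : ‖gsym γ0 K β₀ β₁ k l‖ ≤ 24 / |γ0| * C₀ * (|(k : ℝ)|⁻¹ * |(l : ℝ)|⁻¹) := by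
    rw [← mul_inv, ← div_eq_mul_inv, le_div_iff₀ hkl]
    have h4 : 24 / |γ0| * C₀ * (cut K k + cut K l) ≤ 24 / |γ0| * C₀ * (1 + 1) := by
      gcongr <;> exact cut_le_one _ _
    have h5 := mul_le_mul_of_nonneg_left h2 (norm_nonneg (gsym γ0 K β₀ β₁ k l))
    linarith
  rw [norm_mul, norm_mul, RCLike.norm_conj]
  calc _ ≤ 24 / |γ0| * C₀ * (|(k : ℝ)|⁻¹ * |(l : ℝ)|⁻¹) * (‖W k‖ * ‖W l‖) := by gcongr
    _ = _ := by ring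

namespace Admissible

variable {C₀ c : ℝ} {α₀ α₁ β₀ β₁ W H R : ℤ → ℂ} {e : ℤ → ℝ} {M : ℝ}
  (h : Admissible C₀ c α₀ α₁ β₀ β₁ W H R e M)
include h

lemma main_pair {γ0 : ℝ} (hγ : γ0 ≠ 0) (γ1 γ2 : ℝ) {K : ℕ} (hK : 1 ≤ K) (k l : ℤ) :
    (if k = l then 2 * c * (cut K k * |(k : ℝ)| * ‖W k‖) ^ 2 else 0) -
        48 / |γ0| * (2 * |γ1| + |γ2|) * C₀ * (ker (k - l) * (‖W k‖ * ‖W l‖)) ≤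
      ((ssym K α₀ α₁ k l + gsym γ0 K α₀ α₁ k l *
        (I * (disp γ0 γ1 γ2 k - disp γ0 γ1 γ2 l : ℝ))) * (conj (W k) * W l)).re := by
  have hC := h.const_nonneg
  have hker := (ker_pos (k - l)).le
  split_ifs with hkl
  · subst hkl
    have e1 : ((ssym K α₀ α₁ k k + gsym γ0 K α₀ α₁ k k *
        (I * (disp γ0 γ1 γ2 k - disp γ0 γ1 γ2 k : ℝ))) * (conj (W k) * W k)).re =
        -2 * (α₁ 0).re * (cut K k * |(k : ℝ)| * ‖W k‖) ^ 2 := by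
      rw [gsym_self, zero_mul, add_zero, ← Complex.normSq_eq_conj_mul_self, re_mul_ofReal,
        Complex.normSq_eq_norm_sq, ssym, qsym, sub_self, sub_self, ofReal_zero, mul_zero, zero_sub,
        neg_re, re_mul_ofReal, mul_pow, mul_pow, sq_abs]
      simp only [Complex.mul_re, Complex.re_ofNat, Complex.im_ofNat, zero_mul, sub_zero]
      ring
    rw [e1]
    have := mul_le_mul_of_nonneg_right h.mean (sq_nonneg (cut K k * |(k : ℝ)| * ‖W k‖))
    have h2 : 0 ≤ 48 / |γ0| * (2 * |γ1| + |γ2|) * C₀ * (ker (k - k) * (‖W k‖ * ‖W k‖)) := by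
      positivity
    linarith
  · have h1 := norm_residual_le hγ γ1 γ2 hK hkl (h.norm_a0 (k - l)) (h.norm_a1 (k - l))
    set Q := ssym K α₀ α₁ k l + gsym γ0 K α₀ α₁ k l *
        (I * (disp γ0 γ1 γ2 k - disp γ0 γ1 γ2 l : ℝ))
    have h2 : C₀ * (brk (k - l) ^ 5)⁻¹ * |((k - l : ℤ) : ℝ)| ≤ C₀ * ker (k - l) := by
      have hb := one_le_brk (k - l)
      have hb0 := brk_pos (k - l)
      calc _ ≤ C₀ * (brk (k - l) ^ 5)⁻¹ * brk (k - l) := by gcongr; exact abs_le_brk _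
        _ = C₀ * (ker (k - l) * (brk (k - l) ^ 2)⁻¹) := by unfold ker; field_simp
        _ ≤ C₀ * (ker (k - l) * 1) := by gcongr; exact ker_le_one _
        _ = _ := by rw [mul_one]
    have h3 : ‖Q * (conj (W k) * W l)‖ ≤
        48 / |γ0| * (2 * |γ1| + |γ2|) * C₀ * (ker (k - l) * (‖W k‖ * ‖W l‖)) := by
      rw [norm_mul, norm_mul, RCLike.norm_conj]
      calc _ ≤ 48 / |γ0| * (2 * |γ1| + |γ2|) * (C₀ * ker (k - l)) * (‖W k‖ * ‖W l‖) :=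
            mul_le_mul_of_nonneg_right (h1.trans (by gcongr)) (by positivity)
        _ = _ := by ring
    have := (abs_le.1 (Complex.abs_re_le_norm (Q * (conj (W k) * W l)))).1
    linarith

lemma norm_gsym_H_le {γ0 : ℝ} (hγ : γ0 ≠ 0) {K : ℕ} (hK : 1 ≤ K) {k l : ℤ}
    (hk : k ∈ freq K) (hl : l ∈ freq K) :
    ‖gsym γ0 K α₀ α₁ k l * (conj (W k) * H l)‖ ≤
      24 / |γ0| * C₀ * 2 * (ker (k - l) * ((cut K k * |(k : ℝ)| * ‖W k‖ + ‖W k‖) *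
        (3 * C₀ * kconv (fun l => ‖W l‖) l + e l))) := by
  have hC := h.const_nonneg
  have hγ' : 0 < |γ0| := abs_pos.2 hγ
  have hg := norm_gsym_le hγ hK (h.norm_a0 (k - l)) (h.norm_a1 (k - l))
  have hH := h.norm_H_le (mem_freq.1 hl).1
  have h1 := mul_abs_pow_three_le hK hk hl (norm_nonneg _)
    (C := 24 / |γ0| * C₀) (by positivity) (hg.trans_eq (by ring))
  have hz : 0 ≤ kconv (fun l => ‖W l‖) l := kconv_nonneg (fun _ => norm_nonneg _) l
  have he := h.e_nonneg l
  rw [norm_mul, norm_mul, RCLike.norm_conj]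
  set hh := 3 * C₀ * kconv (fun l => ‖W l‖) l + e l
  have hh0 : 0 ≤ hh := by positivity
  calc _ ≤ ‖gsym γ0 K α₀ α₁ k l‖ * (‖W k‖ * (|(l : ℝ)| ^ 3 * hh)) := by gcongr
    _ = (‖gsym γ0 K α₀ α₁ k l‖ * |(l : ℝ)| ^ 3) * (‖W k‖ * hh) := by ring
    _ ≤ 24 / |γ0| * C₀ * ker (k - l) * (2 * (cut K k * |(k : ℝ)| + 1)) * (‖W k‖ * hh) :=
        mul_le_mul_of_nonneg_right h1 (by positivity)
    _ = _ := by ring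

lemma norm_gsym_H_le' {γ0 : ℝ} (hγ : γ0 ≠ 0) {K : ℕ} (hK : 1 ≤ K) {k l : ℤ}
    (hk : k ∈ freq K) (hl : l ∈ freq K) :
    ‖gsym γ0 K α₀ α₁ k l * (conj (H k) * W l)‖ ≤
      24 / |γ0| * C₀ * 2 * (ker (k - l) * ((3 * C₀ * kconv (fun l => ‖W l‖) k + e k) *
        (cut K l * |(l : ℝ)| * ‖W l‖ + ‖W l‖))) := by
  have hC := h.const_nonneg
  have hγ' : 0 < |γ0| := abs_pos.2 hγ
  have hg := norm_gsym_le hγ hK (h.norm_a0 (k - l)) (h.norm_a1 (k - l))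
  have hH := h.norm_H_le (mem_freq.1 hk).1
  have h1 := mul_abs_pow_three_le hK hl hk (norm_nonneg (gsym γ0 K α₀ α₁ k l))
    (C := 24 / |γ0| * C₀) (by positivity)
    (by rw [brk_sub_comm l k]; linarith)
  have hz : 0 ≤ kconv (fun l => ‖W l‖) k := kconv_nonneg (fun _ => norm_nonneg _) k
  have he := h.e_nonneg k
  rw [ker_sub_comm] at h1
  rw [norm_mul, norm_mul, RCLike.norm_conj]
  set hh := 3 * C₀ * kconv (fun l => ‖W l‖) k + e k
  have hh0 : 0 ≤ hh := by positivity
  calc _ ≤ ‖gsym γ0 K α₀ α₁ k l‖ * ((|(k : ℝ)| ^ 3 * hh) * ‖W l‖) := by gcongr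
    _ = (‖gsym γ0 K α₀ α₁ k l‖ * |(k : ℝ)| ^ 3) * (‖W l‖ * hh) := by ring
    _ ≤ 24 / |γ0| * C₀ * ker (k - l) * (2 * (cut K l * |(l : ℝ)| + 1)) * (‖W l‖ * hh) :=
        mul_le_mul_of_nonneg_right h1 (by positivity)
    _ = _ := by ring

lemma diag_term_ge {K : ℕ} (hK : 1 ≤ K) {V : ℤ → ℂ} {ω : ℤ → ℝ}
    (hV : ∀ k, V k = -(I * ω k * W k) + H k) :
    (∑ k ∈ freq K, ∑ l ∈ freq K, ssym K α₀ α₁ k l * (conj (W k) * W l)).re -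
        2 * ∑ k ∈ freq K, (12 * C₀ * (‖W k‖ * kconv (fun l => ‖W l‖) k) +
          C₀ * ((cut K k * |(k : ℝ)| * ‖W k‖) * kconv (fun l => ‖W l‖) k) + ‖W k‖ * e k) ≤
      ∑ k ∈ freq K, cut K k ^ 2 * (2 * (conj (W k) * V k).re) := by
  rw [← h.two_re_sum_lsym, ← mul_sub]
  have hC := h.const_nonneg
  have e1 : ∑ k ∈ freq K, cut K k ^ 2 * (2 * (conj (W k) * V k).re) =
      2 * ∑ k ∈ freq K, cut K k ^ 2 * (conj (W k) * H k).re := by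
    rw [Finset.mul_sum]
    refine Finset.sum_congr rfl fun k _ => ?_
    have : conj (W k) * V k = -(I * ((ω k * normSq (W k) : ℝ))) + conj (W k) * H k := by
      rw [hV, ofReal_mul, normSq_eq_conj_mul_self]; ring
    rw [this]
    simp
    ring
  rw [e1, Complex.re_sum, ← Finset.sum_sub_distrib]
  gcongr with k hk
  have h0 := cut_nonneg K k
  have h1 := cut_le_one K k
  have hz : 0 ≤ kconv (fun l => ‖W l‖) k := kconv_nonneg (fun _ => norm_nonneg _) k
  have ht := h.cut_mul_norm_tail_le hK (mem_freq.1 hk).1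
  have e2 : (∑ l ∈ freq K, (cut K k ^ 2 : ℝ) * lsym α₀ α₁ k l * (conj (W k) * W l)).re =
      cut K k ^ 2 * (conj (W k) * H k).re - cut K k ^ 2 *
        (conj (W k) * (H k - ∑ l ∈ freq K, lsym α₀ α₁ k l * W l)).re := by
    rw [mul_sub, sub_re, mul_sub, sub_sub_cancel, ← re_ofReal_mul, Finset.mul_sum, Finset.mul_sum]
    congr 1
    exact Finset.sum_congr rfl fun l _ => by push_cast; ring
  rw [e2]
  set D := H k - ∑ l ∈ freq K, lsym α₀ α₁ k l * W l
  have h2 : cut K k ^ 2 * (conj (W k) * D).re ≥ -(cut K k * ‖W k‖ * (cut K k * ‖D‖)) := by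
    have h3 := (abs_le.1 (Complex.abs_re_le_norm (conj (W k) * D))).1
    rw [norm_mul, RCLike.norm_conj] at h3
    have := mul_le_mul_of_nonneg_left h3 (sq_nonneg (cut K k))
    linarith
  have h4 : cut K k * ‖W k‖ * (cut K k * ‖D‖) ≤ cut K k * ‖W k‖ *
      (12 * C₀ * kconv (fun l => ‖W l‖) k + e k) + cut K k * (cut K k * (C₀ * |(k : ℝ)| * ‖W k‖
        * kconv (fun l => ‖W l‖) k)) := by
    have := mul_le_mul_of_nonneg_left ht (mul_nonneg h0 (norm_nonneg (W k)))
    linarith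
  have h5 : cut K k * ‖W k‖ * (12 * C₀ * kconv (fun l => ‖W l‖) k + e k) ≤
      ‖W k‖ * (12 * C₀ * kconv (fun l => ‖W l‖) k + e k) := by
    have := h.e_nonneg k
    refine mul_le_mul_of_nonneg_right (mul_le_of_le_one_left (norm_nonneg _) h1) (by positivity)
  have h6 : cut K k * (cut K k * (C₀ * |(k : ℝ)| * ‖W k‖ * kconv (fun l => ‖W l‖) k)) ≤
      cut K k * (C₀ * |(k : ℝ)| * ‖W k‖ * kconv (fun l => ‖W l‖) k) :=
    mul_le_of_le_one_left (by positivity) h1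
  linarith

end Admissible

set_option maxHeartbeats 1600000 in
theorem exists_energy_bound {γ0 : ℝ} (hγ : γ0 ≠ 0) (γ1 γ2 : ℝ) {c C₀ : ℝ} (hc : 0 < c)
    (hC : 0 ≤ C₀) : ∃ C : ℝ, 0 ≤ C ∧ ∀ (K : ℕ) (α₀ α₁ β₀ β₁ W H R V : ℤ → ℂ) (e : ℤ → ℝ) (M : ℝ),
      1 ≤ K → Admissible C₀ c α₀ α₁ β₀ β₁ W H R e M →
      (∀ k, V k = -(I * disp γ0 γ1 γ2 k * W k) + H k) →
      c * ∑ k ∈ freq K, (cut K k * |(k : ℝ)| * ‖W k‖) ^ 2 - C * (1 + M) ≤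
        truncEnergyDeriv γ0 K α₀ α₁ β₀ β₁ W V := by
  have hS := kerSum_pos
  have hγ' : 0 < |γ0| := abs_pos.2 hγ
  obtain ⟨S, hSdef⟩ : ∃ S, S = kerSum := ⟨_, rfl⟩
  rw [← hSdef] at hS
  obtain ⟨C5, hC5⟩ : ∃ x, x = 48 / |γ0| * (2 * |γ1| + |γ2|) * C₀ := ⟨_, rfl⟩
  obtain ⟨C6, hC6⟩ : ∃ x, x = 24 / |γ0| * C₀ := ⟨_, rfl⟩
  have hC50 : 0 ≤ C5 := by rw [hC5]; positivity
  have hC60 : 0 ≤ C6 := by rw [hC6]; positivity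
  obtain ⟨θ, hθd⟩ : ∃ x, x = c / (C₀ + 4 * C6 * S + 1) := ⟨_, rfl⟩
  have hθ : 0 < θ := by rw [hθd]; positivity
  have hθc : (C₀ + 4 * C6 * S) * θ ≤ c := by
    rw [hθd, mul_div_assoc', div_le_iff₀ (by positivity)]
    nlinarith
  have hθi : 0 < θ⁻¹ := inv_pos.2 hθ
  set A1 := C₀ + 4 * C6 * S * θ⁻¹ * C₀ with hA1
  set A2 := 12 * C₀ * (1 + S ^ 2) + C₀ * θ⁻¹ * S ^ 2 + 1 + C5 * S + 4 * C6 * S +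
    2 * C6 * S * (2 * θ + θ⁻¹ * (18 * C₀ ^ 2 * S ^ 2)) with hA2
  have hA10 : 0 ≤ A1 := by positivity
  have hA20 : 0 ≤ A2 := by positivity
  refine ⟨A1 + A2, by positivity, fun K α₀ α₁ β₀ β₁ W H R V e M hK h hV => ?_⟩
  have hM := h.M_nonneg
  set s := freq K with hs
  set w : ℤ → ℝ := fun k => ‖W k‖ with hw
  set z : ℤ → ℝ := kconv w with hz
  set x : ℤ → ℝ := fun k => cut K k * |(k : ℝ)| * ‖W k‖ with hx
  set hh : ℤ → ℝ := fun k => 3 * C₀ * z k + e k with hhh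
  set X := ∑ k ∈ s, x k ^ 2 with hX
  have hw2 : ∑ k ∈ s, w k ^ 2 ≤ M := h.sum_le s
  have hz2 : ∑ k ∈ s, z k ^ 2 ≤ S ^ 2 * M := by
    refine (sum_kconv_sq_le h.summ s).trans ?_
    rw [← hSdef]
    exact mul_le_mul_of_nonneg_left h.tsum_le (sq_nonneg _)
  have hh2 : ∑ k ∈ s, hh k ^ 2 ≤ 18 * C₀ ^ 2 * (S ^ 2 * M) + 2 * C₀ := by
    calc _ ≤ ∑ k ∈ s, (18 * C₀ ^ 2 * z k ^ 2 + 2 * e k ^ 2) := by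
          refine Finset.sum_le_sum fun k _ => ?_
          simp only [hhh]
          nlinarith [sq_nonneg (3 * C₀ * z k - e k)]
      _ = 18 * C₀ ^ 2 * ∑ k ∈ s, z k ^ 2 + 2 * ∑ k ∈ s, e k ^ 2 := by
          rw [Finset.sum_add_distrib, ← Finset.mul_sum, ← Finset.mul_sum]
      _ ≤ _ := by gcongr; exact h.sum_e s
  have hxw : ∑ k ∈ s, (x k + w k) ^ 2 ≤ 2 * X + 2 * M := by
    calc _ ≤ ∑ k ∈ s, (2 * x k ^ 2 + 2 * w k ^ 2) :=
          Finset.sum_le_sum fun k _ => by nlinarith [sq_nonneg (x k - w k)]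
      _ = 2 * X + 2 * ∑ k ∈ s, w k ^ 2 := by
          rw [Finset.sum_add_distrib, ← Finset.mul_sum, ← Finset.mul_sum]
      _ ≤ _ := by gcongr
  -- the first order terms
  have hdiag := h.diag_term_ge hK hV
  have b1 : ∑ k ∈ s, (12 * C₀ * (w k * z k) + C₀ * (x k * z k) + w k * e k) ≤
      12 * C₀ * ((M + S ^ 2 * M) / 2) + C₀ * ((θ * X + θ⁻¹ * (S ^ 2 * M)) / 2) +
        (M + C₀) / 2 := by
    have t1 := sum_mul_le_half s w z one_pos
    have t2 := sum_mul_le_half s x z hθ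
    have t3 := sum_mul_le_half s w e one_pos
    have t4 := h.sum_e s
    rw [inv_one, one_mul, one_mul] at t1 t3
    rw [Finset.sum_add_distrib, Finset.sum_add_distrib, ← Finset.mul_sum, ← Finset.mul_sum]
    gcongr
    · exact t1.trans (by gcongr)
    · exact t2.trans (by gcongr)
    · exact t3.trans (by gcongr)
  -- the normal form terms
  set U : ℤ → ℤ → ℂ := fun k l => (ssym K α₀ α₁ k l + gsym γ0 K α₀ α₁ k l *
        (I * (disp γ0 γ1 γ2 k - disp γ0 γ1 γ2 l : ℝ))) * (conj (W k) * W l) with hU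
  set B : ℤ → ℤ → ℂ := fun k l => gsym γ0 K β₀ β₁ k l * (conj (W k) * W l) with hB
  set P : ℤ → ℤ → ℂ := fun k l => gsym γ0 K α₀ α₁ k l * (conj (W k) * H l) with hP
  set P' : ℤ → ℤ → ℂ := fun k l => gsym γ0 K α₀ α₁ k l * (conj (H k) * W l) with hP'
  have e1 : (∑ k ∈ s, ∑ l ∈ s, ssym K α₀ α₁ k l * (conj (W k) * W l)).re +
      (∑ k ∈ s, ∑ l ∈ s, (gsym γ0 K β₀ β₁ k l * (conj (W k) * W l) +
      gsym γ0 K α₀ α₁ k l * (conj (V k) * W l + conj (W k) * V l))).re =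
      ∑ k ∈ s, ∑ l ∈ s, ((U k l).re + ((B k l).re + (P k l).re + (P' k l).re)) := by
    rw [← add_re, ← Finset.sum_add_distrib]
    simp only [← Finset.sum_add_distrib, ← add_re, ← Complex.re_sum]
    congr 1
    refine Finset.sum_congr rfl fun k _ => Finset.sum_congr rfl fun l _ => ?_
    simp only [hU, hB, hP, hP', hV, map_add, map_neg, map_mul, conj_I, conj_ofReal, ofReal_sub]
    ring
  have b2 : ∀ k ∈ s, ∀ l ∈ s, (if k = l then 2 * c * x k ^ 2 else 0) -
      (C5 * (ker (k - l) * (w k * w l)) +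
        C6 * ((w k * |(k : ℝ)|⁻¹) * (w l * |(l : ℝ)|⁻¹)) +
        C6 * 2 * (ker (k - l) * ((x k + w k) * hh l)) +
        C6 * 2 * (ker (k - l) * (hh k * (x l + w l)))) ≤
      (U k l).re + ((B k l).re + (P k l).re + (P' k l).re) := by
    intro k hk l hl
    have u1 := h.main_pair hγ γ1 γ2 hK k l
    have u2 := (abs_le.1 ((Complex.abs_re_le_norm (B k l)).trans
      (norm_gsym_mul_le_of_bdd hγ hK h.norm_b0 h.norm_b1 W hk hl))).1
    have u3 := (abs_le.1 ((Complex.abs_re_le_norm (P k l)).trans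
      (h.norm_gsym_H_le hγ hK hk hl))).1
    have u4 := (abs_le.1 ((Complex.abs_re_le_norm (P' k l)).trans
      (h.norm_gsym_H_le' hγ hK hk hl))).1
    rw [← hC6] at u2 u3 u4
    rw [← hC5] at u1
    simp only [hU, hx, hw, hhh, hz] at u1 u2 u3 u4 ⊢
    linarith
  have b3 : 2 * c * X - (C5 * ∑ k ∈ s, ∑ l ∈ s, ker (k - l) * (w k * w l) +
      C6 * ∑ k ∈ s, ∑ l ∈ s, (w k * |(k : ℝ)|⁻¹) * (w l * |(l : ℝ)|⁻¹) +
      C6 * 2 * ∑ k ∈ s, ∑ l ∈ s, ker (k - l) * ((x k + w k) * hh l) +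
      C6 * 2 * ∑ k ∈ s, ∑ l ∈ s, ker (k - l) * (hh k * (x l + w l))) ≤
      ∑ k ∈ s, ∑ l ∈ s, ((U k l).re + ((B k l).re + (P k l).re + (P' k l).re)) := by
    refine le_trans (le_of_eq ?_)
      (Finset.sum_le_sum fun k hk => Finset.sum_le_sum fun l hl => b2 k hk l hl)
    simp only [Finset.sum_sub_distrib, Finset.sum_add_distrib, Finset.sum_ite_eq, Finset.mul_sum]
    congr 1
    rw [hX, Finset.mul_sum]
    exact Finset.sum_congr rfl fun k hk => (if_pos hk).symm
  have b4 : ∑ k ∈ s, ∑ l ∈ s, ker (k - l) * (w k * w l) ≤ S / 2 * (M + M) := by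
    have := sum_ker_mul_le s w w one_pos
    rw [inv_one, one_mul, ← hSdef] at this
    exact this.trans (by gcongr)
  have b5 : ∑ k ∈ s, ∑ l ∈ s, (w k * |(k : ℝ)|⁻¹) * (w l * |(l : ℝ)|⁻¹) ≤ M * (4 * S) := by
    rw [← Finset.sum_mul_sum, ← sq]
    refine (Finset.sum_mul_sq_le_sq_mul_sq s w fun k => |(k : ℝ)|⁻¹).trans ?_
    have := sum_inv_abs_sq_le K
    rw [← hSdef] at this
    gcongr
  have b6 : ∑ k ∈ s, ∑ l ∈ s, ker (k - l) * ((x k + w k) * hh l) ≤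
      S / 2 * (θ * (2 * X + 2 * M) + θ⁻¹ * (18 * C₀ ^ 2 * (S ^ 2 * M) + 2 * C₀)) := by
    have := sum_ker_mul_le s (fun k => x k + w k) hh hθ
    rw [← hSdef] at this
    exact this.trans (by gcongr)
  have b7 : ∑ k ∈ s, ∑ l ∈ s, ker (k - l) * (hh k * (x l + w l)) ≤
      S / 2 * (θ⁻¹ * (18 * C₀ ^ 2 * (S ^ 2 * M) + 2 * C₀) + θ * (2 * X + 2 * M)) := by
    have := sum_ker_mul_le s hh (fun k => x k + w k) hθi
    rw [← hSdef, inv_inv] at this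
    exact this.trans (by gcongr)
  have b8 := mul_le_mul_of_nonneg_left b4 hC50
  have b9 := mul_le_mul_of_nonneg_left b5 hC60
  have b10 := mul_le_mul_of_nonneg_left b6 (mul_nonneg hC60 zero_le_two)
  have b11 := mul_le_mul_of_nonneg_left b7 (mul_nonneg hC60 zero_le_two)
  have hXn : 0 ≤ X := Finset.sum_nonneg fun _ _ => sq_nonneg _
  have b12 := mul_le_mul_of_nonneg_right hθc hXn
  have b13 : A1 + A2 * M ≤ (A1 + A2) * (1 + M) := by nlinarith
  have e2 : A1 + A2 * M + (C₀ + 4 * C6 * S) * θ * X =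
      2 * (12 * C₀ * ((M + S ^ 2 * M) / 2) + C₀ * ((θ * X + θ⁻¹ * (S ^ 2 * M)) / 2) +
        (M + C₀) / 2) + C5 * (S / 2 * (M + M)) + C6 * (M * (4 * S)) +
      C6 * 2 * (S / 2 * (θ * (2 * X + 2 * M) + θ⁻¹ * (18 * C₀ ^ 2 * (S ^ 2 * M) + 2 * C₀))) +
      C6 * 2 * (S / 2 * (θ⁻¹ * (18 * C₀ ^ 2 * (S ^ 2 * M) + 2 * C₀) + θ * (2 * X + 2 * M))) := by
    rw [hA1, hA2]; ring
  unfold truncEnergyDeriv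
  linarith

end FifthOrderStmt4

namespace FifthOrderStmt4

open Complex ComplexConjugate

lemma abs_correction_le {γ0 : ℝ} (hγ : γ0 ≠ 0) {K : ℕ} (hK : 1 ≤ K) {α₀ α₁ W : ℤ → ℂ} {C₀ C₁ : ℝ}
    (h0 : ∀ n, ‖α₀ n‖ ≤ C₀ * (brk n ^ 5)⁻¹) (h1 : ∀ n, ‖α₁ n‖ ≤ C₀ * (brk n ^ 5)⁻¹)
    (hW : ∑ k ∈ freq K, (‖W k‖ * |(k : ℝ)|⁻¹) ^ 2 ≤ C₁) :
    |(∑ k ∈ freq K, ∑ l ∈ freq K, gsym γ0 K α₀ α₁ k l * (conj (W k) * W l)).re| ≤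
      24 / |γ0| * C₀ * (kerSum * C₁) := by
  have hS := kerSum_pos
  have hC : 0 ≤ C₀ := by
    have := (norm_nonneg _).trans (h0 0)
    simpa [brk] using this
  have hγ' : 0 < |γ0| := abs_pos.2 hγ
  refine (Complex.abs_re_le_norm _).trans ((norm_sum_le _ _).trans ?_)
  calc _ ≤ ∑ k ∈ freq K, ∑ l ∈ freq K, 24 / |γ0| * C₀ * (ker (k - l) *
        ((‖W k‖ * |(k : ℝ)|⁻¹) * (‖W l‖ * |(l : ℝ)|⁻¹))) := by
        refine Finset.sum_le_sum fun k hk => (norm_sum_le _ _).trans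
          (Finset.sum_le_sum fun l hl => ?_)
        have hg := norm_gsym_le hγ hK (h0 (k - l)) (h1 (k - l))
        have hk1 : (1 : ℝ) ≤ |(k : ℝ)| := by exact_mod_cast Int.one_le_abs (mem_freq.1 hk).1
        have hl1 : (1 : ℝ) ≤ |(l : ℝ)| := by exact_mod_cast Int.one_le_abs (mem_freq.1 hl).1
        have hkl : 0 < |(k : ℝ)| * |(l : ℝ)| := by positivity
        have hb := one_le_brk (k - l)
        have h2 : 2 * (|(k : ℝ)| * |(l : ℝ)|) ≤ (k : ℝ) ^ 2 + (l : ℝ) ^ 2 := by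
          rw [← sq_abs (k : ℝ), ← sq_abs (l : ℝ)]
          nlinarith [sq_nonneg (|(k : ℝ)| - |(l : ℝ)|)]
        have h3 : ‖gsym γ0 K α₀ α₁ k l‖ ≤
            24 / |γ0| * C₀ * (ker (k - l) * (|(k : ℝ)|⁻¹ * |(l : ℝ)|⁻¹)) := by
          rw [← mul_inv, ← mul_assoc, ← div_eq_mul_inv, le_div_iff₀ hkl]
          have h4 : 24 / |γ0| * (C₀ * (brk (k - l) ^ 5)⁻¹) * (cut K k + cut K l) ≤
              24 / |γ0| * (C₀ * ker (k - l)) * (1 + 1) := by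
            have := cut_nonneg K k
            have := cut_nonneg K l
            have := cut_le_one K k
            have := cut_le_one K l
            have := (ker_pos (k - l)).le
            have : (brk (k - l) ^ 5)⁻¹ ≤ ker (k - l) := by
              unfold ker
              exact inv_anti₀ (by have := brk_pos (k - l); positivity)
                (pow_le_pow_right₀ hb (by norm_num))
            gcongr
          have h5 := mul_le_mul_of_nonneg_left h2 (norm_nonneg (gsym γ0 K α₀ α₁ k l))
          linarith
        rw [norm_mul, norm_mul, RCLike.norm_conj]
        calc _ ≤ 24 / |γ0| * C₀ * (ker (k - l) * (|(k : ℝ)|⁻¹ * |(l : ℝ)|⁻¹)) *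
              (‖W k‖ * ‖W l‖) := by gcongr
          _ = _ := by ring
    _ = 24 / |γ0| * C₀ * ∑ k ∈ freq K, ∑ l ∈ freq K, (ker (k - l) *
        ((‖W k‖ * |(k : ℝ)|⁻¹) * (‖W l‖ * |(l : ℝ)|⁻¹))) := by simp only [Finset.mul_sum]
    _ ≤ _ := by
        have := sum_ker_mul_le (freq K) (fun k => ‖W k‖ * |(k : ℝ)|⁻¹)
          (fun k => ‖W k‖ * |(k : ℝ)|⁻¹) one_pos
        rw [inv_one, one_mul] at this
        refine mul_le_mul_of_nonneg_left (this.trans ?_) (by positivity)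
        nlinarith

lemma hasDerivAt_gsym (γ0 : ℝ) (K : ℕ) {α₀ α₁ : ℝ → ℤ → ℂ} {β₀ β₁ : ℤ → ℂ} {t : ℝ}
    (h0 : ∀ n, HasDerivAt (fun t => α₀ t n) (β₀ n) t)
    (h1 : ∀ n, HasDerivAt (fun t => α₁ t n) (β₁ n) t) (k l : ℤ) :
    HasDerivAt (fun t => gsym γ0 K (α₀ t) (α₁ t) k l) (gsym γ0 K β₀ β₁ k l) t := by
  unfold gsym ssym
  exact (((((h0 (k - l)).const_mul (-I)).mul_const _).sub
    (((h1 (k - l)).const_mul 2).mul_const _)).const_mul I).div_const _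

lemma hasDerivAt_truncEnergy (γ0 : ℝ) (K : ℕ) {α₀ α₁ W : ℝ → ℤ → ℂ} {β₀ β₁ V : ℤ → ℂ} {t : ℝ}
    (h0 : ∀ n, HasDerivAt (fun t => α₀ t n) (β₀ n) t)
    (h1 : ∀ n, HasDerivAt (fun t => α₁ t n) (β₁ n) t)
    (hW : ∀ n, HasDerivAt (fun t => W t n) (V n) t) :
    HasDerivAt (fun t => truncEnergy γ0 K (α₀ t) (α₁ t) (W t))
      (truncEnergyDeriv γ0 K (α₀ t) (α₁ t) β₀ β₁ (W t) V) t := by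
  unfold truncEnergy truncEnergyDeriv
  refine HasDerivAt.add (HasDerivAt.fun_sum fun k _ => ?_) ?_
  · have := (hW k).norm_sq
    rw [Complex.inner, mul_comm _ (conj (W t k))] at this
    exact this.const_mul _
  · refine Complex.reCLM.hasFDerivAt.comp_hasDerivAt t (HasDerivAt.fun_sum fun k _ =>
      HasDerivAt.fun_sum fun l _ => ?_)
    exact (hasDerivAt_gsym γ0 K h0 h1 k l).mul ((hW k).star.mul (hW l))

lemma continuousOn_truncEnergy (γ0 : ℝ) (K : ℕ) {α₀ α₁ W : ℝ → ℤ → ℂ} {A : Set ℝ}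
    (h0 : ∀ n, ContinuousOn (fun t => α₀ t n) A)
    (h1 : ∀ n, ContinuousOn (fun t => α₁ t n) A)
    (hW : ∀ n, ContinuousOn (fun t => W t n) A) :
    ContinuousOn (fun t => truncEnergy γ0 K (α₀ t) (α₁ t) (W t)) A := by
  unfold truncEnergy gsym ssym
  refine ContinuousOn.add (continuousOn_finsetSum _ fun k _ =>
    continuousOn_const.mul ((hW k).norm.pow 2)) ?_
  refine Complex.continuous_re.comp_continuousOn (continuousOn_finsetSum _ fun k _ =>
    continuousOn_finsetSum _ fun l _ => ?_)
  refine ContinuousOn.mul (ContinuousOn.div_const (continuousOn_const.mul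
    (((continuousOn_const.mul (h0 _)).mul continuousOn_const).sub
      ((continuousOn_const.mul (h1 _)).mul continuousOn_const))) _) ?_
  exact (Complex.continuous_conj.comp_continuousOn (hW k)).mul (hW l)

lemma freq_mono {K K' : ℕ} (h : K ≤ K') : freq K ⊆ freq K' := fun k hk => by
  have hK : (K : ℝ) ≤ K' := by exact_mod_cast h
  exact mem_freq.2 ⟨(mem_freq.1 hk).1, (mem_freq.1 hk).2.trans (by linarith)⟩

lemma half_le_cut {K : ℕ} (hK : 1 ≤ K) {k : ℤ} (hk : k ∈ freq K) : 1 / 2 ≤ cut (4 * K) k := by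
  have hK' : (0 : ℝ) < K := by exact_mod_cast hK
  refine le_max_of_le_right ?_
  have : |(k : ℝ)| / (4 * K : ℕ) ≤ 1 / 2 := by
    rw [div_le_iff₀ (by positivity)]
    push_cast
    linarith [(mem_freq.1 hk).2]
  linarith

lemma exists_subset_freq (s : Finset ℤ) : ∃ K, s.erase 0 ⊆ freq K := by
  refine ⟨∑ k ∈ s, k.natAbs, fun k hk => mem_freq.2 ⟨(Finset.mem_erase.1 hk).1, ?_⟩⟩
  have h1 : k.natAbs ≤ ∑ k ∈ s, k.natAbs :=
    Finset.single_le_sum (f := Int.natAbs) (fun _ _ => Nat.zero_le _) (Finset.mem_erase.1 hk).2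
  have h2 : |(k : ℝ)| = (k.natAbs : ℝ) := by
    rw [Nat.cast_natAbs, Int.cast_abs]
  rw [h2]
  have h3 : (k.natAbs : ℝ) ≤ (∑ k ∈ s, k.natAbs : ℕ) := by exact_mod_cast h1
  linarith [(Nat.cast_nonneg _ : (0 : ℝ) ≤ (∑ k ∈ s, k.natAbs : ℕ))]

open MeasureTheory Set in
/-- A monotone family of functions with bounded integrals is almost everywhere dominated by an
integrable function. -/
lemma exists_integrable_bound {T C : ℝ} (hT : 0 ≤ T) {f : ℕ → ℝ → ℝ} (hf : ∀ n, ContinuousOn (f n) (Icc 0 T))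
    (h0 : ∀ n t, 0 ≤ f n t) (hm : ∀ t, Monotone fun n => f n t)
    (hC : ∀ n, ∫ t in (0)..T, f n t ≤ C) :
    ∃ g : ℝ → ℝ, IntegrableOn g (Icc 0 T) ∧
      ∀ᵐ t ∂(volume.restrict (Icc 0 T)), ∀ n, f n t ≤ g t := by
  set μ : Measure ℝ := volume.restrict (Icc 0 T)
  have hmeas : ∀ n, AEMeasurable (fun t => ENNReal.ofReal (f n t)) μ := fun n =>
    ((hf n).aemeasurable measurableSet_Icc).ennreal_ofReal
  have hint : ∫⁻ t, ⨆ n, ENNReal.ofReal (f n t) ∂μ ≤ ENNReal.ofReal C := by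
    rw [lintegral_iSup' hmeas (Filter.Eventually.of_forall fun t n n' h =>
      ENNReal.ofReal_le_ofReal (hm t h))]
    refine iSup_le fun n => ?_
    rw [← ofReal_integral_eq_lintegral_ofReal ((hf n).integrableOn_Icc)
      (Filter.Eventually.of_forall (h0 n))]
    refine ENNReal.ofReal_le_ofReal ?_
    rw [integral_Icc_eq_integral_Ioc, ← intervalIntegral.integral_of_le hT]
    exact hC n
  have hfin : ∫⁻ t, ⨆ n, ENNReal.ofReal (f n t) ∂μ ≠ ⊤ := (hint.trans_lt ENNReal.ofReal_lt_top).ne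
  refine ⟨fun t => (⨆ n, ENNReal.ofReal (f n t)).toReal,
    integrable_toReal_of_lintegral_ne_top (.iSup hmeas) hfin, ?_⟩
  filter_upwards [ae_lt_top' (.iSup hmeas) hfin] with t ht n
  rw [← ENNReal.ofReal_le_iff_le_toReal ht.ne]
  exact le_iSup (fun n => ENNReal.ofReal (f n t)) n

open MeasureTheory Set in
lemma add_integral_le_of_deriv_ge {T t₀ : ℝ} (h0 : t₀ ≤ T) {E E' X g : ℝ → ℝ}
    (hE : ContinuousOn E (Icc t₀ T)) (hE' : ∀ t ∈ Ioo t₀ T, HasDerivAt E (E' t) t)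
    (hX : IntegrableOn X (Icc t₀ T)) (hg : IntegrableOn g (Icc t₀ T))
    (h : ∀ᵐ t ∂(volume.restrict (Icc t₀ T)), t ∈ Ioo t₀ T → X t - g t ≤ E' t) :
    E t₀ + ∫ t in t₀..T, X t ≤ E T + ∫ t in t₀..T, g t := by
  classical
  set φ : ℝ → ℝ := fun t => if X t - g t ≤ E' t then g t - X t else - E' t with hφ
  have hae : (fun t => g t - X t) =ᵐ[volume.restrict (Icc t₀ T)] φ := by
    have h1 : ∀ᵐ t ∂(volume.restrict (Icc t₀ T)), t ∈ Ioo t₀ T := by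
      rw [restrict_Ioo_eq_restrict_Icc.symm]
      exact ae_restrict_mem measurableSet_Ioo
    filter_upwards [h, h1] with t ht ht1
    simp only [hφ]
    rw [if_pos (ht ht1)]
  have hint : IntegrableOn φ (Icc t₀ T) := (hg.sub hX).congr hae
  have hle := intervalIntegral.sub_le_integral_of_hasDeriv_right_of_le h0 hE.neg
    (fun t ht => (hE' t ht).neg.hasDerivWithinAt) hint fun t _ => by
      simp only [hφ]
      split_ifs with hh
      · linarith
      · exact le_rfl
  have e1 : ∫ t in t₀..T, φ t = (∫ t in t₀..T, g t) - ∫ t in t₀..T, X t := by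
    rw [← intervalIntegral.integral_sub]
    · rw [intervalIntegral.integral_of_le h0, intervalIntegral.integral_of_le h0,
        ← integral_Icc_eq_integral_Ioc, ← integral_Icc_eq_integral_Ioc]
      exact (integral_congr_ae hae).symm
    · exact (intervalIntegrable_iff_integrableOn_Icc_of_le h0).2 hg
    · exact (intervalIntegrable_iff_integrableOn_Icc_of_le h0).2 hX
  rw [e1] at hle
  simp only [Pi.neg_apply] at hle
  linarith

end FifthOrderStmt4

namespace FifthOrderStmt4

open Complex ComplexConjugate MeasureTheory Set

theorem smoothing_step {γ0 : ℝ} (hγ : γ0 ≠ 0) (γ1 γ2 : ℝ) {c C₀ C₁ T : ℝ} (hc : 0 < c)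
    (hT : 0 < T) (α₀ α₁ β₀ β₁ W H R V : ℝ → ℤ → ℂ) (e : ℝ → ℤ → ℝ)
    (c0 : ∀ n, ContinuousOn (fun t => α₀ t n) (Icc 0 T))
    (c1 : ∀ n, ContinuousOn (fun t => α₁ t n) (Icc 0 T))
    (cW : ∀ n, ContinuousOn (fun t => W t n) (Icc 0 T))
    (d0 : ∀ t ∈ Ioo 0 T, ∀ n, HasDerivAt (fun t => α₀ t n) (β₀ t n) t)
    (d1 : ∀ t ∈ Ioo 0 T, ∀ n, HasDerivAt (fun t => α₁ t n) (β₁ t n) t)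
    (dW : ∀ t ∈ Ioo 0 T, ∀ n, HasDerivAt (fun t => W t n) (V t n) t)
    (hV : ∀ t ∈ Ioo 0 T, ∀ k, V t k = -(I * disp γ0 γ1 γ2 k * W t k) + H t k)
    (b0 : ∀ t ∈ Icc 0 T, ∀ n, ‖α₀ t n‖ ≤ C₀ * (brk n ^ 5)⁻¹)
    (b1 : ∀ t ∈ Icc 0 T, ∀ n, ‖α₁ t n‖ ≤ C₀ * (brk n ^ 5)⁻¹)
    (hW0 : ∀ t, W t 0 = 0)
    (hadm : ∀ t ∈ Ioo 0 T, ∀ M, (∀ s : Finset ℤ, ∑ k ∈ s, ‖W t k‖ ^ 2 ≤ M) →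
      Admissible C₀ c (α₀ t) (α₁ t) (β₀ t) (β₁ t) (W t) (H t) (R t) (e t) M)
    (hlow : ∀ t ∈ Icc 0 T, ∀ K, ∑ k ∈ freq K, (‖W t k‖ * |(k : ℝ)|⁻¹) ^ 2 ≤ C₁)
    (hint : ∀ K, ∫ t in (0)..T, ∑ k ∈ freq K, ‖W t k‖ ^ 2 ≤ C₁) :
    ∃ T' ∈ Ioo 0 T, ∃ C₂, (∀ t ∈ Icc 0 T', ∀ K, ∑ k ∈ freq K, ‖W t k‖ ^ 2 ≤ C₂) ∧
      ∀ K, ∫ t in (0)..T', ∑ k ∈ freq K, (|(k : ℝ)| * ‖W t k‖) ^ 2 ≤ C₂ := by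
  have hC₀ : 0 ≤ C₀ := by
    have := (norm_nonneg _).trans (b0 0 ⟨le_rfl, hT.le⟩ 0)
    simpa [brk] using this
  obtain ⟨C, hC, hbound⟩ := exists_energy_bound hγ γ1 γ2 hc hC₀
  have cW2 : ∀ K, ContinuousOn (fun t => ∑ k ∈ freq K, ‖W t k‖ ^ 2) (Icc 0 T) := fun K =>
    continuousOn_finsetSum _ fun k _ => (cW k).norm.pow 2
  obtain ⟨g, hg, hfg⟩ := exists_integrable_bound hT.le cW2
    (fun K t => Finset.sum_nonneg fun _ _ => sq_nonneg _)
    (fun t K K' hK => Finset.sum_le_sum_of_subset_of_nonneg (freq_mono hK)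
      fun _ _ _ => sq_nonneg _) hint
  have hIoo : ∀ᵐ t ∂(volume.restrict (Icc 0 T)), t ∈ Ioo 0 T := by
    rw [restrict_Ioo_eq_restrict_Icc.symm]
    exact ae_restrict_mem measurableSet_Ioo
  have hne : (volume.restrict (Icc 0 T)) ≠ 0 := by
    rw [Ne, Measure.restrict_eq_zero, Real.volume_Icc]
    simpa using hT
  have : (ae (volume.restrict (Icc 0 T))).NeBot := ae_neBot.2 hne
  obtain ⟨T', hT'g, hT'⟩ := (hfg.and hIoo).exists
  have hsub : Icc 0 T' ⊆ Icc 0 T := Icc_subset_Icc_right hT'.2.le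
  set D := 24 / |γ0| * C₀ * (kerSum * C₁) with hD
  have hcorr : ∀ t ∈ Icc 0 T, ∀ K, 1 ≤ K →
      |truncEnergy γ0 K (α₀ t) (α₁ t) (W t) - ∑ k ∈ freq K, cut K k ^ 2 * ‖W t k‖ ^ 2| ≤ D := by
    intro t ht K hK
    unfold truncEnergy
    rw [add_sub_cancel_left]
    exact abs_correction_le hγ hK (b0 t ht) (b1 t ht) (hlow t ht K)
  set G := ∫ t in (0)..T, C * (1 + |g t|) with hG
  have hgi : IntegrableOn (fun t => C * (1 + |g t|)) (Icc 0 T) := by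
    refine Integrable.const_mul (Integrable.add ?_ hg.abs) C
    exact integrableOn_const (measure_Icc_lt_top.ne)
  -- the basic energy inequality
  have key : ∀ t ∈ Icc 0 T', ∀ K, 1 ≤ K → ∑ k ∈ freq K, cut K k ^ 2 * ‖W t k‖ ^ 2 +
      c * ∫ r in t..T', ∑ k ∈ freq K, (cut K k * |(k : ℝ)| * ‖W r k‖) ^ 2 ≤
      g T' + 2 * D + G := by
    intro t ht K hK
    have hsub' : Icc t T' ⊆ Icc 0 T := Icc_subset_Icc ht.1 hT'.2.le
    have hX : ContinuousOn (fun r => c * ∑ k ∈ freq K, (cut K k * |(k : ℝ)| * ‖W r k‖) ^ 2)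
        (Icc 0 T) := continuousOn_const.mul
      (continuousOn_finsetSum _ fun k _ => (continuousOn_const.mul (cW k).norm).pow 2)
    have hE := add_integral_le_of_deriv_ge ht.2
      ((continuousOn_truncEnergy γ0 K c0 c1 cW).mono hsub')
      (fun r hr => hasDerivAt_truncEnergy γ0 K
        (d0 r ⟨ht.1.trans_lt hr.1, hr.2.trans hT'.2⟩)
        (d1 r ⟨ht.1.trans_lt hr.1, hr.2.trans hT'.2⟩)
        (dW r ⟨ht.1.trans_lt hr.1, hr.2.trans hT'.2⟩))
      (hX.mono hsub').integrableOn_Icc (hgi.mono_set hsub') (by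
        filter_upwards [ae_restrict_of_ae_restrict_of_subset hsub' hfg] with r hr hr'
        have hrT : r ∈ Ioo 0 T := ⟨ht.1.trans_lt hr'.1, hr'.2.trans hT'.2⟩
        have hs : ∀ s : Finset ℤ, ∑ k ∈ s, ‖W r k‖ ^ 2 ≤ g r := by
          intro s
          obtain ⟨K', hK'⟩ := exists_subset_freq s
          rw [← Finset.sum_erase (a := 0) s (by rw [hW0]; simp)]
          exact (Finset.sum_le_sum_of_subset_of_nonneg hK' fun _ _ _ => sq_nonneg _).trans (hr K')
        have h1 := hbound K _ _ _ _ _ _ _ _ _ _ hK (hadm r hrT (g r) hs) (hV r hrT)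
        have h2 : C * (1 + g r) ≤ C * (1 + |g r|) := by
          gcongr
          exact le_abs_self _
        linarith)
    rw [intervalIntegral.integral_const_mul] at hE
    have h1 := (abs_le.1 (hcorr t (hsub ht) K hK)).1
    have h2 := (abs_le.1 (hcorr T' ⟨hT'.1.le, hT'.2.le⟩ K hK)).2
    have h3 : ∑ k ∈ freq K, cut K k ^ 2 * ‖W T' k‖ ^ 2 ≤ g T' := by
      refine le_trans (Finset.sum_le_sum fun k _ => ?_) (hT'g K)
      exact mul_le_of_le_one_left (sq_nonneg _) (pow_le_one₀ (cut_nonneg _ _) (cut_le_one _ _))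
    have h4 : ∫ r in t..T', C * (1 + |g r|) ≤ G := by
      refine intervalIntegral.integral_mono_interval ht.1 ht.2 hT'.2.le
        (Filter.Eventually.of_forall fun r => ?_)
        ((intervalIntegrable_iff_integrableOn_Icc_of_le hT.le).2 hgi)
      simp only [Pi.zero_apply]
      positivity
    linarith
  have hGb : ∀ t ∈ Icc 0 T', ∀ K, 1 ≤ K →
      0 ≤ ∫ r in t..T', ∑ k ∈ freq K, (cut K k * |(k : ℝ)| * ‖W r k‖) ^ 2 := fun t ht K _ =>
    intervalIntegral.integral_nonneg ht.2 fun r _ => Finset.sum_nonneg fun _ _ => sq_nonneg _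
  set B := g T' + 2 * D + G
  have hB : 0 ≤ B := by
    have h1 := key T' ⟨hT'.1.le, le_rfl⟩ 1 le_rfl
    rw [intervalIntegral.integral_same, mul_zero, add_zero] at h1
    exact (Finset.sum_nonneg fun k _ => by positivity).trans h1
  have hfreq : ∀ K, freq K ⊆ freq (4 * (K + 1)) := fun K => freq_mono (by omega)
  have hcut : ∀ K, ∀ k ∈ freq K, 1 / 4 ≤ cut (4 * (K + 1)) k ^ 2 := fun K k hk => by
    have := half_le_cut (K := K + 1) (by omega) (freq_mono (Nat.le_succ K) hk)
    nlinarith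
  refine ⟨T', hT', 4 * B + 4 * (B / c), fun t ht K => ?_, fun K => ?_⟩
  · have h1 := key t ht (4 * (K + 1)) (by omega)
    have h2 := mul_nonneg hc.le (hGb t ht (4 * (K + 1)) (by omega))
    have h3 : ∑ k ∈ freq K, ‖W t k‖ ^ 2 ≤
        4 * ∑ k ∈ freq (4 * (K + 1)), cut (4 * (K + 1)) k ^ 2 * ‖W t k‖ ^ 2 := by
      rw [Finset.mul_sum]
      refine le_trans (Finset.sum_le_sum fun k hk => ?_)
        (Finset.sum_le_sum_of_subset_of_nonneg (hfreq K) fun k _ _ => by positivity)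
      have := mul_le_mul_of_nonneg_right (hcut K k hk) (sq_nonneg ‖W t k‖)
      linarith
    have : 0 ≤ B / c := by positivity
    linarith
  · have h1 := key 0 ⟨le_rfl, hT'.1.le⟩ (4 * (K + 1)) (by omega)
    have h2 : 0 ≤ ∑ k ∈ freq (4 * (K + 1)), cut (4 * (K + 1)) k ^ 2 * ‖W 0 k‖ ^ 2 :=
      Finset.sum_nonneg fun k _ => by positivity
    have h3 : ∫ r in (0)..T', ∑ k ∈ freq K, (|(k : ℝ)| * ‖W r k‖) ^ 2 ≤
        4 * ∫ r in (0)..T', ∑ k ∈ freq (4 * (K + 1)),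
          (cut (4 * (K + 1)) k * |(k : ℝ)| * ‖W r k‖) ^ 2 := by
      rw [← intervalIntegral.integral_const_mul]
      refine intervalIntegral.integral_mono_on hT'.1.le ?_ ?_ fun r _ => ?_
      · refine ContinuousOn.intervalIntegrable_of_Icc hT'.1.le ?_
        exact (continuousOn_finsetSum _ fun k _ =>
          (continuousOn_const.mul (cW k).norm).pow 2).mono hsub
      · refine ContinuousOn.intervalIntegrable_of_Icc hT'.1.le ?_
        exact (continuousOn_const.mul (continuousOn_finsetSum _ fun k _ =>
          (continuousOn_const.mul (cW k).norm).pow 2)).mono hsub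
      · rw [Finset.mul_sum]
        refine le_trans (Finset.sum_le_sum fun k hk => ?_)
          (Finset.sum_le_sum_of_subset_of_nonneg (hfreq K) fun k _ _ => by positivity)
        have := mul_le_mul_of_nonneg_right (hcut K k hk) (sq_nonneg (|(k : ℝ)| * ‖W r k‖))
        rw [mul_assoc, mul_pow (cut _ k)]
        linarith
    have h4 : ∫ r in (0)..T', ∑ k ∈ freq (4 * (K + 1)),
          (cut (4 * (K + 1)) k * |(k : ℝ)| * ‖W r k‖) ^ 2 ≤ B / c := by
      rw [le_div_iff₀ hc]
      linarith
    linarith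

end FifthOrderStmt4

namespace FifthOrderStmt4

section differentialPolynomials
open MvPolynomial

/-- Differential polynomials: the variable `X i` stands for the `i`-th derivative. -/
abbrev DPoly := MvPolynomial ℕ ℝ

/-- Differential polynomials of order at most `r`. -/
noncomputable abbrev ord (r : ℕ) : Subalgebra ℝ DPoly := supported ℝ (Set.Iic r)

/-- The total derivative. -/
noncomputable def tder : Derivation ℝ DPoly DPoly := mkDerivation ℝ fun i => X (i + 1)

lemma tder_X (i : ℕ) : tder (X i) = X (i + 1) := mkDerivation_X _ _ _

lemma ord_mono {r r' : ℕ} (h : r ≤ r') : ord r ≤ ord r' :=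
  supported_mono (Set.Iic_subset_Iic.2 h)

lemma X_mem_ord {i r : ℕ} (h : i ≤ r) : (X i : DPoly) ∈ ord r :=
  X_mem_supported.2 h

lemma ord_induction {r : ℕ} {P : DPoly → Prop} (hX : ∀ i ≤ r, P (X i)) (hC : ∀ x, P (C x))
    (hadd : ∀ p q, p ∈ ord r → q ∈ ord r → P p → P q → P (p + q))
    (hmul : ∀ p q, p ∈ ord r → q ∈ ord r → P p → P q → P (p * q)) {p : DPoly} (hp : p ∈ ord r) :
    P p := by
  refine Algebra.adjoin_induction (p := fun x _ => P x) ?_ hC (fun x y hx hy => hadd x y hx hy)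
    (fun x y hx hy => hmul x y hx hy) hp
  rintro _ ⟨i, hi, rfl⟩
  exact hX i hi

lemma tder_mem_ord {r : ℕ} {p : DPoly} (hp : p ∈ ord r) : tder p ∈ ord (r + 1) := by
  refine ord_induction (P := fun p => tder p ∈ ord (r + 1)) (fun i hi => ?_) (fun x => ?_)
    (fun p q _ _ h1 h2 => ?_) (fun p q h1 h2 h3 h4 => ?_) hp
  · rw [tder_X]; exact X_mem_ord (by omega)
  · rw [show tder (C x) = 0 from tder.map_algebraMap x]; exact zero_mem _
  · rw [map_add]; exact add_mem h1 h2
  · rw [Derivation.leibniz, smul_eq_mul, smul_eq_mul]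
    exact add_mem (mul_mem (ord_mono (Nat.le_succ r) h1) h4)
      (mul_mem (ord_mono (Nat.le_succ r) h2) h3)

lemma iterate_tder_mem_ord {r : ℕ} {p : DPoly} (hp : p ∈ ord r) (m : ℕ) :
    tder^[m] p ∈ ord (r + m) := by
  induction m with
  | zero => exact hp
  | succ m ih => rw [Function.iterate_succ_apply']; exact tder_mem_ord ih

lemma pderiv_mem_ord {r : ℕ} {p : DPoly} (i : ℕ) (hp : p ∈ ord r) : pderiv i p ∈ ord r := by
  refine ord_induction (P := fun p => pderiv i p ∈ ord r) (fun j hj => ?_) (fun x => ?_)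
    (fun p q _ _ h1 h2 => ?_) (fun p q h1 h2 h3 h4 => ?_) hp
  · rw [pderiv_X]
    by_cases h : i = j
    · subst h; rw [Pi.single_eq_same]; exact one_mem _
    · rw [Pi.single_eq_of_ne (Ne.symm h)]; exact zero_mem _
  · rw [pderiv_C]; exact zero_mem _
  · rw [map_add]; exact add_mem h1 h2
  · rw [Derivation.leibniz, smul_eq_mul, smul_eq_mul]
    exact add_mem (mul_mem h1 h4) (mul_mem h2 h3)

lemma pderiv_eq_zero {r i : ℕ} {p : DPoly} (hp : p ∈ ord r) (h : r < i) : pderiv i p = 0 := by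
  refine pderiv_eq_zero_of_notMem_vars (R := ℝ) fun hi => ?_
  have := mem_supported.1 hp hi
  simp only [Set.mem_Iic] at this
  omega

lemma pderiv_succ_tder (i : ℕ) (p : DPoly) :
    pderiv (i + 1) (tder p) = tder (pderiv (i + 1) p) + pderiv i p := by
  have h : ⁅(pderiv (i + 1) : Derivation ℝ DPoly DPoly), tder⁆ = pderiv i := by
    refine derivation_ext fun j => ?_
    rw [Derivation.commutator_apply, tder_X, pderiv_X, pderiv_X, pderiv_X]
    by_cases h1 : i = j
    · subst h1
      rw [Pi.single_eq_same, Pi.single_eq_same, Pi.single_eq_of_ne (by omega), map_zero, sub_zero]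
    · rw [Pi.single_eq_of_ne (by omega), Pi.single_eq_of_ne (Ne.symm h1)]
      by_cases h2 : i + 1 = j
      · subst h2
        rw [Pi.single_eq_same, Derivation.map_one_eq_zero, sub_zero]
      · rw [Pi.single_eq_of_ne (Ne.symm h2), map_zero, sub_zero]
  have := congrArg (fun D : Derivation ℝ DPoly DPoly => D p) h
  simp only [Derivation.commutator_apply] at this
  rw [← this]; ring

lemma pderiv_top_iterate {r : ℕ} {p : DPoly} (hp : p ∈ ord r) (m : ℕ) :
    pderiv (r + m) (tder^[m] p) = pderiv r p := by
  induction m with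
  | zero => rfl
  | succ m ih =>
    rw [Function.iterate_succ_apply', ← add_assoc, pderiv_succ_tder, ih,
      pderiv_eq_zero (iterate_tder_mem_ord hp m) (by omega), map_zero, zero_add]

lemma pderiv_subtop_iterate {r : ℕ} {p : DPoly} (hp : p ∈ ord (r + 1)) (m : ℕ) :
    pderiv (r + m) (tder^[m] p) = pderiv r p + m * tder (pderiv (r + 1) p) := by
  induction m with
  | zero => simp
  | succ m ih =>
    rw [Function.iterate_succ_apply', ← add_assoc, pderiv_succ_tder, ih, add_right_comm,
      pderiv_top_iterate hp m]
    push_cast; ring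

/-- The weight of a monomial, counting derivatives of order above three. -/
noncomputable def wt (s : ℕ →₀ ℕ) : ℕ := Finsupp.weight (fun i => i - 3) s

lemma wt_add (s s' : ℕ →₀ ℕ) : wt (s + s') = wt s + wt s' := map_add _ _ _

lemma wt_single (i : ℕ) : wt (Finsupp.single i 1) = i - 3 := by
  rw [wt, Finsupp.weight_single, one_smul]

/-- All monomials have weight at most `n`. -/
def WtLe (n : ℕ) (p : DPoly) : Prop := ∀ s ∈ p.support, wt s ≤ n

lemma WtLe.zero (n : ℕ) : WtLe n 0 := by simp [WtLe]

lemma WtLe.add {n : ℕ} {p q : DPoly} (hp : WtLe n p) (hq : WtLe n q) : WtLe n (p + q) := by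
  intro s hs
  rcases Finset.mem_union.1 (support_add hs) with h | h
  exacts [hp s h, hq s h]

lemma WtLe.of_monomial {n : ℕ} {s : ℕ →₀ ℕ} (h : wt s ≤ n) (x : ℝ) : WtLe n (monomial s x) := by
  intro s' hs'
  have := Finset.mem_singleton.1 (support_monomial_subset hs')
  rwa [this]

lemma WtLe.smul {n : ℕ} {p : DPoly} (x : ℝ) (hp : WtLe n p) : WtLe n (x • p) :=
  fun s hs => hp s (support_smul hs)

lemma WtLe.tder {n : ℕ} {p : DPoly} (hp : WtLe n p) : WtLe (n + 1) (tder p) := by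
  rw [p.as_sum, map_sum]
  refine Finset.sum_induction _ (WtLe (n + 1)) (fun _ _ => WtLe.add) (WtLe.zero _) fun s hs => ?_
  rw [FifthOrderStmt4.tder, mkDerivation_monomial]
  refine WtLe.smul _ ?_
  refine Finset.sum_induction _ (WtLe (n + 1)) (fun _ _ => WtLe.add) (WtLe.zero _)
    fun i hi => ?_
  change WtLe (n + 1) (MvPolynomial.monomial (s - Finsupp.single i 1) ((s i : ℕ) : ℝ) •
    (X (i + 1) : DPoly))
  rw [smul_eq_mul, X, monomial_mul]
  refine WtLe.of_monomial ?_ _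
  have h1 : s - Finsupp.single i 1 + Finsupp.single i 1 = s := by
    refine tsub_add_cancel_of_le (Finsupp.single_le_iff.2 ?_)
    exact Nat.one_le_iff_ne_zero.2 (Finsupp.mem_support_iff.1 hi)
  have h2 := hp s hs
  rw [← h1, wt_add, wt_single] at h2
  rw [wt_add, wt_single]
  omega

lemma WtLe.of_mem_ord {p : DPoly} (hp : p ∈ ord 3) : WtLe 0 p := by
  intro s hs
  rw [wt, Finsupp.weight_apply]
  refine (Finset.sum_eq_zero fun i hi => ?_).le
  have h1 : i ∈ p.vars := (mem_vars_iff_mem_support _).2 ⟨s, hs, hi⟩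
  have := mem_supported.1 hp h1
  simp only [Set.mem_Iic] at this
  change s i • (i - 3) = 0
  rw [Nat.sub_eq_zero_of_le this, smul_zero]

lemma WtLe.iterate_tder {p : DPoly} (hp : p ∈ ord 3) (m : ℕ) : WtLe m (FifthOrderStmt4.tder^[m] p) := by
  induction m with
  | zero => exact WtLe.of_mem_ord hp
  | succ m ih => rw [Function.iterate_succ_apply']; exact ih.tder

lemma monomial_mem_ord {r : ℕ} {s : ℕ →₀ ℕ} (h : ∀ i ∈ s.support, i ≤ r) (x : ℝ) :
    (monomial s x : DPoly) ∈ ord r := by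
  refine mem_supported.2 fun i hi => ?_
  obtain ⟨s', hs', hi'⟩ := (mem_vars_iff_mem_support _).1 hi
  rw [Finset.mem_singleton.1 (support_monomial_subset hs')] at hi'
  exact h i hi'

lemma le_wt {s : ℕ →₀ ℕ} {i : ℕ} (hi : i ∈ s.support) : i - 3 ≤ wt s :=
  Finsupp.le_weight_of_ne_zero' (fun i => i - 3) (Finsupp.mem_support_iff.1 hi)

/-- Extraction of the five highest order variables. -/
lemma WtLe.exists_decomposition {m : ℕ} (hm : 5 ≤ m) {p : DPoly} (hp : WtLe m p) :
    ∃ (c : ℕ → DPoly) (E : DPoly), (∀ j < 5, c j ∈ ord 7) ∧ E ∈ ord (m - 2) ∧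
      p = ∑ j ∈ Finset.range 5, c j * X (m + 3 - j) + E := by
  rw [p.as_sum]
  refine Finset.sum_induction _ (fun p => ∃ (c : ℕ → DPoly) (E : DPoly), (∀ j < 5, c j ∈ ord 7) ∧
    E ∈ ord (m - 2) ∧ p = ∑ j ∈ Finset.range 5, c j * X (m + 3 - j) + E) ?_ ?_ fun s hs => ?_
  · rintro p q ⟨c, E, h1, h2, rfl⟩ ⟨c', E', h1', h2', rfl⟩
    refine ⟨c + c', E + E', fun j hj => add_mem (h1 j hj) (h1' j hj), add_mem h2 h2', ?_⟩
    simp only [Pi.add_apply, add_mul, Finset.sum_add_distrib]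
    ring
  · exact ⟨0, 0, fun _ _ => zero_mem _, zero_mem _, by simp⟩
  · by_cases h : ∀ i ∈ s.support, i ≤ m - 2
    · exact ⟨0, _, fun _ _ => zero_mem _, monomial_mem_ord h (coeff s p), by simp⟩
    push Not at h
    obtain ⟨i, hi, hmi⟩ := h
    have h1 : s - Finsupp.single i 1 + Finsupp.single i 1 = s := by
      refine tsub_add_cancel_of_le (Finsupp.single_le_iff.2 ?_)
      exact Nat.one_le_iff_ne_zero.2 (Finsupp.mem_support_iff.1 hi)
    have h2 := hp s hs
    have h3 := le_wt hi
    rw [← h1, wt_add, wt_single] at h2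
    refine ⟨Pi.single (m + 3 - i) (MvPolynomial.monomial (s - Finsupp.single i 1) (coeff s p)), 0,
      fun j hj => ?_, zero_mem _, ?_⟩
    · by_cases hji : j = m + 3 - i
      · subst hji
        rw [Pi.single_eq_same]
        refine monomial_mem_ord (fun i' hi' => ?_) _
        have := le_wt hi'
        omega
      · rw [Pi.single_eq_of_ne hji]; exact zero_mem _
    · rw [Finset.sum_eq_single (m + 3 - i)]
      · rw [Pi.single_eq_same, add_zero, X, monomial_mul, mul_one,
          show m + 3 - (m + 3 - i) = i by omega, h1]
      · intro j _ hj
        rw [Pi.single_eq_of_ne hj, zero_mul]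
      · intro hj
        exact absurd (Finset.mem_range.2 (by omega)) hj

theorem exists_iterate_tder_eq {p : DPoly} (hp : p ∈ ord 3) {m : ℕ} (hm : 9 ≤ m) :
    ∃ (c : ℕ → DPoly) (E : DPoly), (∀ j < 5, c j ∈ ord 7) ∧ E ∈ ord (m - 2) ∧
      c 0 = pderiv 3 p ∧ c 1 = pderiv 2 p + m * tder (pderiv 3 p) ∧
      tder^[m] p = ∑ j ∈ Finset.range 5, c j * X (m + 3 - j) + E := by
  obtain ⟨c, E, hc, hE, he⟩ := (WtLe.iterate_tder hp m).exists_decomposition (by omega)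
  have hcalc : ∀ i < 5, pderiv (m + 3 - i) (tder^[m] p) = c i := by
    intro i hi
    rw [he, map_add, map_sum, pderiv_eq_zero hE (by omega), add_zero, Finset.sum_eq_single i]
    · rw [Derivation.leibniz, pderiv_X_self, pderiv_eq_zero (hc i hi) (by omega)]
      simp
    · intro j hj hji
      have hj5 := Finset.mem_range.1 hj
      rw [Derivation.leibniz, pderiv_X_of_ne (by omega), pderiv_eq_zero (hc j hj5) (by omega)]
      simp
    · intro h
      exact absurd (Finset.mem_range.2 hi) h
  refine ⟨c, E, hc, hE, ?_, ?_, he⟩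
  · rw [← hcalc 0 (by omega), ← pderiv_top_iterate hp m, show m + 3 - 0 = 3 + m by omega]
  · rw [← hcalc 1 (by omega), ← pderiv_subtop_iterate (r := 2) hp m]
    rw [show m + 3 - 1 = 2 + m by omega]

end differentialPolynomials
end FifthOrderStmt4

namespace FifthOrderStmt4

section jets
open Complex ComplexConjugate MvPolynomial

/-- A weighted `ℓ¹` bound. -/
def WBdd (r : ℕ) (A : ℝ) (a : ℤ → ℂ) : Prop := ∀ s : Finset ℤ, ∑ k ∈ s, brk k ^ r * ‖a k‖ ≤ A

section
variable {r : ℕ} {A : ℝ} {a : ℤ → ℂ}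

lemma weighted_nonneg (r : ℕ) (a : ℤ → ℂ) (k : ℤ) : 0 ≤ brk k ^ r * ‖a k‖ :=
  mul_nonneg (pow_nonneg (brk_pos k).le r) (norm_nonneg _)

lemma WBdd.summable (h : WBdd r A a) : Summable fun k => brk k ^ r * ‖a k‖ :=
  summable_of_sum_le (weighted_nonneg r a) h

lemma WBdd.tsum_le (h : WBdd r A a) : ∑' k, brk k ^ r * ‖a k‖ ≤ A :=
  h.summable.tsum_le_of_sum_le h

lemma WBdd.mono (h : WBdd r A a) {r' : ℕ} (hr : r' ≤ r) : WBdd r' A a := fun s =>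
  (Finset.sum_le_sum fun k _ => mul_le_mul_of_nonneg_right
    (pow_le_pow_right₀ (one_le_brk k) hr) (norm_nonneg _)).trans (h s)

lemma WBdd.of_le {b : ℤ → ℂ} (h : WBdd r A a) (hb : ∀ k, ‖b k‖ ≤ ‖a k‖) : WBdd r A b := fun s =>
  (Finset.sum_le_sum fun k _ => mul_le_mul_of_nonneg_left (hb k)
    (pow_nonneg (brk_pos k).le r)).trans (h s)

lemma WBdd.of_decay {C : ℝ} (h : ∀ k, ‖a k‖ ≤ C * (brk k ^ (r + 2))⁻¹) :
    WBdd r (C * kerSum) a := by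
  have hC : 0 ≤ C := by
    have := (norm_nonneg _).trans (h 0)
    simpa [brk] using this
  intro s
  calc ∑ k ∈ s, brk k ^ r * ‖a k‖ ≤ ∑ k ∈ s, C * ker k := by
        refine Finset.sum_le_sum fun k _ => ?_
        have h1 := pow_pos (brk_pos k) r
        have h2 := brk_pos k
        calc brk k ^ r * ‖a k‖ ≤ brk k ^ r * (C * (brk k ^ (r + 2))⁻¹) :=
              mul_le_mul_of_nonneg_left (h k) h1.le
          _ = C * ker k := by
              unfold ker
              field_simp
              ring
    _ = C * ∑ k ∈ s, ker k := by rw [Finset.mul_sum]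
    _ ≤ C * kerSum := mul_le_mul_of_nonneg_left
        (summable_ker.sum_le_tsum s fun k _ => (ker_pos k).le) hC
end

/-- The `j`-th derivative of the Fourier mode `k` with coefficient `a k`. -/
noncomputable def jetTerm (a : ℤ → ℂ) (j : ℕ) (x : ℝ) (k : ℤ) : ℂ :=
  (I * k) ^ j * a k * exp (I * k * x)

/-- The `j`-th derivative of the function with Fourier coefficients `a`. -/
noncomputable def jet (a : ℤ → ℂ) (j : ℕ) (x : ℝ) : ℂ := ∑' k, jetTerm a j x k

lemma norm_exp_I_mul (k : ℤ) (x : ℝ) : ‖exp (I * k * x)‖ = 1 := by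
  rw [show I * (k : ℂ) * x = ((k * x : ℝ) : ℂ) * I by push_cast; ring, norm_exp_ofReal_mul_I]

lemma norm_jetTerm (a : ℤ → ℂ) (j : ℕ) (x : ℝ) (k : ℤ) :
    ‖jetTerm a j x k‖ = |(k : ℝ)| ^ j * ‖a k‖ := by
  rw [jetTerm, norm_mul, norm_mul, norm_exp_I_mul, mul_one, norm_pow, norm_mul, norm_I, one_mul,
    norm_intCast]

section
variable {r : ℕ} {A : ℝ} {a : ℤ → ℂ}

lemma norm_jetTerm_le {j : ℕ} (hj : j ≤ r) (a : ℤ → ℂ) (x : ℝ) (k : ℤ) :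
    ‖jetTerm a j x k‖ ≤ brk k ^ r * ‖a k‖ := by
  rw [norm_jetTerm]
  refine mul_le_mul_of_nonneg_right ?_ (norm_nonneg _)
  exact (pow_le_pow_left₀ (abs_nonneg _) (abs_le_brk k) j).trans
    (pow_le_pow_right₀ (one_le_brk k) hj)

lemma WBdd.summable_jetTerm (h : WBdd r A a) {j : ℕ} (hj : j ≤ r) (x : ℝ) :
    Summable (jetTerm a j x) :=
  Summable.of_norm_bounded h.summable (norm_jetTerm_le hj a x)

lemma WBdd.norm_jet_le (h : WBdd r A a) {j : ℕ} (hj : j ≤ r) (x : ℝ) : ‖jet a j x‖ ≤ A :=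
  (tsum_of_norm_bounded h.summable.hasSum (norm_jetTerm_le hj a x)).trans h.tsum_le

lemma hasDerivAt_jetTerm (a : ℤ → ℂ) (j : ℕ) (x : ℝ) (k : ℤ) :
    HasDerivAt (fun x => jetTerm a j x k) (jetTerm a (j + 1) x k) x := by
  have h1 : HasDerivAt (fun y : ℝ => exp (I * k * y)) (exp (I * k * x) * (I * k * 1)) x :=
    ((Complex.ofRealCLM.hasDerivAt (x := x)).const_mul (I * (k : ℂ))).cexp
  have := h1.const_mul ((I * (k : ℂ)) ^ j * a k)
  refine this.congr_deriv ?_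
  rw [jetTerm]; ring

lemma WBdd.hasDerivAt_jet (h : WBdd r A a) {j : ℕ} (hj : j + 1 ≤ r) (x : ℝ) :
    HasDerivAt (jet a j) (jet a (j + 1) x) x :=
  hasDerivAt_tsum h.summable (fun k x => hasDerivAt_jetTerm a j x k)
    (fun k x => norm_jetTerm_le hj a x k) (h.summable_jetTerm (by omega) 0) x

lemma WBdd.continuous_jet (h : WBdd r A a) {j : ℕ} (hj : j ≤ r) : Continuous (jet a j) :=
  continuous_tsum (fun k => continuous_iff_continuousAt.2 fun x =>
    (hasDerivAt_jetTerm a j x k).continuousAt) h.summable (fun k x => norm_jetTerm_le hj a x k)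

lemma jetTerm_periodic (a : ℤ → ℂ) (j : ℕ) (x : ℝ) (k : ℤ) :
    jetTerm a j (x + 2 * Real.pi) k = jetTerm a j x k := by
  rw [jetTerm, jetTerm]
  congr 1
  rw [exp_eq_exp_iff_exists_int]
  exact ⟨k, by push_cast; ring⟩

lemma jet_periodic (a : ℤ → ℂ) (j : ℕ) : Function.Periodic (jet a j) (2 * Real.pi) := fun x => by
  simp only [jet, jetTerm_periodic]

lemma conj_jet (ha : ∀ k, a (-k) = conj (a k)) (j : ℕ) (x : ℝ) : conj (jet a j x) = jet a j x := by
  rw [jet, conj_tsum, ← (Equiv.neg ℤ).tsum_eq]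
  refine tsum_congr fun k => ?_
  rw [Equiv.neg_apply, jetTerm, jetTerm, ha, map_mul, map_mul, conj_conj, map_pow, map_mul, conj_I,
    ← exp_conj, map_mul, map_mul, conj_I, conj_ofReal, Int.cast_neg, map_neg, map_intCast]
  ring_nf

end

/-- A differential polynomial evaluated at the function with Fourier coefficients `a`. -/
noncomputable def ev (Q : DPoly) (a : ℤ → ℂ) (x : ℝ) : ℂ := aeval (fun j => jet a j x) Q

section
variable (a : ℤ → ℂ) (x : ℝ) (p q : DPoly)

lemma ev_X (j : ℕ) : ev (X j) a x = jet a j x := aeval_X _ _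
lemma ev_C (y : ℝ) : ev (C y) a x = y := aeval_C _ _
lemma ev_C_eq (y : ℝ) : ev (C y) a = fun _ => (y : ℂ) := by
  ext x
  rw [ev_C]
lemma ev_add : ev (p + q) a x = ev p a x + ev q a x := map_add _ _ _
lemma ev_mul : ev (p * q) a x = ev p a x * ev q a x := map_mul _ _ _
lemma ev_add_eq : ev (p + q) a = fun x => ev p a x + ev q a x := by
  ext x
  rw [ev_add]
lemma ev_mul_eq : ev (p * q) a = fun x => ev p a x * ev q a x := by
  ext x
  rw [ev_mul]
lemma ev_sum {ι : Type*} (s : Finset ι) (f : ι → DPoly) :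
    ev (∑ i ∈ s, f i) a x = ∑ i ∈ s, ev (f i) a x := map_sum _ _ _

end

lemma exists_norm_ev_le {r : ℕ} {Q : DPoly} (hQ : Q ∈ ord r) (A : ℝ) :
    ∃ B, ∀ a, WBdd r A a → ∀ x, ‖ev Q a x‖ ≤ B := by
  refine ord_induction (P := fun Q => ∃ B, ∀ a, WBdd r A a → ∀ x, ‖ev Q a x‖ ≤ B)
    (fun i hi => ⟨A, fun a h x => ?_⟩) (fun y => ⟨|y|, fun a _ x => ?_⟩) ?_ ?_ hQ
  · rw [ev_X]; exact h.norm_jet_le hi x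
  · rw [ev_C, norm_real, Real.norm_eq_abs]
  · rintro p q - - ⟨B, hB⟩ ⟨B', hB'⟩
    exact ⟨B + B', fun a h x => by
      rw [ev_add]; exact (norm_add_le _ _).trans (add_le_add (hB a h x) (hB' a h x))⟩
  · rintro p q - - ⟨B, hB⟩ ⟨B', hB'⟩
    exact ⟨B * B', fun a h x => by
      rw [ev_mul, norm_mul]
      exact mul_le_mul (hB a h x) (hB' a h x) (norm_nonneg _) ((norm_nonneg _).trans (hB a h x))⟩

section
variable {r : ℕ} {A : ℝ} {a : ℤ → ℂ} {Q : DPoly}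

lemma WBdd.continuous_ev (h : WBdd r A a) (hQ : Q ∈ ord r) : Continuous (ev Q a) := by
  refine ord_induction (P := fun Q => Continuous (ev Q a)) (fun i hi => ?_) (fun y => ?_)
    (fun p q _ _ h1 h2 => ?_) (fun p q _ _ h1 h2 => ?_) hQ
  · simp only [funext (ev_X a · i)]; exact h.continuous_jet hi
  · rw [ev_C_eq]; exact continuous_const
  · rw [ev_add_eq]; exact h1.add h2
  · rw [ev_mul_eq]; exact h1.mul h2

lemma ev_periodic (a : ℤ → ℂ) (Q : DPoly) : Function.Periodic (ev Q a) (2 * Real.pi) := fun x => by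
  have : (fun j => jet a j (x + 2 * Real.pi)) = fun j => jet a j x :=
    funext fun j => jet_periodic a j x
  rw [ev, ev, this]

lemma WBdd.hasDerivAt_ev (h : WBdd (r + 1) A a) (hQ : Q ∈ ord r) (x : ℝ) :
    HasDerivAt (ev Q a) (ev (tder Q) a x) x := by
  refine ord_induction (P := fun Q => HasDerivAt (ev Q a) (ev (tder Q) a x) x) (fun i hi => ?_)
    (fun y => ?_) (fun p q _ _ h1 h2 => ?_) (fun p q _ _ h1 h2 => ?_) hQ
  · rw [tder_X, ev_X, funext (ev_X a · i)]; exact h.hasDerivAt_jet (by omega) x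
  · rw [show tder (C y) = 0 from tder.map_algebraMap y, ev_C_eq,
      show ev 0 a x = 0 from map_zero _]
    exact hasDerivAt_const _ _
  · rw [map_add, ev_add, ev_add_eq]; exact h1.add h2
  · rw [Derivation.leibniz, ev_add, smul_eq_mul, smul_eq_mul, ev_mul, ev_mul,
      ev_mul_eq]
    exact (h1.mul h2).congr_deriv (by ring)

lemma conj_ev (ha : ∀ k, a (-k) = conj (a k)) (Q : DPoly) (x : ℝ) :
    conj (ev Q a x) = ev Q a x := by
  induction Q using MvPolynomial.induction_on with
  | C y => rw [ev_C, conj_ofReal]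
  | add p q h1 h2 => rw [ev_add, map_add, h1, h2]
  | mul_X p i h1 => rw [ev_mul, map_mul, h1, ev_X, conj_jet ha]

end

end jets
end FifthOrderStmt4

namespace FifthOrderStmt4

section fourier
open Complex ComplexConjugate MeasureTheory Filter Topology

/-- Fourier coefficients of a complex valued function. -/
noncomputable def cf (f : ℝ → ℂ) (k : ℤ) : ℂ :=
  (Complex.ofReal (2 * Real.pi))⁻¹ *
    ∫ x in (0:ℝ)..(2 * Real.pi), f x * exp (-I * (k : ℂ) * (x : ℂ))

lemma fc_eq_cf (f : ℝ → ℝ) (k : ℤ) : fc f k = cf (fun x => (f x : ℂ)) k := rfl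

lemma norm_exp_neg_I_mul (k : ℤ) (x : ℝ) : ‖exp (-I * k * x)‖ = 1 := by
  rw [show -I * (k : ℂ) * x = ((-(k * x) : ℝ) : ℂ) * I by push_cast; ring, norm_exp_ofReal_mul_I]

lemma continuous_exp_neg_I_mul (k : ℤ) : Continuous fun x : ℝ => exp (-I * k * x) := by fun_prop

lemma norm_cf_le {f : ℝ → ℂ} {B : ℝ} (hB : ∀ x, ‖f x‖ ≤ B) (k : ℤ) : ‖cf f k‖ ≤ B := by
  have h1 := intervalIntegral.norm_integral_le_of_norm_le_const (a := 0) (b := 2 * Real.pi)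
    (f := fun x => f x * exp (-I * (k : ℂ) * (x : ℂ))) (C := B) fun x _ => by
      rw [norm_mul, norm_exp_neg_I_mul, mul_one]; exact hB x
  have hp := Real.two_pi_pos
  rw [sub_zero, abs_of_pos hp] at h1
  rw [cf, norm_mul, norm_inv, norm_real, Real.norm_eq_abs, abs_of_pos hp]
  calc _ ≤ (2 * Real.pi)⁻¹ * (B * (2 * Real.pi)) :=
        mul_le_mul_of_nonneg_left h1 (inv_pos.2 hp).le
    _ = B := by field_simp

section
variable {f g : ℝ → ℂ}

lemma intervalIntegrable_cf (hf : Continuous f) (k : ℤ) (x y : ℝ) :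
    IntervalIntegrable (fun x : ℝ => f x * exp (-I * (k : ℂ) * (x : ℂ))) volume x y :=
  (hf.mul (continuous_exp_neg_I_mul k)).intervalIntegrable _ _

lemma cf_add (hf : Continuous f) (hg : Continuous g) (k : ℤ) :
    cf (fun x => f x + g x) k = cf f k + cf g k := by
  simp only [cf, add_mul]
  rw [intervalIntegral.integral_add (intervalIntegrable_cf hf k _ _)
    (intervalIntegrable_cf hg k _ _), mul_add]

lemma cf_const_mul (c : ℂ) (f : ℝ → ℂ) (k : ℤ) : cf (fun x => c * f x) k = c * cf f k := by
  simp only [cf, mul_assoc c, intervalIntegral.integral_const_mul]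
  ring

lemma cf_finset_sum {ι : Type*} (s : Finset ι) {F : ι → ℝ → ℂ} (hF : ∀ i ∈ s, Continuous (F i))
    (k : ℤ) : cf (fun x => ∑ i ∈ s, F i x) k = ∑ i ∈ s, cf (F i) k := by
  simp only [cf, Finset.sum_mul]
  rw [intervalIntegral.integral_finsetSum fun i hi => intervalIntegrable_cf (hF i hi) k _ _,
    Finset.mul_sum]

lemma cf_mul_exp (f : ℝ → ℂ) (k l : ℤ) : cf (fun x => f x * exp (I * l * x)) k = cf f (k - l) := by
  simp only [cf]
  congr 2
  ext x
  rw [mul_assoc, ← exp_add]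
  congr 2
  push_cast; ring

lemma cf_deriv {f' : ℝ → ℂ} (hf : ∀ x, HasDerivAt f (f' x) x) (hf' : Continuous f')
    (hper : Function.Periodic f (2 * Real.pi)) (k : ℤ) : cf f' k = I * k * cf f k := by
  have hexp : ∀ x : ℝ, HasDerivAt (fun y : ℝ => exp (-I * k * y))
      (exp (-I * k * x) * (-I * k * 1)) x := fun x =>
    ((Complex.ofRealCLM.hasDerivAt (x := x)).const_mul (-I * (k : ℂ))).cexp
  have h := intervalIntegral.integral_mul_deriv_eq_deriv_mul (a := 0) (b := 2 * Real.pi)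
    (fun x _ => hf x) (fun x _ => hexp x) (hf'.intervalIntegrable _ _)
    (by apply Continuous.intervalIntegrable; fun_prop)
  have h0 : f (2 * Real.pi) = f 0 := by simpa using hper 0
  have h1 : exp (-I * k * ((2 * Real.pi : ℝ) : ℂ)) = 1 := by
    rw [exp_eq_one_iff]
    exact ⟨-k, by push_cast; ring⟩
  rw [h0, h1] at h
  simp only [ofReal_zero, mul_zero, exp_zero, sub_self, zero_sub] at h
  have h2 : (fun x : ℝ => f x * (exp (-I * k * x) * (-I * k * 1))) =
      fun x : ℝ => (-I * k) * (f x * exp (-I * k * x)) := by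
    ext x; ring
  rw [h2, intervalIntegral.integral_const_mul] at h
  rw [cf, cf, eq_neg_iff_add_eq_zero.1 h |> eq_neg_of_add_eq_zero_right]
  ring

lemma cf_eq_fourierCoeffOn (f : ℝ → ℂ) (k : ℤ) : cf f k = fourierCoeffOn Real.two_pi_pos f k := by
  rw [fourierCoeffOn_eq_integral, cf, sub_zero, Complex.real_smul]
  congr 1
  · push_cast; rw [one_div]
  · refine intervalIntegral.integral_congr fun x _ => ?_
    simp only [smul_eq_mul]
    rw [mul_comm, fourier_coe_apply]
    congr 2
    have : (Real.pi : ℂ) ≠ 0 := ofReal_ne_zero.2 Real.pi_ne_zero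
    push_cast
    field_simp

lemma sum_sq_cf_le (hf : Continuous f) {B : ℝ} (hB : ∀ x, ‖f x‖ ≤ B) (s : Finset ℤ) :
    ∑ k ∈ s, ‖cf f k‖ ^ 2 ≤ B ^ 2 := by
  have hp := Real.two_pi_pos
  have hB0 : 0 ≤ B := (norm_nonneg _).trans (hB 0)
  have hm : MemLp f 2 (volume.restrict (Set.Ioc 0 (2 * Real.pi))) :=
    MemLp.of_bound hf.aestronglyMeasurable B (Eventually.of_forall hB)
  have h := hasSum_sq_fourierCoeffOn hp hm
  simp only [← cf_eq_fourierCoeffOn, sub_zero] at h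
  refine (sum_le_hasSum s (fun _ _ => sq_nonneg _) h).trans ?_
  have h1 : ∫ x in (0:ℝ)..(2 * Real.pi), ‖f x‖ ^ 2 ≤ ∫ x in (0:ℝ)..(2 * Real.pi), B ^ 2 :=
    intervalIntegral.integral_mono_on hp.le ((hf.norm.pow 2).intervalIntegrable _ _)
      (continuous_const.intervalIntegrable _ _)
      fun x _ => pow_le_pow_left₀ (norm_nonneg _) (hB x) 2
  rw [intervalIntegral.integral_const, sub_zero] at h1
  calc _ ≤ (2 * Real.pi)⁻¹ • ((2 * Real.pi) • B ^ 2) :=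
        mul_le_mul_of_nonneg_left h1 (inv_pos.2 hp).le
    _ = B ^ 2 := by simp only [smul_eq_mul]; field_simp

lemma eq_jet_cf (hf : Continuous f) (hper : Function.Periodic f (2 * Real.pi))
    (hs : Summable (cf f)) (x : ℝ) : f x = jet (cf f) 0 x := by
  have : Fact (0 < 2 * Real.pi) := ⟨Real.two_pi_pos⟩
  have hc : Continuous (hper.lift : AddCircle (2 * Real.pi) → ℂ) :=
    continuous_quot_lift _ hf
  let F : C(AddCircle (2 * Real.pi), ℂ) := ⟨hper.lift, hc⟩
  have hF : ∀ k, fourierCoeff F k = cf f k := by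
    intro k
    rw [fourierCoeff_eq_intervalIntegral F k 0, zero_add, cf, Complex.real_smul]
    congr 1
    · push_cast; rw [one_div]
    · refine intervalIntegral.integral_congr fun x _ => ?_
      simp only [smul_eq_mul]
      rw [mul_comm, fourier_coe_apply]
      congr 2
      have : (Real.pi : ℂ) ≠ 0 := ofReal_ne_zero.2 Real.pi_ne_zero
      push_cast
      field_simp
  have h := has_pointwise_sum_fourier_series_of_summable (f := F) (by rwa [funext hF]) (x : AddCircle (2 * Real.pi))
  rw [show F (x : AddCircle (2 * Real.pi)) = f x from rfl] at h
  rw [← h.tsum_eq, jet]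
  refine tsum_congr fun k => ?_
  rw [hF, jetTerm, pow_zero, one_mul, smul_eq_mul, fourier_coe_apply]
  congr 2
  have : (Real.pi : ℂ) ≠ 0 := ofReal_ne_zero.2 Real.pi_ne_zero
  push_cast
  field_simp

lemma cf_neg_of_conj (hf : ∀ x, conj (f x) = f x) (k : ℤ) : cf f (-k) = conj (cf f k) := by
  rw [cf, cf, map_mul, map_inv₀, conj_ofReal, intervalIntegral.integral_of_le Real.two_pi_pos.le,
    intervalIntegral.integral_of_le Real.two_pi_pos.le, ← integral_conj]
  congr 2
  ext x
  rw [map_mul, hf, ← exp_conj, map_mul, map_mul, conj_ofReal, map_neg, conj_I, map_intCast]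
  push_cast
  ring_nf

lemma tendsto_cf {ι : Type*} {l : Filter ι} [l.IsCountablyGenerated] {F : ι → ℝ → ℂ} {B : ℝ}
    (hF : ∀ᶠ i in l, Continuous (F i)) (hB : ∀ᶠ i in l, ∀ x, ‖F i x‖ ≤ B)
    (hlim : ∀ x, Tendsto (fun i => F i x) l (𝓝 (f x))) (k : ℤ) :
    Tendsto (fun i => cf (F i) k) l (𝓝 (cf f k)) := by
  refine Tendsto.const_mul _ ?_
  refine intervalIntegral.tendsto_integral_filter_of_dominated_convergence (fun _ => B) ?_ ?_ ?_ ?_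
  · filter_upwards [hF] with i hi
    exact (hi.mul (continuous_exp_neg_I_mul k)).aestronglyMeasurable
  · filter_upwards [hB] with i hi
    refine Eventually.of_forall fun x _ => ?_
    rw [norm_mul, norm_exp_neg_I_mul, mul_one]
    exact hi x
  · exact continuous_const.intervalIntegrable _ _
  · exact Eventually.of_forall fun x _ => (hlim x).mul_const _

end

end fourier
end FifthOrderStmt4

namespace FifthOrderStmt4

section paralinearization
open Complex ComplexConjugate Filter Topology MvPolynomial

section
variable {r : ℕ} {A : ℝ} {a : ℤ → ℂ} {Q : DPoly}

lemma WBdd.cf_ev_tder (h : WBdd (r + 1) A a) (hQ : Q ∈ ord r) (k : ℤ) :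
    cf (ev (tder Q) a) k = I * k * cf (ev Q a) k :=
  cf_deriv (h.hasDerivAt_ev hQ) (h.continuous_ev (tder_mem_ord hQ)) (ev_periodic a Q) k

lemma WBdd.cf_ev_iterate_tder {m : ℕ} (h : WBdd (r + m) A a) (hQ : Q ∈ ord r) (k : ℤ) :
    cf (ev (tder^[m] Q) a) k = (I * k) ^ m * cf (ev Q a) k := by
  induction m with
  | zero => simp
  | succ m ih =>
    rw [Function.iterate_succ_apply',
      WBdd.cf_ev_tder (by rwa [add_assoc]) (iterate_tder_mem_ord hQ m),
      ih (h.mono (by omega)), pow_succ']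
    ring

lemma brk_pow_le (n : ℤ) (p : ℕ) : brk n ^ p ≤ 2 ^ p * (1 + |(n : ℝ)| ^ p) := by
  rcases le_total 1 |(n : ℝ)| with h | h
  · calc brk n ^ p ≤ (2 * |(n : ℝ)|) ^ p :=
          pow_le_pow_left₀ (brk_pos n).le (by unfold brk; linarith) p
      _ ≤ _ := by rw [mul_pow]; gcongr; linarith
  · calc brk n ^ p ≤ 2 ^ p := pow_le_pow_left₀ (brk_pos n).le (by unfold brk; linarith) p
      _ ≤ 2 ^ p * (1 + |(n : ℝ)| ^ p) :=
          le_mul_of_one_le_right (by positivity) (by linarith [pow_nonneg (abs_nonneg (n : ℝ)) p])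

lemma exists_cf_decay (hQ : Q ∈ ord r) (p : ℕ) (A : ℝ) :
    ∃ B, 0 ≤ B ∧ ∀ a, WBdd (r + p) A a → ∀ n, ‖cf (ev Q a) n‖ ≤ B * (brk n ^ p)⁻¹ := by
  obtain ⟨B₀, h₀⟩ := exists_norm_ev_le hQ A
  obtain ⟨B₁, h₁⟩ := exists_norm_ev_le (iterate_tder_mem_ord hQ p) A
  refine ⟨|2 ^ p * (B₀ + B₁)|, abs_nonneg _, fun a ha n => ?_⟩
  have hb := pow_pos (brk_pos n) p
  rw [← div_eq_mul_inv, le_div_iff₀ hb]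
  refine le_trans ?_ (le_abs_self _)
  have e₀ : ‖cf (ev Q a) n‖ ≤ B₀ := norm_cf_le (h₀ a (ha.mono (by omega))) n
  have e₁ : |(n : ℝ)| ^ p * ‖cf (ev Q a) n‖ ≤ B₁ := by
    have := norm_cf_le (h₁ a ha) n
    rwa [ha.cf_ev_iterate_tder hQ, norm_mul, norm_pow, norm_mul, norm_I, one_mul,
      norm_intCast] at this
  calc ‖cf (ev Q a) n‖ * brk n ^ p ≤ ‖cf (ev Q a) n‖ * (2 ^ p * (1 + |(n : ℝ)| ^ p)) :=
        mul_le_mul_of_nonneg_left (brk_pow_le n p) (norm_nonneg _)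
    _ = 2 ^ p * (‖cf (ev Q a) n‖ + |(n : ℝ)| ^ p * ‖cf (ev Q a) n‖) := by ring
    _ ≤ _ := by gcongr

end

/-- The restriction of a sequence to a finite set of frequencies. -/
def restr (s : Finset ℤ) (a : ℤ → ℂ) (k : ℤ) : ℂ := if k ∈ s then a k else 0

section
variable {r : ℕ} {A : ℝ} {a : ℤ → ℂ} {Q : DPoly}

lemma norm_restr_le (s : Finset ℤ) (a : ℤ → ℂ) (k : ℤ) : ‖restr s a k‖ ≤ ‖a k‖ := by
  unfold restr; split_ifs <;> simp

lemma exists_wBdd_restr (s : Finset ℤ) (a : ℤ → ℂ) (r : ℕ) : ∃ A, WBdd r A (restr s a) := by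
  refine ⟨∑ k ∈ s, brk k ^ r * ‖a k‖, fun s' => ?_⟩
  calc ∑ k ∈ s', brk k ^ r * ‖restr s a k‖
      = ∑ k ∈ s', if k ∈ s then brk k ^ r * ‖a k‖ else 0 := by
        refine Finset.sum_congr rfl fun k _ => ?_
        unfold restr; split_ifs <;> simp
    _ = ∑ k ∈ s' ∩ s, brk k ^ r * ‖a k‖ := by rw [Finset.sum_ite_mem]
    _ ≤ _ := Finset.sum_le_sum_of_subset_of_nonneg Finset.inter_subset_right
        fun k _ _ => weighted_nonneg r a k

lemma jet_restr (s : Finset ℤ) (a : ℤ → ℂ) (j : ℕ) (x : ℝ) :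
    jet (restr s a) j x = ∑ k ∈ s, jetTerm a j x k := by
  rw [jet, tsum_eq_sum (s := s)]
  · refine Finset.sum_congr rfl fun k hk => ?_
    rw [jetTerm, restr, if_pos hk, jetTerm]
  · intro k hk
    rw [jetTerm, restr, if_neg hk, mul_zero, zero_mul]

lemma cf_mul_jet_restr {f : ℝ → ℂ} (hf : Continuous f) (s : Finset ℤ) (a : ℤ → ℂ) (j : ℕ) (k : ℤ) :
    cf (fun x => f x * jet (restr s a) j x) k =
      ∑ l ∈ s, cf f (k - l) * ((I * l) ^ j * a l) := by
  have : (fun x => f x * jet (restr s a) j x) =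
      fun x => ∑ l ∈ s, ((I * l) ^ j * a l) * (f x * exp (I * l * x)) := by
    ext x
    rw [jet_restr, Finset.mul_sum]
    refine Finset.sum_congr rfl fun l _ => ?_
    rw [jetTerm]; ring
  rw [this, cf_finset_sum]
  · refine Finset.sum_congr rfl fun l _ => ?_
    rw [cf_const_mul, cf_mul_exp, mul_comm]
  · intro l _
    fun_prop

lemma WBdd.tendsto_ev (h : WBdd r A a) (hQ : Q ∈ ord r) (x : ℝ) :
    Tendsto (fun s : Finset ℤ => ev Q (restr s a) x) atTop (𝓝 (ev Q a x)) := by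
  refine ord_induction
    (P := fun Q => Tendsto (fun s : Finset ℤ => ev Q (restr s a) x) atTop (𝓝 (ev Q a x)))
    (fun i hi => ?_) (fun y => ?_) (fun p q _ _ h1 h2 => ?_) (fun p q _ _ h1 h2 => ?_) hQ
  · simp only [ev_X, jet_restr]
    exact (h.summable_jetTerm hi x).hasSum
  · simp only [ev_C]
    exact tendsto_const_nhds
  · simp only [ev_add]; exact h1.add h2
  · simp only [ev_mul]; exact h1.mul h2

lemma WBdd.tendsto_cf_ev (h : WBdd r A a) (hQ : Q ∈ ord r) (k : ℤ) :
    Tendsto (fun s : Finset ℤ => cf (ev Q (restr s a)) k) atTop (𝓝 (cf (ev Q a) k)) := by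
  obtain ⟨B, hB⟩ := exists_norm_ev_le hQ A
  have hs : ∀ s, WBdd r A (restr s a) := fun s => h.of_le (norm_restr_le s a)
  exact tendsto_cf (Eventually.of_forall fun s => (hs s).continuous_ev hQ)
    (Eventually.of_forall fun s => hB _ (hs s)) (h.tendsto_ev hQ) k

end

/-- The coefficient of the highest order term. -/
noncomputable def topCoeff (N : DPoly) : DPoly := pderiv 3 N

/-- The coefficient of the second highest order term after `m` differentiations. -/
noncomputable def subCoeff (N : DPoly) (m : ℕ) : DPoly := pderiv 2 N + m * tder (pderiv 3 N)

lemma topCoeff_mem {N : DPoly} (hN : N ∈ ord 3) : topCoeff N ∈ ord 3 := pderiv_mem_ord 3 hN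

lemma subCoeff_mem {N : DPoly} (hN : N ∈ ord 3) (m : ℕ) : subCoeff N m ∈ ord 4 :=
  add_mem (ord_mono (by omega) (pderiv_mem_ord 2 hN))
    (mul_mem (natCast_mem _ m) (tder_mem_ord (pderiv_mem_ord 3 hN)))

lemma lsym_mul_eq (α₀ α₁ : ℤ → ℂ) (k l : ℤ) (m : ℕ) (z : ℂ) :
    lsym α₀ α₁ k l * ((I * l) ^ m * z) =
      α₀ (k - l) * ((I * l) ^ (m + 3) * z) + α₁ (k - l) * ((I * l) ^ (m + 2) * z) := by
  rw [lsym, pow_add _ m 3, pow_add _ m 2, mul_pow I _ 3, mul_pow I _ 2, I_sq, pow_succ I 2, I_sq]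
  ring

lemma norm_I_mul_pow (k : ℤ) (m : ℕ) (z : ℂ) : ‖(I * k) ^ m * z‖ = |(k : ℝ)| ^ m * ‖z‖ := by
  rw [norm_mul, norm_pow, norm_mul, norm_I, one_mul, norm_intCast]

/-- Bound of a term of low order. -/
lemma norm_low_term_le {α : ℤ → ℂ} {B : ℝ} (hB : ∀ n, ‖α n‖ ≤ B * (brk n ^ 3)⁻¹) {k : ℤ}
    (hk : k ≠ 0) (l : ℤ) {m j : ℕ} (hj : 2 ≤ j) (hjm : j < m) (z : ℂ) :
    ‖α (k - l) * ((I * l) ^ (m + 3 - j) * z)‖ ≤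
      B * |(k : ℝ)| * (ker (k - l) * ‖(I * l) ^ m * z‖) := by
  have hB0 : 0 ≤ B := by
    have := (norm_nonneg _).trans (hB 0)
    simpa [brk] using this
  rcases eq_or_ne l 0 with rfl | hl
  · rw [Int.cast_zero, mul_zero, zero_pow (by omega), zero_mul, mul_zero, norm_zero]
    exact mul_nonneg (by positivity) (mul_nonneg (ker_pos _).le (norm_nonneg _))
  have hl1 : (1 : ℝ) ≤ |(l : ℝ)| := by exact_mod_cast Int.one_le_abs hl
  have h1 : |(l : ℝ)| ^ (m + 3 - j) ≤ |(k : ℝ)| * brk (k - l) * |(l : ℝ)| ^ m := by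
    calc |(l : ℝ)| ^ (m + 3 - j) ≤ |(l : ℝ)| ^ (m + 1) := pow_le_pow_right₀ hl1 (by omega)
      _ = |(l : ℝ)| * |(l : ℝ)| ^ m := pow_succ' _ _
      _ ≤ _ := mul_le_mul_of_nonneg_right (abs_le_abs_mul_brk hk) (by positivity)
  have hb := brk_pos (k - l)
  rw [norm_mul, norm_I_mul_pow, norm_I_mul_pow]
  calc ‖α (k - l)‖ * (|(l : ℝ)| ^ (m + 3 - j) * ‖z‖)
      ≤ B * (brk (k - l) ^ 3)⁻¹ * (|(k : ℝ)| * brk (k - l) * |(l : ℝ)| ^ m * ‖z‖) :=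
        mul_le_mul (hB _) (mul_le_mul_of_nonneg_right h1 (norm_nonneg _)) (by positivity)
          (by positivity)
    _ = B * |(k : ℝ)| * (ker (k - l) * (|(l : ℝ)| ^ m * ‖z‖)) := by
        unfold ker
        field_simp

/-- The equation satisfied by high derivatives of the nonlinearity. -/
theorem exists_remainder_bound {N : DPoly} (hN : N ∈ ord 3) {m : ℕ} (hm : 9 ≤ m) (A : ℝ) :
    ∃ E ∈ ord (m - 2), ∃ C, 0 ≤ C ∧ ∀ a A', WBdd 11 A a → WBdd (m - 2) A' a →
      (Summable fun l : ℤ => ‖(I * l) ^ m * a l‖ ^ 2) → ∀ k : ℤ, k ≠ 0 →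
      ‖(I * k) ^ m * cf (ev N a) k -
        ∑' l : ℤ, lsym (cf (ev (topCoeff N) a)) (cf (ev (subCoeff N m) a)) k l *
          ((I * l) ^ m * a l)‖ ≤
        C * |(k : ℝ)| * kconv (fun l => ‖(I * l) ^ m * a l‖) k + ‖cf (ev E a) k‖ := by
  obtain ⟨c, E, hc, hE, hc0, hc1, hNm⟩ := exists_iterate_tder_eq hN hm
  obtain ⟨B₂, hB₂0, hB₂⟩ := exists_cf_decay (hc 2 (by omega)) 3 A
  obtain ⟨B₃, hB₃0, hB₃⟩ := exists_cf_decay (hc 3 (by omega)) 3 A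
  obtain ⟨B₄, hB₄0, hB₄⟩ := exists_cf_decay (hc 4 (by omega)) 3 A
  obtain ⟨D₀, hD₀0, hD₀⟩ := exists_cf_decay (topCoeff_mem hN) 5 A
  obtain ⟨D₁, hD₁0, hD₁⟩ := exists_cf_decay (subCoeff_mem hN m) 5 A
  refine ⟨E, hE, B₂ + B₃ + B₄, by positivity, fun a A' ha ha' hs k hk => ?_⟩
  set W : ℤ → ℂ := fun l => (I * l) ^ m * a l with hW
  have hker := summable_ker_mul hs k
  have hr : ∀ s, WBdd 11 A (restr s a) := fun s => ha.of_le (norm_restr_le s a)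
  have hfin : ∀ s : Finset ℤ,
      ‖(I * k) ^ m * cf (ev N (restr s a)) k -
        ∑' l : ℤ, lsym (cf (ev (topCoeff N) (restr s a))) (cf (ev (subCoeff N m) (restr s a))) k l *
          ((I * l) ^ m * restr s a l)‖ ≤
        (B₂ + B₃ + B₄) * |(k : ℝ)| * kconv (fun l => ‖W l‖) k + ‖cf (ev E (restr s a)) k‖ := by
    intro s
    set b := restr s a with hb
    have hev : ev (tder^[m] N) b =
        fun x => ∑ j ∈ Finset.range 5, ev (c j) b x * jet b (m + 3 - j) x + ev E b x := by
      ext x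
      rw [hNm, ev_add, ev_sum]
      simp only [ev_mul, ev_X]
    obtain ⟨A₁, hA₁⟩ := exists_wBdd_restr s a (3 + m)
    have hcc : ∀ j < 5, Continuous (ev (c j) b) := fun j hj =>
      (hr s).continuous_ev (ord_mono (by omega) (hc j hj))
    have hcj : ∀ j ∈ Finset.range 5, Continuous fun x => ev (c j) b x * jet b (m + 3 - j) x :=
      fun j hj => (hcc j (Finset.mem_range.1 hj)).mul (hA₁.continuous_jet (by omega))
    have hEc : Continuous (ev E b) := hA₁.continuous_ev (ord_mono (by omega) hE)
    have hsum : ∑' l : ℤ, lsym (cf (ev (topCoeff N) b)) (cf (ev (subCoeff N m) b)) k l *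
        ((I * l) ^ m * b l) =
        ∑ l ∈ s, cf (ev (topCoeff N) b) (k - l) * ((I * l) ^ (m + 3) * a l) +
        ∑ l ∈ s, cf (ev (subCoeff N m) b) (k - l) * ((I * l) ^ (m + 2) * a l) := by
      rw [tsum_eq_sum (s := s), ← Finset.sum_add_distrib]
      · refine Finset.sum_congr rfl fun l hl => ?_
        rw [show b l = a l from if_pos hl, lsym_mul_eq]
      · intro l hl
        rw [show b l = 0 from if_neg hl, mul_zero, mul_zero]
    rw [← hA₁.cf_ev_iterate_tder hN, hev, cf_add (continuous_finsetSum _ hcj) hEc,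
      cf_finset_sum _ hcj, Finset.sum_congr rfl fun j hj =>
        cf_mul_jet_restr (hcc j (Finset.mem_range.1 hj)) s a (m + 3 - j) k,
      hsum]
    simp only [Finset.sum_range_succ, Finset.sum_range_zero, zero_add]
    rw [show c 0 = topCoeff N from hc0, show c 1 = subCoeff N m from hc1, Nat.sub_zero, show m + 3 - 1 = m + 2 by omega]
    have hlow : ∀ (j : ℕ) (B : ℝ), 0 ≤ B → 2 ≤ j → j < m →
        (∀ n, ‖cf (ev (c j) b) n‖ ≤ B * (brk n ^ 3)⁻¹) →
        ‖∑ l ∈ s, cf (ev (c j) b) (k - l) * ((I * l) ^ (m + 3 - j) * a l)‖ ≤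
          B * |(k : ℝ)| * kconv (fun l => ‖W l‖) k := by
      intro j B hB0 hj hjm hB
      calc _ ≤ ∑ l ∈ s, B * |(k : ℝ)| * (ker (k - l) * ‖W l‖) :=
            norm_sum_le_of_le _ fun l _ => norm_low_term_le hB hk l hj hjm (a l)
        _ = B * |(k : ℝ)| * ∑ l ∈ s, ker (k - l) * ‖W l‖ := by rw [Finset.mul_sum]
        _ ≤ _ := mul_le_mul_of_nonneg_left (hker.sum_le_tsum s fun l _ =>
            mul_nonneg (ker_pos _).le (norm_nonneg _)) (by positivity)
    have h2 := hlow 2 B₂ hB₂0 le_rfl (by omega) (hB₂ b (hr s |>.mono (by omega)))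
    have h3 := hlow 3 B₃ hB₃0 (by omega) (by omega) (hB₃ b (hr s |>.mono (by omega)))
    have h4 := hlow 4 B₄ hB₄0 (by omega) (by omega) (hB₄ b (hr s |>.mono (by omega)))
    set S₀ := ∑ l ∈ s, cf (ev (topCoeff N) b) (k - l) * ((I * l) ^ (m + 3) * a l)
    set S₁ := ∑ l ∈ s, cf (ev (subCoeff N m) b) (k - l) * ((I * l) ^ (m + 2) * a l)
    set S₂ := ∑ l ∈ s, cf (ev (c 2) b) (k - l) * ((I * l) ^ (m + 3 - 2) * a l)
    set S₃ := ∑ l ∈ s, cf (ev (c 3) b) (k - l) * ((I * l) ^ (m + 3 - 3) * a l)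
    set S₄ := ∑ l ∈ s, cf (ev (c 4) b) (k - l) * ((I * l) ^ (m + 3 - 4) * a l)
    calc ‖S₀ + S₁ + S₂ + S₃ + S₄ + cf (ev E b) k - (S₀ + S₁)‖
        = ‖S₂ + S₃ + S₄ + cf (ev E b) k‖ := by congr 1; ring
      _ ≤ ‖S₂‖ + ‖S₃‖ + ‖S₄‖ + ‖cf (ev E b) k‖ := norm_add₄_le
      _ ≤ _ := by linarith
  have hlsym : Tendsto (fun s : Finset ℤ =>
      ∑' l : ℤ, lsym (cf (ev (topCoeff N) (restr s a))) (cf (ev (subCoeff N m) (restr s a))) k l *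
          ((I * l) ^ m * restr s a l)) atTop
      (𝓝 (∑' l : ℤ, lsym (cf (ev (topCoeff N) a)) (cf (ev (subCoeff N m) a)) k l * W l)) := by
    refine tendsto_tsum_of_dominated_convergence
      (bound := fun l => 2 * (D₀ + D₁) * |(k : ℝ)| ^ 3 * (ker (k - l) * ‖W l‖))
      (hker.mul_left _) (fun l => ?_) (Eventually.of_forall fun s l => ?_)
    · refine Tendsto.mul ?_ ?_
      · unfold lsym
        exact ((ha.mono (by omega : 3 ≤ 11)).tendsto_cf_ev (topCoeff_mem hN) _ |>.mul_const _).sub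
          ((ha.mono (by omega : 4 ≤ 11)).tendsto_cf_ev (subCoeff_mem hN m) _ |>.mul_const _)
      · refine tendsto_const_nhds.congr' ?_
        filter_upwards [eventually_ge_atTop {l}] with s hl
        rw [restr, if_pos (hl (Finset.mem_singleton_self l))]
    · have e0 := hD₀ _ ((hr s).mono (by omega))
      have e1 := hD₁ _ ((hr s).mono (by omega))
      have hl := norm_lsym_le_of_decay (C₀ := D₀ + D₁)
        (fun n => (e0 n).trans (mul_le_mul_of_nonneg_right (by linarith)
          (inv_nonneg.2 (pow_nonneg (brk_pos n).le 5))))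
        (fun n => (e1 n).trans (mul_le_mul_of_nonneg_right (by linarith)
          (inv_nonneg.2 (pow_nonneg (brk_pos n).le 5)))) hk l
      rw [norm_mul, ← mul_assoc]
      refine mul_le_mul hl ?_ (norm_nonneg _) (by have := ker_pos (k - l); positivity)
      rw [hW]
      simp only [norm_mul]
      exact mul_le_mul_of_nonneg_left (norm_restr_le s a l) (norm_nonneg _)
  refine le_of_tendsto_of_tendsto'
    (((ha.mono (by omega : 3 ≤ 11)).tendsto_cf_ev hN k).const_mul ((I * k) ^ m) |>.sub hlsym).norm
    (tendsto_const_nhds.add (ha'.tendsto_cf_ev hE k).norm) hfin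

end paralinearization
end FifthOrderStmt4

namespace FifthOrderStmt4

section timeDependence
open Complex ComplexConjugate Filter Topology MvPolynomial MeasureTheory

variable {r : ℕ} {C T : ℝ} {a a' : ℝ → ℤ → ℂ} {Q : DPoly} {S : Set ℝ}

lemma brk_pow_mul_le_ker {z : ℂ} {k : ℤ} (h : ‖z‖ ≤ C * (brk k ^ (r + 2))⁻¹) :
    brk k ^ r * ‖z‖ ≤ C * ker k := by
  have h1 := pow_pos (brk_pos k) r
  have h2 := brk_pos k
  calc brk k ^ r * ‖z‖ ≤ brk k ^ r * (C * (brk k ^ (r + 2))⁻¹) :=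
        mul_le_mul_of_nonneg_left h h1.le
    _ = C * ker k := by
        unfold ker
        field_simp
        ring

lemma continuousOn_jet (hc : ∀ k, ContinuousOn (fun t => a t k) S)
    (hb : ∀ t ∈ S, ∀ k, ‖a t k‖ ≤ C * (brk k ^ (r + 2))⁻¹) {j : ℕ} (hj : j ≤ r) (x : ℝ) :
    ContinuousOn (fun t => jet (a t) j x) S :=
  continuousOn_tsum (u := fun k => C * ker k)
    (fun k => (continuousOn_const.mul (hc k)).mul continuousOn_const) (summable_ker.mul_left C)
    (fun k t ht => (norm_jetTerm_le hj (a t) x k).trans (brk_pow_mul_le_ker (hb t ht k)))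

lemma continuousOn_ev (hc : ∀ k, ContinuousOn (fun t => a t k) S)
    (hb : ∀ t ∈ S, ∀ k, ‖a t k‖ ≤ C * (brk k ^ (r + 2))⁻¹) (hQ : Q ∈ ord r) (x : ℝ) :
    ContinuousOn (fun t => ev Q (a t) x) S := by
  refine ord_induction (P := fun Q => ContinuousOn (fun t => ev Q (a t) x) S)
    (fun i hi => ?_) (fun y => ?_) (fun p q _ _ h1 h2 => ?_) (fun p q _ _ h1 h2 => ?_) hQ
  · simp only [ev_X]
    exact continuousOn_jet hc hb hi x
  · simp only [ev_C]
    exact continuousOn_const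
  · simp only [ev_add]; exact h1.add h2
  · simp only [ev_mul]; exact h1.mul h2

lemma continuousOn_cf_ev (hc : ∀ k, ContinuousOn (fun t => a t k) S)
    (hb : ∀ t ∈ S, ∀ k, ‖a t k‖ ≤ C * (brk k ^ (r + 2))⁻¹) (hQ : Q ∈ ord r) (n : ℤ) :
    ContinuousOn (fun t => cf (ev Q (a t)) n) S := by
  intro t₀ ht₀
  obtain ⟨B, hB⟩ := exists_norm_ev_le hQ (C * kerSum)
  refine tendsto_cf (B := B) ?_ ?_ (fun x => continuousOn_ev hc hb hQ x t₀ ht₀) n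
  · filter_upwards [self_mem_nhdsWithin] with t ht
    exact (WBdd.of_decay (hb t ht)).continuous_ev hQ
  · filter_upwards [self_mem_nhdsWithin] with t ht
    exact hB _ (WBdd.of_decay (hb t ht))

variable (ho : IsOpen S) (hcon : IsPreconnected S)
  (hd : ∀ t ∈ S, ∀ k, HasDerivAt (fun t => a t k) (a' t k) t)
  (hb : ∀ t ∈ S, ∀ k, ‖a t k‖ ≤ C * (brk k ^ (r + 2))⁻¹)
  (hb' : ∀ t ∈ S, ∀ k, ‖a' t k‖ ≤ C * (brk k ^ (r + 2))⁻¹)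
include ho hcon hd hb hb'

lemma hasDerivAt_jet_time {j : ℕ} (hj : j ≤ r) (x : ℝ) {t : ℝ} (ht : t ∈ S) :
    HasDerivAt (fun t => jet (a t) j x) (jet (a' t) j x) t :=
  hasDerivAt_tsum_of_isPreconnected (u := fun k => C * ker k) (t := S) (y₀ := t)
    (g := fun k t => jetTerm (a t) j x k) (g' := fun k t => jetTerm (a' t) j x k)
    (summable_ker.mul_left C) ho hcon
    (fun k t ht => ((hd t ht k).const_mul ((I * (k : ℂ)) ^ j)).mul_const (exp (I * k * x)))
    (fun k t ht => (norm_jetTerm_le hj (a' t) x k).trans (brk_pow_mul_le_ker (hb' t ht k)))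
    ht ((WBdd.of_decay (hb t ht)).summable_jetTerm hj x) ht

lemma exists_hasDerivAt_ev (hQ : Q ∈ ord r) :
    ∃ (D : ℝ → ℝ → ℂ) (B : ℝ), ∀ t ∈ S,
      (∀ x, HasDerivAt (fun t => ev Q (a t) x) (D t x) t) ∧ (∀ x, ‖D t x‖ ≤ B) ∧
      Continuous (D t) := by
  refine ord_induction (P := fun Q => ∃ (D : ℝ → ℝ → ℂ) (B : ℝ), ∀ t ∈ S,
      (∀ x, HasDerivAt (fun t => ev Q (a t) x) (D t x) t) ∧ (∀ x, ‖D t x‖ ≤ B) ∧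
      Continuous (D t))
    (fun i hi => ⟨fun t => jet (a' t) i, C * kerSum, fun t ht => ⟨fun x => ?_, fun x => ?_, ?_⟩⟩)
    (fun y => ⟨fun _ _ => 0, 0, fun t ht => ⟨fun x => ?_, fun x => ?_, ?_⟩⟩) ?_ ?_ hQ
  · simp only [ev_X]
    exact hasDerivAt_jet_time ho hcon hd hb hb' hi x ht
  · exact (WBdd.of_decay (hb' t ht)).norm_jet_le hi x
  · exact (WBdd.of_decay (hb' t ht)).continuous_jet hi
  · simp only [ev_C]
    exact hasDerivAt_const _ _
  · simp
  · exact continuous_const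
  · rintro p q - - ⟨D, B, h⟩ ⟨D', B', h'⟩
    refine ⟨fun t x => D t x + D' t x, B + B', fun t ht => ⟨fun x => ?_, fun x => ?_, ?_⟩⟩
    · simp only [ev_add]; exact ((h t ht).1 x).add ((h' t ht).1 x)
    · exact (norm_add_le _ _).trans (add_le_add ((h t ht).2.1 x) ((h' t ht).2.1 x))
    · exact (h t ht).2.2.add (h' t ht).2.2
  · rintro p q hp hq ⟨D, B, h⟩ ⟨D', B', h'⟩
    obtain ⟨Bp, hBp⟩ := exists_norm_ev_le hp (C * kerSum)
    obtain ⟨Bq, hBq⟩ := exists_norm_ev_le hq (C * kerSum)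
    refine ⟨fun t x => D t x * ev q (a t) x + ev p (a t) x * D' t x, B * Bq + Bp * B',
      fun t ht => ?_⟩
    have hw := WBdd.of_decay (hb t ht)
    refine ⟨fun x => ?_, fun x => ?_, ?_⟩
    · simp only [ev_mul]; exact ((h t ht).1 x).mul ((h' t ht).1 x)
    · have e1 := (h t ht).2.1 x
      have e2 := (h' t ht).2.1 x
      have e3 := hBp _ hw x
      have e4 := hBq _ hw x
      refine (norm_add_le _ _).trans (add_le_add ?_ ?_)
      · rw [norm_mul]
        exact mul_le_mul e1 e4 (norm_nonneg _) ((norm_nonneg _).trans e1)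
      · rw [norm_mul]
        exact mul_le_mul e3 e2 (norm_nonneg _) ((norm_nonneg _).trans e3)
    · exact ((h t ht).2.2.mul (hw.continuous_ev hq)).add ((hw.continuous_ev hp).mul (h' t ht).2.2)

theorem exists_hasDerivAt_cf_ev (hQ : Q ∈ ord r) :
    ∃ (β : ℝ → ℤ → ℂ) (B : ℝ), ∀ t ∈ S, ∀ n,
      HasDerivAt (fun t => cf (ev Q (a t)) n) (β t n) t ∧ ‖β t n‖ ≤ B := by
  obtain ⟨D, B, h⟩ := exists_hasDerivAt_ev ho hcon hd hb hb' hQ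
  refine ⟨fun t n => cf (D t) n, B, fun t ht n => ⟨?_, norm_cf_le (h t ht).2.1 n⟩⟩
  have hcts : ∀ t ∈ S, Continuous fun x : ℝ => ev Q (a t) x * exp (-I * n * x) := fun t ht =>
    ((WBdd.of_decay (hb t ht)).continuous_ev hQ).mul (continuous_exp_neg_I_mul n)
  have := (intervalIntegral.hasDerivAt_integral_of_dominated_loc_of_deriv_le (μ := volume)
    (a := 0) (b := 2 * Real.pi) (s := S) (x₀ := t)
    (F := fun t x => ev Q (a t) x * exp (-I * n * x))
    (F' := fun t x => D t x * exp (-I * n * x)) (bound := fun _ => B) (ho.mem_nhds ht)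
    (by
      filter_upwards [ho.mem_nhds ht] with t ht
      exact (hcts t ht).aestronglyMeasurable)
    ((hcts t ht).intervalIntegrable _ _)
    ((h t ht).2.2.mul (continuous_exp_neg_I_mul n)).aestronglyMeasurable
    (Eventually.of_forall fun x _ t ht => by
      rw [norm_mul, norm_exp_neg_I_mul, mul_one]
      exact (h t ht).2.1 x)
    (continuous_const.intervalIntegrable _ _)
    (Eventually.of_forall fun x _ t ht => ((h t ht).1 x).mul_const _)).2
  exact this.const_mul _

end timeDependence
end FifthOrderStmt4

namespace FifthOrderStmt4

section regularization
open Complex ComplexConjugate Filter Topology MvPolynomial MeasureTheory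

lemma wBdd_of_sum_sq {m : ℕ} {D C : ℝ} {y : ℤ → ℂ} (h0 : ‖y 0‖ ≤ D)
    (h : ∀ K, ∑ k ∈ freq K, (|(k : ℝ)| ^ (m + 1) * ‖y k‖) ^ 2 ≤ C) :
    WBdd m (D + (kerSum + 4 ^ (m + 1) * C)) y := by
  have hterm : ∀ k : ℤ, k ≠ 0 → brk k ^ m * ‖y k‖ ≤
      ker k + 4 ^ (m + 1) * (|(k : ℝ)| ^ (m + 1) * ‖y k‖) ^ 2 := by
    intro k hk
    have hk1 : (1 : ℝ) ≤ |(k : ℝ)| := by exact_mod_cast Int.one_le_abs hk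
    have hb := brk_pos k
    have h1 : brk k ^ (m + 1) ≤ 2 ^ (m + 1) * |(k : ℝ)| ^ (m + 1) := by
      rw [← mul_pow]
      exact pow_le_pow_left₀ hb.le (by unfold brk; linarith) _
    have h2 : brk k ^ m * ‖y k‖ = (brk k)⁻¹ * (brk k ^ (m + 1) * ‖y k‖) := by
      field_simp
      ring
    have h3 : brk k ^ (m + 1) * ‖y k‖ ≤ 2 ^ (m + 1) * (|(k : ℝ)| ^ (m + 1) * ‖y k‖) := by
      rw [← mul_assoc]
      exact mul_le_mul_of_nonneg_right h1 (norm_nonneg _)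
    have h4 : (2 ^ (m + 1) * (|(k : ℝ)| ^ (m + 1) * ‖y k‖)) ^ 2 =
        4 ^ (m + 1) * (|(k : ℝ)| ^ (m + 1) * ‖y k‖) ^ 2 := by
      rw [mul_pow, ← pow_mul, mul_comm (m + 1) 2, pow_mul]; norm_num
    have h5 : ker k = (brk k)⁻¹ ^ 2 := by rw [ker, inv_pow]
    rw [h2, h5, ← h4]
    have h6 : (brk k)⁻¹ * (brk k ^ (m + 1) * ‖y k‖) ≤
        (brk k)⁻¹ * (2 ^ (m + 1) * (|(k : ℝ)| ^ (m + 1) * ‖y k‖)) :=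
      mul_le_mul_of_nonneg_left h3 (inv_pos.2 hb).le
    nlinarith [sq_nonneg ((brk k)⁻¹ - 2 ^ (m + 1) * (|(k : ℝ)| ^ (m + 1) * ‖y k‖)),
      sq_nonneg ((brk k)⁻¹), sq_nonneg (2 ^ (m + 1) * (|(k : ℝ)| ^ (m + 1) * ‖y k‖))]
  intro s
  obtain ⟨K, hK⟩ := exists_subset_freq s
  calc ∑ k ∈ s, brk k ^ m * ‖y k‖ ≤ ∑ k ∈ insert 0 (s.erase 0), brk k ^ m * ‖y k‖ :=
        Finset.sum_le_sum_of_subset_of_nonneg (fun k hk => by by_cases h : k = 0 <;> simp [h, hk])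
          fun k _ _ => weighted_nonneg m y k
    _ = ‖y 0‖ + ∑ k ∈ s.erase 0, brk k ^ m * ‖y k‖ := by
        rw [Finset.sum_insert (Finset.notMem_erase 0 s)]
        simp [brk]
    _ ≤ D + ∑ k ∈ s.erase 0, (ker k + 4 ^ (m + 1) * (|(k : ℝ)| ^ (m + 1) * ‖y k‖) ^ 2) :=
        add_le_add h0 (Finset.sum_le_sum fun k hk => hterm k (Finset.ne_of_mem_erase hk))
    _ ≤ D + (kerSum + 4 ^ (m + 1) * C) := by
        rw [Finset.sum_add_distrib, ← Finset.mul_sum]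
        refine add_le_add_right (add_le_add ?_ ?_) _
        · exact summable_ker.sum_le_tsum _ fun k _ => (ker_pos k).le
        · refine mul_le_mul_of_nonneg_left ((Finset.sum_le_sum_of_subset_of_nonneg hK
            fun k _ _ => sq_nonneg _).trans (h K)) (by positivity)

lemma exists_abs_disp_le (γ0 γ1 γ2 : ℝ) :
    ∃ D, 0 ≤ D ∧ ∀ k : ℤ, |disp γ0 γ1 γ2 k| ≤ D * brk k ^ 5 := by
  refine ⟨|γ0| + |γ1| + |γ2|, by positivity, fun k => ?_⟩
  have h1 := one_le_brk k
  have h5 : |(k : ℝ)| ^ 5 ≤ brk k ^ 5 := pow_le_pow_left₀ (abs_nonneg _) (abs_le_brk k) 5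
  have h3 : |(k : ℝ)| ^ 3 ≤ brk k ^ 5 :=
    (pow_le_pow_left₀ (abs_nonneg _) (abs_le_brk k) 3).trans (pow_le_pow_right₀ h1 (by norm_num))
  have h2 : |(k : ℝ)| ≤ brk k ^ 5 :=
    (abs_le_brk k).trans (le_self_pow₀ h1 (by norm_num))
  have e0 := mul_le_mul_of_nonneg_left h5 (abs_nonneg γ0)
  have e1 := mul_le_mul_of_nonneg_left h3 (abs_nonneg γ1)
  have e2 := mul_le_mul_of_nonneg_left h2 (abs_nonneg γ2)
  calc |disp γ0 γ1 γ2 k| ≤ |γ0 * (k : ℝ) ^ 5| + |γ1 * (k : ℝ) ^ 3| + |γ2 * (k : ℝ)| := by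
        unfold disp
        exact (abs_add_le _ _).trans (add_le_add_left (abs_sub _ _) _)
    _ = |γ0| * |(k : ℝ)| ^ 5 + |γ1| * |(k : ℝ)| ^ 3 + |γ2| * |(k : ℝ)| := by
        simp only [abs_mul, abs_pow]
    _ ≤ _ := by linarith

lemma inv_pow_brk_le {p q : ℕ} (h : p ≤ q) (k : ℤ) : (brk k ^ q)⁻¹ ≤ (brk k ^ p)⁻¹ :=
  inv_anti₀ (pow_pos (brk_pos k) p) (pow_le_pow_right₀ (one_le_brk k) h)

lemma decay_mono {C : ℝ} {p q : ℕ} (h : p ≤ q) {y : ℤ → ℂ}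
    (hy : ∀ k, ‖y k‖ ≤ C * (brk k ^ q)⁻¹) (k : ℤ) : ‖y k‖ ≤ C * (brk k ^ p)⁻¹ := by
  have hC : 0 ≤ C := by
    have := (norm_nonneg _).trans (hy 0)
    simpa [brk] using this
  exact (hy k).trans (mul_le_mul_of_nonneg_left (inv_pow_brk_le h k) hC)

lemma decay_const_mono {C C' : ℝ} (h : C ≤ C') {p : ℕ} {z : ℂ} {k : ℤ}
    (hz : ‖z‖ ≤ C * (brk k ^ p)⁻¹) : ‖z‖ ≤ C' * (brk k ^ p)⁻¹ :=
  hz.trans (mul_le_mul_of_nonneg_right h (inv_nonneg.2 (pow_nonneg (brk_pos k).le p)))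

lemma norm_le_of_sum_sq_le {C : ℝ} (hC : 0 ≤ C) {p : ℕ} {y : ℤ → ℂ}
    (h : ∀ s : Finset ℤ, ∑ k ∈ s, (brk k ^ p * ‖y k‖) ^ 2 ≤ C ^ 2) (k : ℤ) :
    ‖y k‖ ≤ C * (brk k ^ p)⁻¹ := by
  have h1 := h {k}
  rw [Finset.sum_singleton] at h1
  have h2 := abs_le_of_sq_le_sq h1 hC
  have hb := pow_pos (brk_pos k) p
  rw [← div_eq_mul_inv, le_div_iff₀ hb, mul_comm]
  exact (le_abs_self _).trans h2

/-- A Fourier side description of a solution which is uniformly parabolic forward in time. -/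
structure IsFlow (γ0 γ1 γ2 : ℝ) (N : DPoly) (c C T : ℝ) (a : ℝ → ℤ → ℂ) : Prop where
  cont : ∀ k, ContinuousOn (fun t => a t k) (Set.Icc 0 T)
  sum_sq : ∀ t ∈ Set.Icc 0 T, ∀ s : Finset ℤ, ∑ k ∈ s, (brk k ^ 13 * ‖a t k‖) ^ 2 ≤ C ^ 2
  deriv : ∀ t ∈ Set.Ioo 0 T, ∀ k, HasDerivAt (fun t => a t k)
    (-(I * disp γ0 γ1 γ2 k * a t k) + cf (ev N (a t)) k) t
  herm : ∀ t ∈ Set.Icc 0 T, ∀ k, a t (-k) = conj (a t k)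
  mean : ∀ t ∈ Set.Icc 0 T, (cf (ev (pderiv 2 N) (a t)) 0).re ≤ -c

namespace IsFlow
variable {γ0 γ1 γ2 : ℝ} {N : DPoly} {c C T : ℝ} {a : ℝ → ℤ → ℂ}

lemma mono (h : IsFlow γ0 γ1 γ2 N c C T a) {T' : ℝ} (hT : T' ≤ T) :
    IsFlow γ0 γ1 γ2 N c C T' a where
  cont k := (h.cont k).mono (Set.Icc_subset_Icc_right hT)
  sum_sq t ht := h.sum_sq t (Set.Icc_subset_Icc_right hT ht)
  deriv t ht := h.deriv t (Set.Ioo_subset_Ioo_right hT ht)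
  herm t ht := h.herm t (Set.Icc_subset_Icc_right hT ht)
  mean t ht := h.mean t (Set.Icc_subset_Icc_right hT ht)

variable (h : IsFlow γ0 γ1 γ2 N c C T a) (hC : 0 ≤ C)
include h hC

lemma decay {t : ℝ} (ht : t ∈ Set.Icc 0 T) (k : ℤ) : ‖a t k‖ ≤ C * (brk k ^ 13)⁻¹ :=
  norm_le_of_sum_sq_le hC (h.sum_sq t ht) k

lemma exists_deriv_decay (hN : N ∈ ord 3) : ∃ C', 0 ≤ C' ∧ ∀ t ∈ Set.Icc 0 T, ∀ k,
    ‖-(I * disp γ0 γ1 γ2 k * a t k) + cf (ev N (a t)) k‖ ≤ C' * (brk k ^ 8)⁻¹ := by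
  obtain ⟨D, hD0, hD⟩ := exists_abs_disp_le γ0 γ1 γ2
  obtain ⟨B, hB0, hB⟩ := exists_cf_decay hN 8 (C * kerSum)
  refine ⟨D * C + B, by positivity, fun t ht k => ?_⟩
  have hw : WBdd 11 (C * kerSum) (a t) := WBdd.of_decay (h.decay hC ht)
  have hb := brk_pos k
  refine (norm_add_le _ _).trans ?_
  rw [add_mul]
  refine add_le_add ?_ (hB _ hw k)
  rw [norm_neg, norm_mul, norm_mul, norm_I, one_mul, norm_real, Real.norm_eq_abs]
  calc |disp γ0 γ1 γ2 k| * ‖a t k‖ ≤ (D * brk k ^ 5) * (C * (brk k ^ 13)⁻¹) :=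
        mul_le_mul (hD k) (h.decay hC ht k) (norm_nonneg _) (by positivity)
    _ = D * C * (brk k ^ 8)⁻¹ := by field_simp

end IsFlow

/-- One step of the regularization. -/
theorem IsFlow.step {γ0 γ1 γ2 : ℝ} (hγ : γ0 ≠ 0) {N : DPoly} (hN : N ∈ ord 3) {c C T : ℝ}
    {a : ℝ → ℤ → ℂ} (hC : 0 ≤ C) (hc : 0 < c) (hT : 0 < T) (h : IsFlow γ0 γ1 γ2 N c C T a)
    {m : ℕ} (hm : 9 ≤ m) {C₁ : ℝ}
    (hlow : ∀ t ∈ Set.Icc 0 T, ∀ K, ∑ k ∈ freq K, (|(k : ℝ)| ^ (m - 1) * ‖a t k‖) ^ 2 ≤ C₁)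
    (hint : ∀ K, ∫ t in (0)..T, ∑ k ∈ freq K, (|(k : ℝ)| ^ m * ‖a t k‖) ^ 2 ≤ C₁) :
    ∃ T' ∈ Set.Ioo 0 T, ∃ C₂,
      (∀ t ∈ Set.Icc 0 T', ∀ K, ∑ k ∈ freq K, (|(k : ℝ)| ^ m * ‖a t k‖) ^ 2 ≤ C₂) ∧
      ∀ K, ∫ t in (0)..T', ∑ k ∈ freq K, (|(k : ℝ)| ^ (m + 1) * ‖a t k‖) ^ 2 ≤ C₂ := by
  set A := C * kerSum with hA
  have hw : ∀ t ∈ Set.Icc 0 T, WBdd 11 A (a t) := fun t ht => WBdd.of_decay (h.decay hC ht)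
  obtain ⟨E, hE, Cr, hCr0, hrem⟩ := exists_remainder_bound hN hm A
  obtain ⟨D₀, hD₀0, hD₀⟩ := exists_cf_decay (topCoeff_mem hN) 5 A
  obtain ⟨D₁, hD₁0, hD₁⟩ := exists_cf_decay (subCoeff_mem hN m) 5 A
  obtain ⟨C', hC'0, hC'⟩ := h.exists_deriv_decay hC hN
  have hIoo : Set.Ioo 0 T ⊆ Set.Icc 0 T := Set.Ioo_subset_Icc_self
  have hb6 : ∀ t ∈ Set.Ioo 0 T, ∀ k, ‖a t k‖ ≤ max C C' * (brk k ^ (4 + 2))⁻¹ := fun t ht k =>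
    decay_const_mono (le_max_left _ _) (decay_mono (by norm_num) (h.decay hC (hIoo ht)) k)
  have hb6' : ∀ t ∈ Set.Ioo 0 T, ∀ k, ‖-(I * disp γ0 γ1 γ2 k * a t k) + cf (ev N (a t)) k‖ ≤
      max C C' * (brk k ^ (4 + 2))⁻¹ := fun t ht k =>
    decay_const_mono (le_max_right _ _) (decay_mono (by norm_num) (hC' t (hIoo ht)) k)
  obtain ⟨β₀, B₀, hβ₀⟩ := exists_hasDerivAt_cf_ev isOpen_Ioo isPreconnected_Ioo h.deriv hb6 hb6'
    (ord_mono (by norm_num) (topCoeff_mem hN))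
  obtain ⟨β₁, B₁, hβ₁⟩ := exists_hasDerivAt_cf_ev isOpen_Ioo isPreconnected_Ioo h.deriv hb6 hb6'
    (subCoeff_mem hN m)
  set A' := C + (kerSum + 4 ^ (m - 2 + 1) * C₁) with hA'
  have hw' : ∀ t ∈ Set.Icc 0 T, WBdd (m - 2) A' (a t) := fun t ht => by
    refine wBdd_of_sum_sq ?_ ?_
    · simpa [brk] using h.decay hC ht 0
    · rw [show m - 2 + 1 = m - 1 by omega]; exact hlow t ht
  obtain ⟨BE, hBE⟩ := exists_norm_ev_le hE A'
  obtain ⟨C₀, g₁, g₂, g₃, g₄, g₅, g₆⟩ : ∃ C₀, D₀ ≤ C₀ ∧ D₁ ≤ C₀ ∧ B₀ ≤ C₀ ∧ B₁ ≤ C₀ ∧ Cr ≤ C₀ ∧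
      BE ^ 2 ≤ C₀ := by
    refine ⟨D₀ + D₁ + |B₀| + |B₁| + Cr + BE ^ 2, ?_, ?_, ?_, ?_, ?_, ?_⟩ <;>
    linarith [abs_nonneg B₀, abs_nonneg B₁, sq_nonneg BE, le_abs_self B₀, le_abs_self B₁]
  set W : ℝ → ℤ → ℂ := fun t k => (I * k) ^ m * a t k with hW
  have hWn : ∀ t k, ‖W t k‖ = |(k : ℝ)| ^ m * ‖a t k‖ := fun t k => norm_I_mul_pow k m _
  set α₀ : ℝ → ℤ → ℂ := fun t => cf (ev (topCoeff N) (a t)) with hα₀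
  set α₁ : ℝ → ℤ → ℂ := fun t => cf (ev (subCoeff N m) (a t)) with hα₁
  set H : ℝ → ℤ → ℂ := fun t k => (I * k) ^ m * cf (ev N (a t)) k with hH
  have hb0 : ∀ t ∈ Set.Icc 0 T, ∀ n, ‖α₀ t n‖ ≤ C₀ * (brk n ^ 5)⁻¹ := fun t ht n =>
    decay_const_mono g₁ (hD₀ _ ((hw t ht).mono (by norm_num)) n)
  have hb1 : ∀ t ∈ Set.Icc 0 T, ∀ n, ‖α₁ t n‖ ≤ C₀ * (brk n ^ 5)⁻¹ := fun t ht n =>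
    decay_const_mono g₂ (hD₁ _ ((hw t ht).mono (by norm_num)) n)
  have hC11 : ∀ Q ∈ ord 11, ∀ n, ContinuousOn (fun t => cf (ev Q (a t)) n) (Set.Icc 0 T) :=
    fun Q hQ n => continuousOn_cf_ev (r := 11) h.cont (fun t ht => h.decay hC ht) hQ n
  have key := smoothing_step hγ γ1 γ2 (c := c) (C₀ := C₀) (C₁ := C₁) hc hT α₀ α₁ β₀ β₁ W H
    (fun t k => H t k - ∑' l, lsym (α₀ t) (α₁ t) k l * W t l)
    (fun t k => (I * k) ^ m * (-(I * disp γ0 γ1 γ2 k * a t k) + cf (ev N (a t)) k))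
    (fun t k => ‖cf (ev E (a t)) k‖)
    (hC11 _ (ord_mono (by norm_num) (topCoeff_mem hN)))
    (hC11 _ (ord_mono (by norm_num) (subCoeff_mem hN m)))
    (fun k => continuousOn_const.mul (h.cont k))
    (fun t ht n => (hβ₀ t ht n).1) (fun t ht n => (hβ₁ t ht n).1)
    (fun t ht n => (h.deriv t ht n).const_mul _)
    (fun t ht k => by rw [hW, hH]; ring) hb0 hb1
    (fun t => by rw [hW]; simp only [Int.cast_zero, mul_zero]; rw [zero_pow (by omega), zero_mul])
    (fun t ht M hM => by
      have ht' := hIoo ht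
      have hsumm : Summable fun k => ‖W t k‖ ^ 2 := summable_of_sum_le (fun _ => sq_nonneg _) hM
      refine ⟨hb0 t ht', hb1 t ht', fun n => ?_, ?_, fun n => (hβ₀ t ht n).2.trans g₃,
        fun n => (hβ₁ t ht n).2.trans g₄, ?_, hsumm, hsumm.tsum_le_of_sum_le hM, fun k => ?_,
        fun k hk => ?_, fun k => norm_nonneg _, fun s => ?_⟩
      · exact cf_neg_of_conj (conj_ev (h.herm t ht') _) n
      · have h2 : pderiv 2 N ∈ ord 3 := pderiv_mem_ord 2 hN
        have h3 : pderiv 3 N ∈ ord 3 := pderiv_mem_ord 3 hN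
        have e1 : α₁ t 0 = cf (ev (pderiv 2 N) (a t)) 0 := by
          have e2 : ev (subCoeff N m) (a t) = fun x => ev (pderiv 2 N) (a t) x +
              (m : ℂ) * ev (tder (pderiv 3 N)) (a t) x := by
            ext x
            rw [subCoeff, ev_add, ev_mul]
            congr 2
            exact map_natCast _ m
          have c3 := (hw t ht').continuous_ev (ord_mono (by norm_num) (tder_mem_ord h3))
          rw [hα₁]
          simp only
          have c4 : Continuous fun x => (m : ℂ) * ev (tder (pderiv 3 N)) (a t) x := by fun_prop
          rw [e2, cf_add ((hw t ht').continuous_ev (ord_mono (by norm_num) h2)) c4, cf_const_mul,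
            ((hw t ht').mono (by norm_num : 3 + 1 ≤ 11)).cf_ev_tder h3]
          simp
        rw [e1]
        exact h.mean t ht'
      · rw [hW]; simp only [Int.cast_zero, mul_zero]; rw [zero_pow (by omega), zero_mul]
      · ring
      · refine (hrem (a t) A' (hw t ht') (hw' t ht') hsumm k hk).trans ?_
        refine add_le_add_left ?_ _
        exact mul_le_mul_of_nonneg_right (mul_le_mul_of_nonneg_right g₅ (abs_nonneg _))
          (kconv_nonneg (fun _ => norm_nonneg _) k)
      · exact (sum_sq_cf_le ((hw' t ht').continuous_ev hE) (hBE _ (hw' t ht')) s).trans g₆)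
    (fun t ht K => by
      refine le_trans (le_of_eq (Finset.sum_congr rfl fun k hk => ?_)) (hlow t ht K)
      have hk0 : |(k : ℝ)| ≠ 0 := abs_ne_zero.2 (Int.cast_ne_zero.2 (mem_freq.1 hk).1)
      rw [hWn]
      congr 1
      obtain ⟨m', rfl⟩ : ∃ m', m = m' + 1 := ⟨m - 1, by omega⟩
      rw [Nat.add_sub_cancel, pow_succ]
      field_simp)
    (fun K => by simpa only [hWn] using hint K)
  obtain ⟨T', hT', C₂, k1, k2⟩ := key
  refine ⟨T', hT', C₂, fun t ht K => ?_, fun K => ?_⟩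
  · simpa only [hWn] using k1 t ht K
  · simpa only [hWn, ← mul_assoc, ← pow_succ'] using k2 K

theorem IsFlow.exists_initial_bound {γ0 γ1 γ2 : ℝ} (hγ : γ0 ≠ 0) {N : DPoly} (hN : N ∈ ord 3)
    {c C T : ℝ} {a : ℝ → ℤ → ℂ} (hC : 0 ≤ C) (hc : 0 < c) (hT : 0 < T)
    (h : IsFlow γ0 γ1 γ2 N c C T a) (m : ℕ) : ∃ A, WBdd m A (a 0) := by
  have key : ∀ n : ℕ, ∃ T' ∈ Set.Ioc 0 T, ∃ C₁,
      (∀ t ∈ Set.Icc 0 T', ∀ K, ∑ k ∈ freq K, (|(k : ℝ)| ^ (n + 12) * ‖a t k‖) ^ 2 ≤ C₁) ∧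
      ∀ K, ∫ t in (0)..T', ∑ k ∈ freq K, (|(k : ℝ)| ^ (n + 13) * ‖a t k‖) ^ 2 ≤ C₁ := by
    intro n
    induction n with
    | zero =>
      have hbd : ∀ j ≤ 13, ∀ t ∈ Set.Icc 0 T, ∀ K,
          ∑ k ∈ freq K, (|(k : ℝ)| ^ j * ‖a t k‖) ^ 2 ≤ C ^ 2 := fun j hj t ht K =>
        (Finset.sum_le_sum fun k _ => pow_le_pow_left₀ (by positivity)
          (mul_le_mul_of_nonneg_right
            ((pow_le_pow_left₀ (abs_nonneg _) (abs_le_brk k) j).trans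
              (pow_le_pow_right₀ (one_le_brk k) hj)) (norm_nonneg _)) 2).trans
          (h.sum_sq t ht (freq K))
      refine ⟨T, ⟨hT, le_rfl⟩, max (C ^ 2) (T * C ^ 2),
        fun t ht K => (hbd 12 (by norm_num) t ht K).trans (le_max_left _ _),
        fun K => le_trans ?_ (le_max_right _ _)⟩
      have := intervalIntegral.integral_mono_on (μ := volume) hT.le (a := 0) (b := T)
        (f := fun t => ∑ k ∈ freq K, (|(k : ℝ)| ^ (0 + 13) * ‖a t k‖) ^ 2) (g := fun _ => C ^ 2)
        (ContinuousOn.intervalIntegrable (by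
          rw [Set.uIcc_of_le hT.le]
          exact continuousOn_finsetSum _ fun k _ =>
            (continuousOn_const.mul (h.cont k).norm).pow 2))
        (continuous_const.intervalIntegrable _ _) (fun t ht => hbd 13 le_rfl t ht K)
      refine this.trans (le_of_eq ?_)
      rw [intervalIntegral.integral_const, sub_zero, smul_eq_mul]
    | succ n ih =>
      obtain ⟨T₁, hT₁, C₁, h1, h2⟩ := ih
      obtain ⟨T', hT', C₂, h3, h4⟩ := (h.mono hT₁.2).step hγ hN hC hc hT₁.1 (m := n + 13)
        (by omega) h1 h2
      refine ⟨T', ⟨hT'.1, hT'.2.le.trans hT₁.2⟩, C₂, ?_, ?_⟩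
      · rw [show n + 1 + 12 = n + 13 by omega]; exact h3
      · rw [show n + 1 + 13 = n + 13 + 1 by omega]; exact h4
  obtain ⟨T', hT', C₁, h1, -⟩ := key m
  have h0 : (0 : ℝ) ∈ Set.Icc 0 T := ⟨le_rfl, hT.le⟩
  have := wBdd_of_sum_sq (m := m + 11) (D := C) (by simpa [brk] using h.decay hC h0 0)
    (h1 0 ⟨le_rfl, hT'.1.le⟩)
  exact ⟨_, this.mono (by omega)⟩

end regularization
end FifthOrderStmt4

namespace FifthOrderStmt4

section nonlinearity
open Complex ComplexConjugate MvPolynomial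

variable {f : ℝ → ℝ} {y : ℤ → ℂ} {r : ℕ} {A : ℝ}

lemma WBdd.ofReal_iteratedDeriv (h : WBdd r A y) (hf : ∀ x, (f x : ℂ) = jet y 0 x) {j : ℕ}
    (hj : j ≤ r) (x : ℝ) : ((iteratedDeriv j f x : ℝ) : ℂ) = jet y j x := by
  induction j generalizing x with
  | zero => rw [iteratedDeriv_zero, hf]
  | succ j ih =>
    have h1 : HasDerivAt (fun x => ((iteratedDeriv j f x : ℝ) : ℂ)) (jet y (j + 1) x) x := by
      rw [show (fun x => ((iteratedDeriv j f x : ℝ) : ℂ)) = jet y j from funext (ih (by omega))]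
      exact h.hasDerivAt_jet hj x
    have h2 : HasDerivAt (iteratedDeriv j f) (jet y (j + 1) x).re x := by
      exact reCLM.hasFDerivAt.comp_hasDerivAt x h1
    rw [iteratedDeriv_succ, h2.deriv]
    exact h2.ofReal_comp.unique h1

lemma WBdd.contDiff (h : ∀ m, ∃ A, WBdd m A y) (hf : ∀ x, (f x : ℂ) = jet y 0 x) :
    ContDiff ℝ (⊤ : ℕ∞) f := by
  have hj : ContDiff ℝ (⊤ : ℕ∞) (jet y 0) := by
    refine contDiff_infty.2 fun n => ?_
    suffices H : ∀ n j : ℕ, ContDiff ℝ n (jet y j) from H n 0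
    intro n
    induction n with
    | zero =>
      intro j
      obtain ⟨A, hA⟩ := h j
      exact contDiff_zero.2 (hA.continuous_jet le_rfl)
    | succ n ih =>
      intro j
      obtain ⟨A, hA⟩ := h (j + 1)
      have hd := hA.hasDerivAt_jet le_rfl
      rw [Nat.cast_succ, contDiff_succ_iff_deriv]
      refine ⟨fun x => (hd x).differentiableAt, by simp, ?_⟩
      rw [show deriv (jet y j) = jet y (j + 1) from funext fun x => (hd x).deriv]
      exact ih (j + 1)
  have : f = fun x => reCLM (jet y 0 x) := by
    ext x
    rw [← hf]; simp
  rw [this]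
  exact reCLM.contDiff.comp hj

/-- The monomial `(∂ₓ³u)^a (∂ₓ²u)^b (∂ₓu)^c u^d`. -/
noncomputable def mono4 (a b c d : ℕ) : DPoly := X 3 ^ a * X 2 ^ b * X 1 ^ c * X 0 ^ d

/-- The nonlinearity as a differential polynomial. -/
noncomputable def nPoly {j0 : ℕ} (lam : Fin j0 → ℝ) (a b c d : Fin j0 → ℕ) : DPoly :=
  ∑ j, C (lam j) * mono4 (a j) (b j) (c j) (d j)

lemma mono4_mem_ord (a b c d : ℕ) : mono4 a b c d ∈ ord 3 :=
  mul_mem (mul_mem (mul_mem (pow_mem (X_mem_ord (by norm_num)) a)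
    (pow_mem (X_mem_ord (by norm_num)) b)) (pow_mem (X_mem_ord (by norm_num)) c))
    (pow_mem (X_mem_ord (by norm_num)) d)

lemma nPoly_mem_ord {j0 : ℕ} (lam : Fin j0 → ℝ) (a b c d : Fin j0 → ℕ) :
    nPoly lam a b c d ∈ ord 3 :=
  sum_mem fun j _ => mul_mem (algebraMap_mem (ord 3) (lam j)) (mono4_mem_ord _ _ _ _)

lemma pderiv_two_mono4 (a b c d : ℕ) :
    pderiv 2 (mono4 a b c d) = C (b : ℝ) * mono4 a (b - 1) c d := by
  simp only [mono4, Derivation.leibniz, Derivation.leibniz_pow, pderiv_X_self,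
    pderiv_X_of_ne (show (3 : ℕ) ≠ 2 by norm_num), pderiv_X_of_ne (show (1 : ℕ) ≠ 2 by norm_num),
    pderiv_X_of_ne (show (0 : ℕ) ≠ 2 by norm_num), smul_eq_mul,
    nsmul_eq_mul, map_natCast]
  ring

lemma pderiv_two_nPoly {j0 : ℕ} (lam : Fin j0 → ℝ) (a b c d : Fin j0 → ℕ) :
    pderiv 2 (nPoly lam a b c d) =
      ∑ j, C (lam j * b j) * mono4 (a j) (b j - 1) (c j) (d j) := by
  rw [nPoly, map_sum]
  refine Finset.sum_congr rfl fun j _ => ?_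
  rw [pderiv_C_mul, pderiv_two_mono4, C_mul, mul_assoc]

lemma WBdd.ev_mono4 (h : WBdd r A y) (hr : 3 ≤ r) (hf : ∀ x, (f x : ℂ) = jet y 0 x)
    (a b c d : ℕ) (x : ℝ) : ev (mono4 a b c d) y x =
      ((iteratedDeriv 3 f x ^ a * iteratedDeriv 2 f x ^ b * deriv f x ^ c * f x ^ d : ℝ) : ℂ) := by
  push_cast
  rw [h.ofReal_iteratedDeriv hf hr, h.ofReal_iteratedDeriv hf (by omega), ← iteratedDeriv_one,
    h.ofReal_iteratedDeriv hf (by omega), hf, mono4, ev]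
  simp only [map_mul, map_pow, aeval_X]

variable {j0 : ℕ} (lam : Fin j0 → ℝ) (a b c d : Fin j0 → ℕ)

lemma WBdd.ev_nPoly (h : WBdd r A y) (hr : 3 ≤ r) (hf : ∀ x, (f x : ℂ) = jet y 0 x) (x : ℝ) :
    ev (nPoly lam a b c d) y x = Nfun j0 lam a b c d f x := by
  rw [nPoly, ev_sum, Nfun, ofReal_sum]
  refine Finset.sum_congr rfl fun j _ => ?_
  rw [ev_mul, ev_C, h.ev_mono4 hr hf, ← ofReal_mul]
  congr 1
  ring

lemma WBdd.cf_ev_pderiv_nPoly (h : WBdd r A y) (hr : 3 ≤ r) (hf : ∀ x, (f x : ℂ) = jet y 0 x) :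
    cf (ev (pderiv 2 (nPoly lam a b c d)) y) 0 = PN j0 lam a b c d f := by
  have hc : ∀ j, Continuous (ev (mono4 (a j) (b j - 1) (c j) (d j)) y) := fun j =>
    (h.mono hr).continuous_ev (mono4_mem_ord _ _ _ _)
  have e : ev (pderiv 2 (nPoly lam a b c d)) y = fun x =>
      ∑ j, ((lam j * b j : ℝ) : ℂ) * ev (mono4 (a j) (b j - 1) (c j) (d j)) y x := by
    ext x
    rw [pderiv_two_nPoly, ev_sum]
    exact Finset.sum_congr rfl fun j _ => by rw [ev_mul, ev_C]
  rw [e, cf_finset_sum (F := fun j x => ((lam j * b j : ℝ) : ℂ) *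
    ev (mono4 (a j) (b j - 1) (c j) (d j)) y x) _ fun j _ => continuous_const.mul (hc j), PN,
    ofReal_sum]
  refine Finset.sum_congr rfl fun j _ => ?_
  rw [cf_const_mul, cf, ofReal_mul (lam j * b j / (2 * Real.pi)), ← intervalIntegral.integral_ofReal,
    ofReal_div, div_eq_mul_inv, mul_assoc]
  congr 2
  refine intervalIntegral.integral_congr fun x _ => ?_
  simp only [Int.cast_zero, mul_zero, zero_mul, exp_zero, mul_one]
  exact h.ev_mono4 hr hf _ _ _ _ x

end nonlinearity
end FifthOrderStmt4

namespace FifthOrderStmt4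

section duBoisReymond
open Complex MeasureTheory Filter Topology

lemma contDiff_primitive {f : ℝ → ℝ} (hf : ContDiff ℝ (⊤ : ℕ∞) f) :
    ContDiff ℝ (⊤ : ℕ∞) fun t => ∫ s in (0)..t, f s := by
  have hd : ∀ t, HasDerivAt (fun t => ∫ s in (0)..t, f s) (f t) t := fun t =>
    hf.continuous.integral_hasStrictDerivAt 0 t |>.hasDerivAt
  rw [contDiff_infty_iff_deriv]
  refine ⟨fun t => (hd t).differentiableAt, ?_⟩
  rwa [show deriv (fun t => ∫ s in (0)..t, f s) = f from funext fun t => (hd t).deriv]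

lemma integral_eq_zero_of_primitive_test {T : ℝ} (hT : 0 < T) {f : ℝ → ℂ} (hf : Continuous f)
    (h : ∀ η : ℝ → ℝ, ContDiff ℝ (⊤ : ℕ∞) η → (∀ t, t ∉ Set.Ioo 0 T → η t = 0) →
      ∫ t in (0)..T, ((deriv η t : ℝ) : ℂ) * f t = 0) :
    ∃ z : ℂ, ∀ t ∈ Set.Ioo 0 T, f t = z := by
  let χ₀ : ContDiffBump (T / 2) := ⟨T / 8, T / 4, by positivity, by linarith⟩
  obtain ⟨χ, hχ, hχs, hχi⟩ : ∃ χ : ℝ → ℝ, ContDiff ℝ (⊤ : ℕ∞) χ ∧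
      (∀ t, t ∉ Set.Ioo 0 T → χ t = 0) ∧ ∫ t in (0)..T, χ t = 1 := by
    have hs : ∀ t, t ∉ Set.Ioo 0 T → χ₀.normed volume t = 0 := fun t ht => by
      by_contra hne
      have : t ∈ Function.support (χ₀.normed volume) := hne
      rw [χ₀.support_normed_eq, Metric.mem_ball, Real.dist_eq, abs_lt] at this
      have e : χ₀.rOut = T / 4 := rfl
      rw [e] at this
      exact ht ⟨by linarith, by linarith⟩
    refine ⟨χ₀.normed volume, χ₀.contDiff_normed, hs, ?_⟩
    rw [intervalIntegral.integral_of_le hT.le, setIntegral_eq_integral_of_forall_compl_eq_zero,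
      χ₀.integral_normed]
    exact fun t ht => hs t fun h => ht ⟨h.1, h.2.le⟩
  set z : ℂ := ∫ t in (0)..T, (χ t : ℂ) * f t with hz
  have hfz : Continuous fun t => f t - z := hf.sub continuous_const
  have hae : ∀ᵐ t : ℝ, t ∈ Set.Ioo 0 T → f t - z = 0 := by
    refine isOpen_Ioo.ae_eq_zero_of_integral_contDiff_smul_eq_zero
      (hfz.locallyIntegrable.locallyIntegrableOn _) fun g hg _ hgs => ?_
    have hg0 : ∀ t, t ∉ Set.Ioo 0 T → g t = 0 := fun t ht =>
      image_eq_zero_of_notMem_tsupport fun h => ht (hgs h)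
    set m : ℝ := ∫ t in (0)..T, g t with hm
    have hζ : ContDiff ℝ (⊤ : ℕ∞) fun t => g t - m * χ t := hg.sub (contDiff_const.mul hχ)
    have hi : ∀ {p : ℝ → ℝ}, ContDiff ℝ (⊤ : ℕ∞) p → ∀ x y, IntervalIntegrable p volume x y :=
      fun hp x y => hp.continuous.intervalIntegrable x y
    have hζT : ∫ t in (0)..T, (g t - m * χ t) = 0 := by
      rw [intervalIntegral.integral_sub (hi hg _ _) (hi (contDiff_const.mul hχ) _ _),
        intervalIntegral.integral_const_mul, hχi, mul_one, sub_self]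
    have hd : ∀ t, HasDerivAt (fun t => ∫ s in (0)..t, (g s - m * χ s)) (g t - m * χ t) t :=
      fun t => (hζ.continuous.integral_hasStrictDerivAt 0 t).hasDerivAt
    have key := h _ (contDiff_primitive hζ) fun t ht => by
      rcases le_or_gt t 0 with h0 | h0
      · refine intervalIntegral.integral_zero_ae (Eventually.of_forall fun s hs => ?_)
        rw [Set.uIoc_of_ge h0] at hs
        have : s ∉ Set.Ioo 0 T := fun h => absurd h.1 (not_lt.2 hs.2)
        rw [hg0 s this, hχs s this, mul_zero, sub_zero]
      · have hTt : T ≤ t := not_lt.1 fun h => ht ⟨h0, h⟩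
        rw [← intervalIntegral.integral_add_adjacent_intervals (hi hζ 0 T) (hi hζ T t), hζT,
          zero_add]
        refine intervalIntegral.integral_zero_ae (Eventually.of_forall fun s hs => ?_)
        rw [Set.uIoc_of_le hTt] at hs
        have : s ∉ Set.Ioo 0 T := fun h => absurd h.2 (not_lt.2 hs.1.le)
        rw [hg0 s this, hχs s this, mul_zero, sub_zero]
    simp only [(hd _).deriv] at key
    have c1 : Continuous fun t => (g t : ℂ) * f t :=
      (continuous_ofReal.comp hg.continuous).mul hf
    have c2 : Continuous fun t => (m : ℂ) * ((χ t : ℂ) * f t) :=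
      continuous_const.mul ((continuous_ofReal.comp hχ.continuous).mul hf)
    have c3 : Continuous fun t => (g t : ℂ) * z :=
      (continuous_ofReal.comp hg.continuous).mul continuous_const
    have e1 : ∫ t, g t • (f t - z) = ∫ t in (0)..T, ((g t : ℂ) * f t - (g t : ℂ) * z) := by
      rw [intervalIntegral.integral_of_le hT.le, setIntegral_eq_integral_of_forall_compl_eq_zero]
      · exact integral_congr_ae (Eventually.of_forall fun t => by
          simp only [real_smul]; ring)
      · intro t ht
        rw [hg0 t fun h => ht ⟨h.1, h.2.le⟩]
        simp
    have e2 : ∫ t in (0)..T, ((g t - m * χ t : ℝ) : ℂ) * f t =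
        (∫ t in (0)..T, (g t : ℂ) * f t) - m * z := by
      rw [hz, ← intervalIntegral.integral_const_mul, ← intervalIntegral.integral_sub
        (c1.intervalIntegrable _ _) (c2.intervalIntegrable _ _)]
      exact intervalIntegral.integral_congr fun t _ => by push_cast; ring
    rw [e1, intervalIntegral.integral_sub (c1.intervalIntegrable _ _) (c3.intervalIntegrable _ _),
      intervalIntegral.integral_mul_const, intervalIntegral.integral_ofReal, ← hm, ← e2]
    exact key
  have heq : (fun t => f t - z) =ᵐ[volume.restrict (Set.Ioo 0 T)] fun _ => 0 :=
    (ae_restrict_iff' measurableSet_Ioo).2 hae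
  have := Measure.eqOn_open_of_ae_eq heq isOpen_Ioo hfz.continuousOn
    continuousOn_const
  exact ⟨z, fun t ht => sub_eq_zero.1 (this ht)⟩

lemma hasDerivAt_of_weak {T : ℝ} (hT : 0 < T) {f g : ℝ → ℂ} (hf : ContinuousOn f (Set.Icc 0 T))
    (hg : ContinuousOn g (Set.Icc 0 T))
    (h : ∀ η : ℝ → ℝ, ContDiff ℝ (⊤ : ℕ∞) η → (∀ t, t ∉ Set.Ioo 0 T → η t = 0) →
      ∫ t in (0)..T, (((deriv η t : ℝ) : ℂ) * f t + (η t : ℂ) * g t) = 0) :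
    ∀ t ∈ Set.Ioo 0 T, HasDerivAt f (g t) t := by
  obtain ⟨F, hF, hFf⟩ : ∃ F : ℝ → ℂ, Continuous F ∧ Set.EqOn F f (Set.Icc 0 T) :=
    ⟨Set.IccExtend hT.le (Set.domRestrict _ f),
      (continuousOn_iff_continuous_domRestrict.1 hf).Icc_extend',
      fun t ht => Set.IccExtend_of_mem hT.le _ ht⟩
  obtain ⟨G, hG, hGg⟩ : ∃ G : ℝ → ℂ, Continuous G ∧ Set.EqOn G g (Set.Icc 0 T) :=
    ⟨Set.IccExtend hT.le (Set.domRestrict _ g),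
      (continuousOn_iff_continuous_domRestrict.1 hg).Icc_extend',
      fun t ht => Set.IccExtend_of_mem hT.le _ ht⟩
  set H : ℝ → ℂ := fun t => ∫ s in (0)..t, G s with hH
  have hHd : ∀ t, HasDerivAt H (G t) t := fun t =>
    (hG.integral_hasStrictDerivAt 0 t).hasDerivAt
  have hHc : Continuous H := continuous_iff_continuousAt.2 fun t => (hHd t).continuousAt
  obtain ⟨z, hz⟩ := integral_eq_zero_of_primitive_test hT (hF.sub hHc) fun η hη hη0 => by
    have hηd : ∀ t, HasDerivAt (fun t => (η t : ℂ)) ((deriv η t : ℝ) : ℂ) t := fun t =>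
      ((hη.differentiable (by simp)).differentiableAt.hasDerivAt).ofReal_comp
    have cη : Continuous fun t => (η t : ℂ) := continuous_ofReal.comp hη.continuous
    have cη' : Continuous fun t => ((deriv η t : ℝ) : ℂ) :=
      continuous_ofReal.comp (hη.continuous_deriv (by simp))
    have ibp := intervalIntegral.integral_mul_deriv_eq_deriv_mul (a := 0) (b := T)
      (fun t _ => hηd t) (fun t _ => hHd t) (cη'.intervalIntegrable _ _)
      (hG.intervalIntegrable _ _)
    rw [hη0 0 (by simp), hη0 T (by simp)] at ibp
    have h0 := h η hη hη0
    have e0 : ∫ t in (0)..T, (((deriv η t : ℝ) : ℂ) * f t + (η t : ℂ) * g t) =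
        ∫ t in (0)..T, (((deriv η t : ℝ) : ℂ) * F t + (η t : ℂ) * G t) := by
      refine intervalIntegral.integral_congr fun t ht => ?_
      rw [Set.uIcc_of_le hT.le] at ht
      simp only [hFf ht, hGg ht]
    have c1 : Continuous fun t => ((deriv η t : ℝ) : ℂ) * F t := cη'.mul hF
    have c2 : Continuous fun t => (η t : ℂ) * G t := cη.mul hG
    have c3 : Continuous fun t => ((deriv η t : ℝ) : ℂ) * H t := cη'.mul hHc
    rw [e0, intervalIntegral.integral_add (c1.intervalIntegrable _ _)
      (c2.intervalIntegrable _ _), ibp] at h0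
    simp only [mul_sub, Pi.sub_apply]
    rw [intervalIntegral.integral_sub (c1.intervalIntegrable _ _) (c3.intervalIntegrable _ _)]
    simpa [sub_eq_add_neg] using h0
  intro t ht
  rw [← hGg (Set.Ioo_subset_Icc_self ht)]
  refine ((hHd t).const_add z).congr_of_eventuallyEq ?_
  filter_upwards [isOpen_Ioo.mem_nhds ht] with s hs
  rw [← hz s hs, ← hFf (Set.Ioo_subset_Icc_self hs)]
  simp

end duBoisReymond
end FifthOrderStmt4

namespace FifthOrderStmt4

section sobolev
open Complex ComplexConjugate Filter Topology

lemma fc_sub {f g : ℝ → ℝ} (hf : Continuous f) (hg : Continuous g) (k : ℤ) :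
    fc (fun x => f x - g x) k = fc f k - fc g k := by
  have e : (fun x => ((f x - g x : ℝ) : ℂ)) = fun x => (f x : ℂ) + (-1) * (g x : ℂ) := by
    ext x; push_cast; ring
  have h1 : Continuous fun x => (f x : ℂ) := continuous_ofReal.comp hf
  have h2 : Continuous fun x => (-1) * (g x : ℂ) :=
    continuous_const.mul (continuous_ofReal.comp hg)
  rw [fc_eq_cf, e, cf_add h1 h2, cf_const_mul, fc_eq_cf, fc_eq_cf]
  ring

lemma weight_nonneg (s : ℕ) (f : ℝ → ℝ) (k : ℤ) : 0 ≤ (1 + (k : ℝ) ^ 2) ^ s * ‖fc f k‖ ^ 2 := by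
  positivity

lemma MemHs.sum_le {s : ℕ} {f : ℝ → ℝ} (h : MemHs s f) (S : Finset ℤ) :
    ∑ k ∈ S, (1 + (k : ℝ) ^ 2) ^ s * ‖fc f k‖ ^ 2 ≤ hsNorm s f ^ 2 := by
  rw [hsNorm, Real.sq_sqrt (tsum_nonneg (weight_nonneg s f))]
  exact h.2.2.sum_le_tsum _ fun k _ => weight_nonneg s f k

lemma norm_sq_le_two_mul (x y : ℂ) : ‖x‖ ^ 2 ≤ 2 * ‖x - y‖ ^ 2 + 2 * ‖y‖ ^ 2 := by
  have h : ‖x‖ ≤ ‖x - y‖ + ‖y‖ := by simpa using norm_add_le (x - y) y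
  nlinarith [norm_nonneg x, sq_nonneg (‖x - y‖ - ‖y‖), norm_nonneg (x - y), norm_nonneg y]

lemma MemHs.sub {s : ℕ} {f g : ℝ → ℝ} (hf : MemHs s f) (hg : MemHs s g) :
    MemHs s fun x => f x - g x := by
  refine ⟨hf.1.sub hg.1, hf.2.1.sub hg.2.1, ?_⟩
  refine Summable.of_nonneg_of_le (weight_nonneg s _) (fun k => ?_)
    ((hf.2.2.mul_left 2).add (hg.2.2.mul_left 2))
  rw [fc_sub hf.1 hg.1]
  have h := norm_sq_le_two_mul (fc f k - fc g k) (-fc g k)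
  rw [norm_neg, sub_neg_eq_add, sub_add_cancel] at h
  calc _ ≤ (1 + (k : ℝ) ^ 2) ^ s * (2 * ‖fc f k‖ ^ 2 + 2 * ‖fc g k‖ ^ 2) :=
        mul_le_mul_of_nonneg_left h (by positivity)
    _ = _ := by ring

lemma MemHs.sum_le_two_mul {s : ℕ} {f g : ℝ → ℝ} (hf : MemHs s f) (hg : MemHs s g) (S : Finset ℤ) :
    ∑ k ∈ S, (1 + (k : ℝ) ^ 2) ^ s * ‖fc f k‖ ^ 2 ≤
      2 * hsNorm s (fun x => f x - g x) ^ 2 + 2 * hsNorm s g ^ 2 := by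
  calc _ ≤ ∑ k ∈ S, (2 * ((1 + (k : ℝ) ^ 2) ^ s * ‖fc (fun x => f x - g x) k‖ ^ 2) +
        2 * ((1 + (k : ℝ) ^ 2) ^ s * ‖fc g k‖ ^ 2)) := Finset.sum_le_sum fun k _ => by
        rw [fc_sub hf.1 hg.1]
        calc _ ≤ (1 + (k : ℝ) ^ 2) ^ s * (2 * ‖fc f k - fc g k‖ ^ 2 + 2 * ‖fc g k‖ ^ 2) :=
              mul_le_mul_of_nonneg_left (norm_sq_le_two_mul _ _) (by positivity)
          _ = _ := by ring
    _ ≤ _ := by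
        rw [Finset.sum_add_distrib, ← Finset.mul_sum, ← Finset.mul_sum]
        exact add_le_add (mul_le_mul_of_nonneg_left ((hf.sub hg).sum_le S) two_pos.le)
          (mul_le_mul_of_nonneg_left (hg.sum_le S) two_pos.le)

lemma hsNorm_nonneg (s : ℕ) (f : ℝ → ℝ) : 0 ≤ hsNorm s f := Real.sqrt_nonneg _

lemma MemHs.norm_fc_le {s : ℕ} {f : ℝ → ℝ} (h : MemHs s f) (k : ℤ) : ‖fc f k‖ ≤ hsNorm s f := by
  have h1 := h.sum_le {k}
  rw [Finset.sum_singleton] at h1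
  refine le_of_sq_le_sq ?_ (hsNorm_nonneg s f)
  refine le_trans (le_mul_of_one_le_left (sq_nonneg _) (one_le_pow₀ ?_)) h1
  nlinarith [sq_nonneg (k : ℝ)]

variable {s : ℕ} {S : Set ℝ} {u : ℝ → ℝ → ℝ}

lemma ContInHs.continuousOn_fc (hu : ContInHs s S u) (hm : ∀ t ∈ S, MemHs s (u t)) (k : ℤ) :
    ContinuousOn (fun t => fc (u t) k) S := by
  refine Metric.continuousOn_iff.2 fun t₀ ht₀ ε hε => ?_
  obtain ⟨δ, hδ, h⟩ := hu t₀ ht₀ ε hε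
  refine ⟨δ, hδ, fun t ht htd => ?_⟩
  rw [dist_eq_norm, ← fc_sub (hm t ht).1 (hm t₀ ht₀).1]
  exact (((hm t ht).sub (hm t₀ ht₀)).norm_fc_le k).trans_lt (h t ht htd)

lemma ContInHs.exists_bound (hS : IsCompact S) (hu : ContInHs s S u)
    (hm : ∀ t ∈ S, MemHs s (u t)) :
    ∃ M, ∀ t ∈ S, ∀ F : Finset ℤ, ∑ k ∈ F, (1 + (k : ℝ) ^ 2) ^ s * ‖fc (u t) k‖ ^ 2 ≤ M := by
  have key := hS.induction_on (p := fun R => ∃ M, ∀ t ∈ R, t ∈ S → ∀ F : Finset ℤ,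
    ∑ k ∈ F, (1 + (k : ℝ) ^ 2) ^ s * ‖fc (u t) k‖ ^ 2 ≤ M) ⟨0, by simp⟩
    (fun R R' hR ⟨M, hM⟩ => ⟨M, fun t ht => hM t (hR ht)⟩)
    (fun R R' ⟨M, hM⟩ ⟨M', hM'⟩ => ⟨max M M', fun t ht htS F => ht.elim
      (fun h => (hM t h htS F).trans (le_max_left _ _))
      (fun h => (hM' t h htS F).trans (le_max_right _ _))⟩)
    (fun t₀ ht₀ => by
      obtain ⟨δ, hδ, h⟩ := hu t₀ ht₀ 1 one_pos
      refine ⟨Metric.ball t₀ δ, mem_nhdsWithin_of_mem_nhds (Metric.ball_mem_nhds t₀ hδ),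
        2 * 1 ^ 2 + 2 * hsNorm s (u t₀) ^ 2, fun t ht htS F => ?_⟩
      refine ((hm t htS).sum_le_two_mul (hm t₀ ht₀) F).trans ?_
      have := h t htS ht
      have h2 := pow_le_pow_left₀ (hsNorm_nonneg s _) this.le 2
      linarith)
  obtain ⟨M, hM⟩ := key
  exact ⟨M, fun t ht => hM t ht ht⟩

lemma brk_sq_le (k : ℤ) : brk k ^ 2 ≤ 2 * (1 + (k : ℝ) ^ 2) := by
  unfold brk
  nlinarith [sq_nonneg (|(k : ℝ)| - 1), sq_abs (k : ℝ)]

lemma ContInHs.exists_brk_bound (hS : IsCompact S) (hu : ContInHs s S u)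
    (hm : ∀ t ∈ S, MemHs s (u t)) :
    ∃ C, 0 ≤ C ∧ ∀ t ∈ S, ∀ F : Finset ℤ, ∑ k ∈ F, (brk k ^ s * ‖fc (u t) k‖) ^ 2 ≤ C ^ 2 := by
  obtain ⟨M, hM⟩ := hu.exists_bound hS hm
  refine ⟨Real.sqrt (2 ^ s * M), Real.sqrt_nonneg _, fun t ht F => ?_⟩
  have h0 : 0 ≤ M := by simpa using hM t ht ∅
  rw [Real.sq_sqrt (by positivity)]
  refine le_trans (Finset.sum_le_sum fun k _ => ?_) (le_of_eq_of_le (Finset.mul_sum F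
    (fun k : ℤ => (1 + (k : ℝ) ^ 2) ^ s * ‖fc (u t) k‖ ^ 2) (2 ^ s)).symm
    (mul_le_mul_of_nonneg_left (hM t ht F) (by positivity)))
  rw [mul_pow, ← mul_assoc, ← mul_pow 2, ← pow_mul, mul_comm s 2, pow_mul]
  exact mul_le_mul_of_nonneg_right (pow_le_pow_left₀ (sq_nonneg _) (brk_sq_le k) s) (sq_nonneg _)

end sobolev
end FifthOrderStmt4

namespace FifthOrderStmt4

section weakForm
open Complex ComplexConjugate MeasureTheory Filter Topology

lemma iteratedDeriv_wave (q : ℝ) (z : ℂ) (k : ℤ) (n : ℕ) :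
    iteratedDeriv n (fun x : ℝ => q * (z * exp (-I * k * x)).re) =
      fun x : ℝ => q * (z * (-I * k) ^ n * exp (-I * k * x)).re := by
  induction n with
  | zero => simp
  | succ n ih =>
    rw [iteratedDeriv_succ, ih]
    ext x
    have h1 : HasDerivAt (fun x : ℝ => -I * (k : ℂ) * (x : ℂ)) (-I * k) x := by
      simpa using (ofRealCLM.hasDerivAt (x := x)).const_mul (-I * (k : ℂ))
    have h2 := (h1.cexp).const_mul (z * (-I * k) ^ n)
    have h3 : HasDerivAt (fun x : ℝ => (z * (-I * k) ^ n * exp (-I * k * x)).re)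
        (z * (-I * k) ^ n * (exp (-I * k * x) * (-I * k))).re x :=
      reCLM.hasFDerivAt.comp_hasDerivAt x h2
    rw [(h3.const_mul q).deriv]
    congr 2
    ring

lemma contDiff_wave {η : ℝ → ℝ} (hη : ContDiff ℝ (⊤ : ℕ∞) η) (z : ℂ) (k : ℤ) :
    ContDiff ℝ (⊤ : ℕ∞)
      (Function.uncurry fun t x : ℝ => η t * (z * exp (-I * k * (x : ℂ))).re) := by
  have h1 : ContDiff ℝ (⊤ : ℕ∞) fun p : ℝ × ℝ => z * exp (-I * k * (p.2 : ℂ)) :=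
    contDiff_const.mul ((contDiff_const.mul (ofRealCLM.contDiff.comp contDiff_snd)).cexp)
  exact (hη.comp contDiff_fst).mul (reCLM.contDiff.comp h1)

lemma wave_periodic (q : ℝ) (z : ℂ) (k : ℤ) :
    Function.Periodic (fun x : ℝ => q * (z * exp (-I * k * (x : ℂ))).re) (2 * Real.pi) := by
  intro x
  have e : -I * k * ((x + 2 * Real.pi : ℝ) : ℂ) = -I * k * x + ((-k : ℤ) : ℂ) * (2 * Real.pi * I) := by
    push_cast; ring
  simp only [e, exp_periodic.int_mul (-k) (-I * k * x)]

lemma integral_eq_cf (f : ℝ → ℂ) (k : ℤ) :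
    ∫ x in (0:ℝ)..(2 * Real.pi), f x * exp (-I * k * x) = ((2 * Real.pi : ℝ) : ℂ) * cf f k := by
  have : ((2 * Real.pi : ℝ) : ℂ) ≠ 0 := ofReal_ne_zero.2 Real.two_pi_pos.ne'
  rw [cf, mul_inv_cancel_left₀ this]

lemma integral_wave_pairing (γ0 γ1 γ2 p q : ℝ) (z : ℂ) (k : ℤ) {f g : ℝ → ℝ} (hf : Continuous f)
    (hg : Continuous g) :
    ∫ x in (0:ℝ)..(2 * Real.pi), (f x * (p * (z * exp (-I * k * x)).re +
        γ0 * (q * (z * (-I * k) ^ 5 * exp (-I * k * x)).re) +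
        γ1 * (q * (z * (-I * k) ^ 3 * exp (-I * k * x)).re) +
        γ2 * (q * (z * (-I * k) ^ 1 * exp (-I * k * x)).re)) +
        g x * (q * (z * exp (-I * k * x)).re)) =
      2 * Real.pi * (z * (p * fc f k + q * (-(I * disp γ0 γ1 γ2 k * fc f k) + fc g k))).re := by
  have hI5 : I ^ 5 = I := by rw [show 5 = 2 + 2 + 1 from rfl, pow_add, pow_add, I_sq]; ring
  have hI3 : I ^ 3 = -I := by rw [show 3 = 2 + 1 from rfl, pow_add, I_sq]; ring
  have c1 : Continuous fun x : ℝ => z * (p - q * (I * disp γ0 γ1 γ2 k)) *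
      ((f x : ℂ) * exp (-I * k * x)) := by fun_prop
  have c2 : Continuous fun x : ℝ => z * q * ((g x : ℂ) * exp (-I * k * x)) := by fun_prop
  have c3 : Continuous fun x : ℝ => z * (p - q * (I * disp γ0 γ1 γ2 k)) *
      ((f x : ℂ) * exp (-I * k * x)) + z * q * ((g x : ℂ) * exp (-I * k * x)) := c1.add c2
  have hre : ∀ (y : ℝ) (w : ℂ), y * w.re = ((y : ℂ) * w).re := fun y w => (re_ofReal_mul y w).symm
  have e : ∀ x : ℝ, f x * (p * (z * exp (-I * k * x)).re +
        γ0 * (q * (z * (-I * k) ^ 5 * exp (-I * k * x)).re) +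
        γ1 * (q * (z * (-I * k) ^ 3 * exp (-I * k * x)).re) +
        γ2 * (q * (z * (-I * k) ^ 1 * exp (-I * k * x)).re)) +
        g x * (q * (z * exp (-I * k * x)).re) =
      reCLM (z * (p - q * (I * disp γ0 γ1 γ2 k)) * ((f x : ℂ) * exp (-I * k * x)) +
        z * q * ((g x : ℂ) * exp (-I * k * x))) := by
    intro x
    rw [reCLM_apply]
    simp only [hre, ← add_re]
    congr 1
    rw [disp, mul_pow, mul_pow, neg_pow I 5, neg_pow I 3, hI5, hI3]
    push_cast
    ring
  rw [intervalIntegral.integral_congr fun x _ => e x, reCLM.intervalIntegral_comp_comm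
    (c3.intervalIntegrable _ _), intervalIntegral.integral_add (c1.intervalIntegrable _ _)
    (c2.intervalIntegrable _ _), intervalIntegral.integral_const_mul,
    intervalIntegral.integral_const_mul, integral_eq_cf, integral_eq_cf, reCLM_apply, fc_eq_cf,
    fc_eq_cf, show (2 * Real.pi : ℝ) = 2 * Real.pi from rfl, hre]
  congr 1
  push_cast
  ring

variable {γ0 γ1 γ2 : ℝ} {j0 : ℕ} {lam : Fin j0 → ℝ} {a b c d : Fin j0 → ℕ} {T : ℝ} {u : ℝ → ℝ → ℝ}

lemma IsSolution.hasDerivAt_fc (hu : IsSolution γ0 γ1 γ2 j0 lam a b c d 0 T u) (hT : 0 < T) (k : ℤ)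
    (hc : ∀ t ∈ Set.Icc 0 T, Continuous (u t))
    (hN : ∀ t ∈ Set.Icc 0 T, Continuous (Nfun j0 lam a b c d (u t)))
    (h₁ : ContinuousOn (fun t => fc (u t) k) (Set.Icc 0 T))
    (h₂ : ContinuousOn (fun t => fc (Nfun j0 lam a b c d (u t)) k) (Set.Icc 0 T)) :
    ∀ t ∈ Set.Ioo 0 T, HasDerivAt (fun t => fc (u t) k)
      (-(I * disp γ0 γ1 γ2 k * fc (u t) k) + fc (Nfun j0 lam a b c d (u t)) k) t := by
  have h₃ : ContinuousOn (fun t => -(I * disp γ0 γ1 γ2 k * fc (u t) k) +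
      fc (Nfun j0 lam a b c d (u t)) k) (Set.Icc 0 T) := by fun_prop
  refine hasDerivAt_of_weak hT h₁ h₃ fun η hη hη0 => ?_
  set w : ℂ := ∫ t in (0)..T, (((deriv η t : ℝ) : ℂ) * fc (u t) k + (η t : ℂ) *
    (-(I * disp γ0 γ1 γ2 k * fc (u t) k) + fc (Nfun j0 lam a b c d (u t)) k)) with hw
  have cη : Continuous fun t => (η t : ℂ) := continuous_ofReal.comp hη.continuous
  have cη' : Continuous fun t => ((deriv η t : ℝ) : ℂ) :=
    continuous_ofReal.comp (hη.continuous_deriv (by simp))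
  have hint : ∀ z : ℂ, IntervalIntegrable (fun t => z * (((deriv η t : ℝ) : ℂ) * fc (u t) k +
      (η t : ℂ) * (-(I * disp γ0 γ1 γ2 k * fc (u t) k) + fc (Nfun j0 lam a b c d (u t)) k)))
      volume 0 T := fun z => by
    refine ContinuousOn.intervalIntegrable ?_
    rw [Set.uIcc_of_le hT.le]
    exact continuousOn_const.mul ((cη'.continuousOn.mul h₁).add (cη.continuousOn.mul h₃))
  have key : ∀ z : ℂ, (z * w).re = 0 := by
    intro z
    have h := hu.2 (fun t x => η t * (z * exp (-I * k * (x : ℂ))).re) (contDiff_wave hη z k)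
      (fun t => wave_periodic _ z k) (fun t ht x => by rw [hη0 t ht, zero_mul])
    have e : ∀ t ∈ Set.uIcc 0 T, ∫ x in (0:ℝ)..(2 * Real.pi),
        (u t x * (deriv (fun τ : ℝ => η τ * (z * exp (-I * k * (x : ℂ))).re) t
        + γ0 * iteratedDeriv 5 (fun x : ℝ => η t * (z * exp (-I * k * (x : ℂ))).re) x
        + γ1 * iteratedDeriv 3 (fun x : ℝ => η t * (z * exp (-I * k * (x : ℂ))).re) x
        + γ2 * deriv (fun x : ℝ => η t * (z * exp (-I * k * (x : ℂ))).re) x)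
        + Nfun j0 lam a b c d (u t) x * (η t * (z * exp (-I * k * (x : ℂ))).re)) =
        2 * Real.pi * reCLM (z * (((deriv η t : ℝ) : ℂ) * fc (u t) k + (η t : ℂ) *
          (-(I * disp γ0 γ1 γ2 k * fc (u t) k) + fc (Nfun j0 lam a b c d (u t)) k))) := by
      intro t ht
      rw [Set.uIcc_of_le hT.le] at ht
      rw [reCLM_apply, ← integral_wave_pairing γ0 γ1 γ2 _ _ z k (hc t ht) (hN t ht)]
      refine intervalIntegral.integral_congr fun x _ => ?_
      simp only [← iteratedDeriv_one (f := fun x : ℝ => η t * (z * exp (-I * k * (x : ℂ))).re),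
        iteratedDeriv_wave]
      rw [deriv_mul_const (hη.differentiable (by simp)).differentiableAt]
    rw [intervalIntegral.integral_congr e, intervalIntegral.integral_const_mul,
      reCLM.intervalIntegral_comp_comm (hint z), intervalIntegral.integral_const_mul, ← hw] at h
    exact (mul_eq_zero.1 h).resolve_left Real.two_pi_pos.ne'
  have h := key (conj w)
  rw [← normSq_eq_conj_mul_self, ofReal_re] at h
  exact normSq_eq_zero.1 h

end weakForm
end FifthOrderStmt4

namespace FifthOrderStmt4

section main
open Complex ComplexConjugate MvPolynomial Filter Topology

lemma ofReal_eq_jet_fc {r : ℕ} {A : ℝ} {f : ℝ → ℝ} (h : WBdd r A (fc f)) (hf : Continuous f)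
    (hper : Function.Periodic f (2 * Real.pi)) (x : ℝ) : (f x : ℂ) = jet (fc f) 0 x := by
  have hs : Summable (fc f) := Summable.of_norm (by simpa using (h.mono (Nat.zero_le r)).summable)
  exact eq_jet_cf (f := fun x => (f x : ℂ)) (continuous_ofReal.comp hf) (fun x => congrArg ofReal (hper x)) hs x

lemma fc_neg (f : ℝ → ℝ) (k : ℤ) : fc f (-k) = conj (fc f k) :=
  cf_neg_of_conj (fun _ => conj_ofReal _) k

/-- A solution with negative initial parabolicity gives a uniformly parabolic flow of its Fourier
coefficients on a short time interval. -/
lemma IsSolution.exists_isFlow {γ0 γ1 γ2 : ℝ} {j0 : ℕ} {lam : Fin j0 → ℝ} {a b c d : Fin j0 → ℕ}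
    {T : ℝ} {u : ℝ → ℝ → ℝ} (hu : IsSolution γ0 γ1 γ2 j0 lam a b c d 0 T u) (hT : 0 < T)
    (hm : ∀ t ∈ Set.Icc 0 T, MemHs 13 (u t)) (hc : ContInHs 13 (Set.Icc 0 T) u)
    (hP : PN j0 lam a b c d (u 0) < 0) :
    ∃ c₀ > 0, ∃ C ≥ 0, ∃ T₀ > 0,
      IsFlow γ0 γ1 γ2 (nPoly lam a b c d) c₀ C T₀ fun t => fc (u t) := by
  obtain ⟨C, hC, hsum⟩ := hc.exists_brk_bound isCompact_Icc hm
  have hcont := fun k => hc.continuousOn_fc hm k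
  have hdec : ∀ t ∈ Set.Icc 0 T, ∀ k, ‖fc (u t) k‖ ≤ C * (brk k ^ (11 + 2))⁻¹ := fun t ht =>
    norm_le_of_sum_sq_le hC (hsum t ht)
  have hw : ∀ t ∈ Set.Icc 0 T, WBdd 11 (C * kerSum) (fc (u t)) := fun t ht =>
    WBdd.of_decay (hdec t ht)
  have hjet : ∀ t ∈ Set.Icc 0 T, ∀ x, (u t x : ℂ) = jet (fc (u t)) 0 x := fun t ht =>
    ofReal_eq_jet_fc (hw t ht) (hm t ht).1 (hm t ht).2.1
  have hN := nPoly_mem_ord lam a b c d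
  have hev : ∀ t ∈ Set.Icc 0 T, (fun x => ((Nfun j0 lam a b c d (u t) x : ℝ) : ℂ)) =
      ev (nPoly lam a b c d) (fc (u t)) := fun t ht =>
    funext fun x => ((hw t ht).ev_nPoly lam a b c d (by norm_num) (hjet t ht) x).symm
  have hNc : ∀ t ∈ Set.Icc 0 T, Continuous (Nfun j0 lam a b c d (u t)) := fun t ht => by
    have h := ((hw t ht).mono (by norm_num)).continuous_ev hN
    rw [← hev t ht] at h
    exact (reCLM.continuous.comp h)
  have hfN : ∀ t ∈ Set.Icc 0 T, ∀ k, fc (Nfun j0 lam a b c d (u t)) k =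
      cf (ev (nPoly lam a b c d) (fc (u t))) k := fun t ht k => by
    rw [fc_eq_cf, hev t ht]
  have hdec' : ∀ t ∈ Set.Icc 0 T, ∀ k, ‖fc (u t) k‖ ≤ C * (brk k ^ (3 + 2))⁻¹ := fun t ht =>
    decay_mono (by norm_num) (hdec t ht)
  have hmean := continuousOn_cf_ev hcont hdec' (pderiv_mem_ord 2 hN) 0
  have h0 : (0 : ℝ) ∈ Set.Icc 0 T := ⟨le_rfl, hT.le⟩
  have hmean0 : (cf (ev (pderiv 2 (nPoly lam a b c d)) (fc (u 0))) 0).re =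
      PN j0 lam a b c d (u 0) := by
    rw [(hw 0 h0).cf_ev_pderiv_nPoly lam a b c d (by norm_num) (hjet 0 h0), ofReal_re]
  have hlt : (cf (ev (pderiv 2 (nPoly lam a b c d)) (fc (u 0))) 0).re <
      PN j0 lam a b c d (u 0) / 2 := by
    rw [hmean0]; linarith
  have hnear := (reCLM.continuous.comp_continuousOn hmean 0 h0).eventually_lt_const hlt
  obtain ⟨δ, hδ, hball⟩ := Metric.mem_nhdsWithin_iff.1 hnear
  have hsub : ∀ t ∈ Set.Icc 0 (min T (δ / 2)), t ∈ Set.Icc 0 T :=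
    fun t ht => ⟨ht.1, ht.2.trans (min_le_left _ _)⟩
  refine ⟨-(PN j0 lam a b c d (u 0) / 2), by linarith, C, hC, min T (δ / 2),
    lt_min hT (half_pos hδ), ?_⟩
  refine IsFlow.mk (fun k => (hcont k).mono hsub) (fun t ht => hsum t (hsub t ht)) ?_
    (fun t _ => fc_neg (u t)) fun t ht => ?_
  · intro t ht k
    have ht' : t ∈ Set.Ioo 0 T := ⟨ht.1, ht.2.trans_le (min_le_left _ _)⟩
    have h := hu.hasDerivAt_fc hT k (fun t ht => (hm t ht).1) hNc (hcont k)
      ((continuousOn_cf_ev hcont hdec' hN k).congr fun t ht => hfN t ht k) t ht'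
    rwa [hfN t (Set.Ioo_subset_Icc_self ht') k] at h
  · rw [neg_neg]
    have hd : t ∈ Metric.ball (0 : ℝ) δ := by
      rw [Metric.mem_ball, Real.dist_eq, sub_zero, abs_of_nonneg ht.1]
      exact (ht.2.trans (min_le_right _ _)).trans_lt (half_lt_self hδ)
    exact le_of_lt (hball ⟨hd, hsub t ht⟩)

end main

/-- **Non-existence for parabolic resonance type.**
If `φ ∈ H^{13}(𝕋)` is real-valued, not `C^∞`, and `P_N(φ) < 0`, then for every `T > 0`
there is no solution `u ∈ C([0,T];H^{13}(𝕋))` of the fifth order equation with `u(0) = φ`. -/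
theorem nonexistence_parabolic
    (γ0 γ1 γ2 : ℝ) (hγ0 : γ0 ≠ 0)
    (j0 : ℕ) (lam : Fin j0 → ℝ) (a b c d : Fin j0 → ℕ)
    (hp : ∀ j : Fin j0, 2 ≤ a j + b j + c j + d j)
    (φ : ℝ → ℝ) (hφ : MemHs 13 φ)
    (hφns : ¬ ContDiff ℝ (⊤ : ℕ∞) φ)
    (hPNφ : PN j0 lam a b c d φ < 0) :
    ∀ T : ℝ, 0 < T →
      ¬ ∃ u : ℝ → ℝ → ℝ,
          u 0 = φ ∧
          IsSolution γ0 γ1 γ2 j0 lam a b c d 0 T u ∧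
          (∀ t ∈ Set.Icc (0:ℝ) T, MemHs 13 (u t)) ∧
          ContInHs 13 (Set.Icc (0:ℝ) T) u := by
  rintro T hT ⟨u, rfl, hu, hm, hc⟩
  obtain ⟨c₀, hc₀, C, hC, T₀, hT₀, hflow⟩ := hu.exists_isFlow hT hm hc hPNφ
  have hbdd := fun m => hflow.exists_initial_bound hγ0 (nPoly_mem_ord lam a b c d) hC hc₀ hT₀ m
  obtain ⟨A, hA⟩ := hbdd 0
  exact hφns (WBdd.contDiff hbdd (ofReal_eq_jet_fc hA hφ.1 hφ.2.1))

end FifthOrderStmt4
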